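/- (Toy lemma) Let B₊ = {(y', y'') ∈ ℝ^{d−1} × ℝ : |y'|² + |y''|² < 1, y'' > 0} be the open upper unit half-ball and Γ = {x ∈ ℝ^d : x_d = 0, |x| ≤ 3/4}. Let u be harmonic in B₊, continuous on its closure, with u = 0 on ∂B₊ ∩ {y'' = 0} and sup_{(1/4)B₊} |u| = 1. For any N > 0 and 0 < r₀ < 1/16 there exist ρ = ρ(N, r₀) > 0 and c₀ = c₀(N, r₀) > 0 such that if the Almgren frequency satisfies N(0, 1/2) ≤ N, then there exists x' ∈ ℝ^{d−1} with |x'| < r₀ such that |u(y)| ≥ c₀ y'' for all y = (y', y'') ∈ B((x',0), ρ) ∩ B₊. In particular u does not vanish in B((x',0), ρ) ∩ B₊. -/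

import Mathlib

/-!
The proof is a compactness argument for the odd extension `U` of `u` across the flat part of the
boundary.

* `weakHarm_oddExt`: `U` is weakly harmonic in the unit ball (it is harmonic off the hyperplane,
  and a cut-off in the vertical variable shows that the hyperplane carries no singular part). The
  regularity theory that is needed is obtained from the mean value property against a radial
  mollifier: smoothness (`WeakHarm.contDiffOn`), interior gradient bounds (`WeakHarm.abs_dirD_le`),
  a pointwise bound by the `L²` norm (`WeakHarm.abs_le_of_sq`) and uniqueness in the Dirichlet
  problem on balls (`WeakHarm.eq_zero_of_sphere`).
* `WeakHarm.eq_zero_of_cauchy`: unique continuation from Cauchy data on the flat part. All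
  derivatives vanish there by the equation, and the factorial bounds on iterated derivatives make
  the function vanish along segments.
* `trace_estimate`: writing the sphere of radius `1/2` as a finite union of Lipschitz graphs, the
  integral of `U²` over it against the Hausdorff measure is at most a constant times
  `max U² + s * energy`, with the maximum over a ball of radius less than `1/2` depending on `s`.
* `energy_le`: the frequency bound says that the energy is at most `4 * N` times the mass on the
  sphere. The quotient by zero does not occur: if the mass on the half-sphere were zero, `U` would
  vanish on the sphere, hence in the ball, against `sup |u| = 1`.

Normalize `U` to unit energy. By the gradient bound such functions are precompact for uniform
convergence on balls of radius less than `1/2`, and by the trace estimate together with the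
frequency bound they are not uniformly small (`exists_lower`). So if the claim failed for every
choice of constants, a subsequence would converge to a nonzero odd harmonic function `v`. By unique
continuation the normal derivative of `v` is nonzero at some point `(x', 0)` with `|x'| < r₀`; by
convergence of derivatives and the bound on second derivatives, the normal derivatives of the
approximating functions are bounded away from zero on a fixed ball around this point, which gives
linear growth there (`compact_growth`), a contradiction. Finally `sup |u| = 1` bounds the energy of
`U` from below, which transfers the growth from the normalized function back to `u`.
-/

open MeasureTheory Metric Set Filter Topology
open scoped ENNReal NNReal Topology

local notation "⟪" x ", " y "⟫" => @inner ℝ _ _ x y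

noncomputable section

abbrev Euc (d : ℕ) : Type := EuclideanSpace ℝ (Fin d)

variable {d : ℕ}

/-- `A` is symmetric on `s`. -/
def IsSymmOn (A : Euc d → (Euc d →L[ℝ] Euc d)) (s : Set (Euc d)) : Prop :=
  ∀ x ∈ s, ∀ v w : Euc d, ⟪A x v, w⟫ = ⟪v, A x w⟫

/-- `A` is uniformly elliptic with constant `Λ` on `s`. -/
def IsEllipticOn (A : Euc d → (Euc d →L[ℝ] Euc d)) (Λ : ℝ) (s : Set (Euc d)) : Prop :=
  ∀ x ∈ s, ∀ v : Euc d, Λ⁻¹ * ‖v‖ ^ 2 ≤ ⟪A x v, v⟫ ∧ ⟪A x v, v⟫ ≤ Λ * ‖v‖ ^ 2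

/-- `A` has Lipschitz coefficients with constant `L` on `s`. -/
def IsLipCoeffOn (A : Euc d → (Euc d →L[ℝ] Euc d)) (L : ℝ) (s : Set (Euc d)) : Prop :=
  ∀ x ∈ s, ∀ y ∈ s, ‖A x - A y‖ ≤ L * ‖x - y‖

/-- `u` is a weak solution of `div (A ∇u) = 0` on `Ω`. -/
def IsWeakSol (A : Euc d → (Euc d →L[ℝ] Euc d)) (u : Euc d → ℝ) (Ω : Set (Euc d)) : Prop :=
  ∀ φ : Euc d → ℝ, ContDiff ℝ 1 φ → HasCompactSupport φ → tsupport φ ⊆ Ω →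
    ∫ x in Ω, ⟪A x (gradient u x), gradient φ x⟫ = 0

/-- `Ω` is a Lipschitz domain. -/
def IsLipschitzDomain (Ω : Set (Euc d)) : Prop :=
  IsOpen Ω ∧ Ω.Nonempty ∧
    ∀ x ∈ frontier Ω, ∃ (r L : ℝ) (e : Euc d) (f : Euc d → ℝ),
      0 < r ∧ 0 ≤ L ∧ ‖e‖ = 1 ∧ LipschitzWith (Real.toNNReal L) f ∧
      (∀ y z : Euc d, y - ⟪y, e⟫ • e = z - ⟪z, e⟫ • e → f y = f z) ∧
      (∀ y ∈ ball x r, (y ∈ Ω ↔ f y < ⟪y, e⟫))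

/-- Inside `B`, the boundary of `Ω` is the graph of a `τ`-Lipschitz function in the unit
direction `e`, and `Ω ∩ B` is the region above the graph. -/
def IsGraphPiece (Ω B : Set (Euc d)) (τ : ℝ) (e : Euc d) : Prop :=
  ‖e‖ = 1 ∧ ∃ f : Euc d → ℝ,
    LipschitzWith (Real.toNNReal τ) f ∧
    (∀ y z : Euc d, y - ⟪y, e⟫ • e = z - ⟪z, e⟫ • e → f y = f z) ∧
    (∀ y ∈ B, (y ∈ Ω ↔ f y < ⟪y, e⟫)) ∧
    (∀ y ∈ B, (y ∈ frontier Ω ↔ ⟪y, e⟫ = f y))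

/-- The weight `μ_x(y) = (A(y)(y-x), y-x)/|y-x|²`. -/
def muWt (A : Euc d → (Euc d →L[ℝ] Euc d)) (x y : Euc d) : ℝ :=
  ⟪A y (y - x), y - x⟫ / ‖y - x‖ ^ 2

/-- `H(x,r) = r^{1-d} ∫_{∂B(x,r)} μ_x |u|² dσ`. -/
def freqH (A : Euc d → (Euc d →L[ℝ] Euc d)) (u : Euc d → ℝ) (x : Euc d) (r : ℝ) : ℝ :=
  r ^ ((1 : ℝ) - d) * ∫ y in sphere x r, muWt A x y * u y ^ 2 ∂μH[(d : ℝ) - 1]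

/-- `I(x,r) = r^{1-d} ∫_{B(x,r)∩Ω} (A∇u, ∇u)`. -/
def freqI (A : Euc d → (Euc d →L[ℝ] Euc d)) (u : Euc d → ℝ) (Ω : Set (Euc d))
    (x : Euc d) (r : ℝ) : ℝ :=
  r ^ ((1 : ℝ) - d) * ∫ y in ball x r ∩ Ω, ⟪A y (gradient u y), gradient u y⟫

/-- The Almgren frequency `N(x,r) = r I(x,r) / H(x,r)`. -/
def freqN (A : Euc d → (Euc d →L[ℝ] Euc d)) (u : Euc d → ℝ) (Ω : Set (Euc d))
    (x : Euc d) (r : ℝ) : ℝ :=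
  r * freqI A u Ω x r / freqH A u x r

/-- `S` is a symmetric positive square root of `T`. -/
def IsPosSqrt (S T : Euc d →L[ℝ] Euc d) : Prop :=
  (∀ v w : Euc d, ⟪S v, w⟫ = ⟪v, S w⟫) ∧ (∀ v : Euc d, 0 ≤ ⟪S v, v⟫) ∧ S ∘L S = T

/-- The transformed matrix `A_S(y) = S⁻¹ A(x + S y) S⁻¹`. -/
def transA (A : Euc d → (Euc d →L[ℝ] Euc d)) (x : Euc d) (S : Euc d →L[ℝ] Euc d) :
    Euc d → (Euc d →L[ℝ] Euc d) := fun y =>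
  (Ring.inverse S) ∘L ((A (x + S y)) ∘L (Ring.inverse S))

/-- `H` at a general point, via the change of variables `y ↦ x + S y` normalizing `A x` to the
identity (`S` a positive square root of `A x`). -/
def freqHGen (A : Euc d → (Euc d →L[ℝ] Euc d)) (u : Euc d → ℝ)
    (x : Euc d) (S : Euc d →L[ℝ] Euc d) (r : ℝ) : ℝ :=
  freqH (transA A x S) (fun y => u (x + S y)) 0 r

/-- The Almgren frequency at a general point, via the change of variables `y ↦ x + S y`
normalizing `A x` to the identity (`S` a positive square root of `A x`). -/
def freqNGen (A : Euc d → (Euc d →L[ℝ] Euc d)) (u : Euc d → ℝ) (Ω : Set (Euc d))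
    (x : Euc d) (S : Euc d →L[ℝ] Euc d) (r : ℝ) : ℝ :=
  freqN (transA A x S) (fun y => u (x + S y)) {y | x + S y ∈ Ω} 0 r

/-- Upper Minkowski dimension via dyadic cube counting. -/
def upMinkDim (s : Set (Euc d)) : ℝ :=
  Filter.limsup (fun j : ℕ =>
    Real.log ((Set.ncard {c : Fin d → ℤ | ∃ x ∈ s, ∀ i,
      (c i : ℝ) ≤ 2 ^ j * x i ∧ 2 ^ j * x i < (c i : ℝ) + 1} : ℕ) : ℝ) /
      (j * Real.log 2)) Filter.atTop

/-- The vanishing order of `u` at `x`. -/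
def vanishOrder (u : Euc d → ℝ) (Ω : Set (Euc d)) (x : Euc d) : ℝ :=
  sSup {α : ℝ | 0 < α ∧ ∃ C > (0:ℝ), ∃ r₀ > (0:ℝ), ∀ r : ℝ, 0 < r → r ≤ r₀ →
    (⨍ y in ball x r ∩ Ω, |u y|) ≤ C * r ^ α}

/-- `ν` is an outer unit normal of `Ω` at the boundary point `x`. -/
def IsOuterNormalAt (Ω : Set (Euc d)) (x ν : Euc d) : Prop :=
  ‖ν‖ = 1 ∧ ∀ a : ℝ, 0 < a → a < 1 → ∃ r > (0:ℝ),
    (∀ y ∈ ball x r, a * ‖y - x‖ < ⟪x - y, ν⟫ → y ∈ Ω) ∧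
    (∀ y ∈ ball x r, a * ‖y - x‖ < ⟪y - x, ν⟫ → y ∉ closure Ω)

/-- The open upper half-ball of radius `r`, with vertical direction `i₀`. -/
def halfBall (d : ℕ) (i₀ : Fin d) (r : ℝ) : Set (Euc d) :=
  {y : Euc d | y ∈ ball 0 r ∧ 0 < y i₀}

/-- `H(r)` for the half-ball frequency: `r^{1-d} ∫_{∂B(0,r) ∩ B₊} u² dσ`. -/
def freqHhalf (d : ℕ) (i₀ : Fin d) (u : Euc d → ℝ) (r : ℝ) : ℝ :=
  r ^ ((1 : ℝ) - d) * ∫ y in sphere (0 : Euc d) r ∩ halfBall d i₀ 1, u y ^ 2 ∂μH[(d : ℝ) - 1]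

/-- `I(r)` for the half-ball frequency: `r^{1-d} ∫_{B(0,r) ∩ B₊} |∇u|²`. -/
def freqIhalf (d : ℕ) (i₀ : Fin d) (u : Euc d → ℝ) (r : ℝ) : ℝ :=
  r ^ ((1 : ℝ) - d) * ∫ y in ball (0 : Euc d) r ∩ halfBall d i₀ 1, ‖gradient u y‖ ^ 2

/-- The Almgren frequency of `u` on the half-ball, `N(0,r) = r I(r)/H(r)`. -/
def freqNhalf (d : ℕ) (i₀ : Fin d) (u : Euc d → ℝ) (r : ℝ) : ℝ :=
  r * freqIhalf d i₀ u r / freqHhalf d i₀ u r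

/-- `u` is harmonic on `Ω`. -/
def IsHarmonicOn {d : ℕ} (u : Euc d → ℝ) (Ω : Set (Euc d)) : Prop :=
  ContDiffOn ℝ 2 u Ω ∧
    ∀ x ∈ Ω, (∑ i : Fin d,
      fderiv ℝ (fun y => fderiv ℝ u y (EuclideanSpace.single i (1 : ℝ))) x
        (EuclideanSpace.single i (1 : ℝ))) = 0

open scoped ContDiff
/-! ### Directional derivatives, integration by parts and weakly harmonic functions -/

/-- The derivative of `f` in the direction `e`, as a function. -/
def dirD (e : Euc d) (f : Euc d → ℝ) : Euc d → ℝ := fun x => fderiv ℝ f x e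

/-- The `i`-th standard basis vector of `ℝ^d`. -/
def bvec (i : Fin d) : Euc d := EuclideanSpace.single i (1 : ℝ)

/-- The Laplacian, in coordinates. -/
def lap (f : Euc d → ℝ) : Euc d → ℝ := fun x => ∑ i : Fin d, dirD (bvec i) (dirD (bvec i) f) x

/-- `U` is continuous on `Ω` and harmonic there in the sense of distributions. -/
structure WeakHarm (U : Euc d → ℝ) (Ω : Set (Euc d)) : Prop where
  cont : ContinuousOn U Ω
  weak : ∀ φ : Euc d → ℝ, ContDiff ℝ ∞ φ → HasCompactSupport φ → tsupport φ ⊆ Ω →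
    ∫ x, U x * lap φ x = 0

lemma ContDiff.dirD {φ : Euc d → ℝ} (h : ContDiff ℝ ∞ φ) (e : Euc d) :
    ContDiff ℝ ∞ (dirD e φ) :=
  (h.fderiv_right (m := ∞) (by simp)).clm_apply contDiff_const

lemma ContDiff.lap {φ : Euc d → ℝ} (h : ContDiff ℝ ∞ φ) : ContDiff ℝ ∞ (lap φ) :=
  ContDiff.sum fun _ _ => (h.dirD _).dirD _

lemma tsupport_dirD (φ : Euc d → ℝ) (e : Euc d) : tsupport (dirD e φ) ⊆ tsupport φ :=
  tsupport_fderiv_apply_subset ℝ e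

lemma HasCompactSupport.dirD {φ : Euc d → ℝ} (h : HasCompactSupport φ) (e : Euc d) :
    HasCompactSupport (dirD e φ) :=
  HasCompactSupport.of_support_subset_isCompact h
    ((subset_tsupport _).trans (tsupport_dirD φ e))

lemma tsupport_lap (φ : Euc d → ℝ) : tsupport (lap φ) ⊆ tsupport φ := by
  apply closure_minimal _ (isClosed_tsupport φ)
  intro x hx
  by_contra h
  apply hx
  refine Finset.sum_eq_zero fun i _ => ?_
  exact image_eq_zero_of_notMem_tsupport
    fun h' => h (tsupport_dirD _ _ (tsupport_dirD _ _ h'))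

lemma HasCompactSupport.lap {φ : Euc d → ℝ} (h : HasCompactSupport φ) :
    HasCompactSupport (lap φ) :=
  HasCompactSupport.of_support_subset_isCompact h
    ((subset_tsupport _).trans (tsupport_lap φ))

/-- A function continuous on an open set, multiplied by a continuous function with compact
support in that set, is globally continuous. -/
lemma continuous_mul_of_tsupport {f g : Euc d → ℝ} {Ω : Set (Euc d)} (hΩ : IsOpen Ω)
    (hf : ContinuousOn f Ω) (hg : Continuous g) (hs : tsupport g ⊆ Ω) :
    Continuous fun x => f x * g x :=
  (hf.mul hg.continuousOn).continuous_of_tsupport_subset hΩ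
    ((tsupport_mul_subset_right (f := f) (g := g)).trans hs)

lemma integrable_mul_of_tsupport {f g : Euc d → ℝ} {Ω : Set (Euc d)} (hΩ : IsOpen Ω)
    (hf : ContinuousOn f Ω) (hg : Continuous g) (hc : HasCompactSupport g)
    (hs : tsupport g ⊆ Ω) : Integrable fun x => f x * g x :=
  (continuous_mul_of_tsupport hΩ hf hg hs).integrable_of_hasCompactSupport hc.mul_left

lemma continuousOn_dirD {f : Euc d → ℝ} {Ω : Set (Euc d)} (hΩ : IsOpen Ω)
    (hf : ContDiffOn ℝ 1 f Ω) (e : Euc d) : ContinuousOn (dirD e f) Ω :=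
  (hf.continuousOn_fderiv_of_isOpen hΩ le_rfl).clm_apply continuousOn_const

lemma contDiffOn_dirD {f : Euc d → ℝ} {Ω : Set (Euc d)} (hΩ : IsOpen Ω)
    {m n : WithTop ℕ∞} (hf : ContDiffOn ℝ n f Ω) (hmn : m + 1 ≤ n) (e : Euc d) :
    ContDiffOn ℝ m (dirD e f) Ω :=
  (hf.fderiv_of_isOpen hΩ hmn).clm_apply contDiffOn_const

lemma integral_dirD_mul {f g : Euc d → ℝ} {Ω : Set (Euc d)} (hΩ : IsOpen Ω)
    (hf : ContDiffOn ℝ 1 f Ω) (hg : ContDiff ℝ ∞ g) (hc : HasCompactSupport g)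
    (hs : tsupport g ⊆ Ω) (e : Euc d) :
    ∫ x, dirD e f x * g x = - ∫ x, f x * dirD e g x := by
  have := integral_mul_fderiv_eq_neg_fderiv_mul_of_integrable (μ := volume) (f := f) (g := g)
    (v := e)
    (integrable_mul_of_tsupport hΩ (continuousOn_dirD hΩ hf e) hg.continuous hc hs)
    (integrable_mul_of_tsupport hΩ hf.continuousOn (hg.dirD e).continuous (hc.dirD e)
      ((tsupport_dirD g e).trans hs))
    (integrable_mul_of_tsupport hΩ hf.continuousOn hg.continuous hc hs)
    (fun x hx => (hf.differentiableOn one_ne_zero).differentiableAt (hΩ.mem_nhds (hs hx)))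
    (fun x _ => hg.differentiable (by simp) x)
  simp only [dirD]
  linarith

lemma lap_eq_sum_integral {f g : Euc d → ℝ} {Ω : Set (Euc d)} (hΩ : IsOpen Ω)
    (hf : ContinuousOn f Ω) (hg : ContDiff ℝ ∞ g) (hc : HasCompactSupport g)
    (hs : tsupport g ⊆ Ω) :
    ∫ x, f x * lap g x = ∑ i : Fin d, ∫ x, f x * dirD (bvec i) (dirD (bvec i) g) x := by
  simp only [lap, Finset.mul_sum]
  refine integral_finsetSum _ fun i _ => ?_
  exact integrable_mul_of_tsupport hΩ hf ((hg.dirD _).dirD _).continuous ((hc.dirD _).dirD _)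
    ((tsupport_dirD _ _).trans ((tsupport_dirD _ _).trans hs))

lemma weakHarm_of_harmonicOn {u : Euc d → ℝ} {Ω : Set (Euc d)} (hΩ : IsOpen Ω)
    (h : IsHarmonicOn u Ω) : WeakHarm u Ω := by
  refine ⟨h.1.continuousOn, fun φ hφ hc hs => ?_⟩
  have h1 : ContDiffOn ℝ 1 u Ω := h.1.of_le (by norm_num)
  have h2 : ∀ e, ContDiffOn ℝ 1 (dirD e u) Ω := fun e =>
    contDiffOn_dirD hΩ h.1 (by norm_num) e
  have key : ∀ i : Fin d, ∫ x, u x * dirD (bvec i) (dirD (bvec i) φ) x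
      = ∫ x, dirD (bvec i) (dirD (bvec i) u) x * φ x := by
    intro i
    rw [integral_dirD_mul hΩ (h2 _) hφ hc hs, integral_dirD_mul hΩ h1 (hφ.dirD _) (hc.dirD _)
      ((tsupport_dirD _ _).trans hs), neg_neg]
  rw [lap_eq_sum_integral hΩ h.1.continuousOn hφ hc hs, Finset.sum_congr rfl fun i _ => key i,
    ← integral_finsetSum]
  · rw [integral_eq_zero_of_ae]
    refine Eventually.of_forall fun x => ?_
    simp only [← Finset.sum_mul, Pi.zero_apply]
    by_cases hx : x ∈ Ω
    · have := h.2 x hx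
      change (∑ i : Fin d, fderiv ℝ (fun y => fderiv ℝ u y (EuclideanSpace.single i (1 : ℝ))) x
        (EuclideanSpace.single i (1 : ℝ))) * φ x = 0
      rw [this, zero_mul]
    · rw [image_eq_zero_of_notMem_tsupport (f := φ) fun h' => hx (hs h'), mul_zero]
  · intro i _
    exact integrable_mul_of_tsupport hΩ (continuousOn_dirD hΩ (h2 _) _) hφ.continuous hc hs

lemma dirD_comm {φ : Euc d → ℝ} (h : ContDiff ℝ ∞ φ) (e e' : Euc d) :
    dirD e (dirD e' φ) = dirD e' (dirD e φ) := by
  ext x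
  have hd : DifferentiableAt ℝ (fderiv ℝ φ) x :=
    (h.fderiv_right (m := ∞) (by simp)).differentiable (by simp) x
  have hs : IsSymmSndFDerivAt ℝ φ x :=
    (h.contDiffAt (x := x)).isSymmSndFDerivAt (by
      rw [minSmoothness_of_isRCLikeNormedField]; exact WithTop.coe_le_coe.2 le_top)
  have aux : ∀ a b : Euc d, dirD a (dirD b φ) x = fderiv ℝ (fderiv ℝ φ) x a b := by
    intro a b
    change fderiv ℝ (fun y => fderiv ℝ φ y b) x a = _
    rw [fderiv_clm_apply hd (differentiableAt_const b)]
    simp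
  rw [aux, aux, hs.eq]

lemma lap_dirD {φ : Euc d → ℝ} (h : ContDiff ℝ ∞ φ) (e : Euc d) :
    lap (dirD e φ) = dirD e (lap φ) := by
  ext x
  have : ∀ i : Fin d, dirD (bvec i) (dirD (bvec i) (dirD e φ))
      = dirD e (dirD (bvec i) (dirD (bvec i) φ)) := fun i => by
    rw [dirD_comm h, dirD_comm (h.dirD _)]
  simp only [lap, this]
  change _ = fderiv ℝ (fun y => ∑ i : Fin d, dirD (bvec i) (dirD (bvec i) φ) y) x e
  rw [fderiv_fun_sum]
  · simp [dirD]
  · intro i _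
    exact ((h.dirD _).dirD _).differentiable (by simp) x

lemma WeakHarm.dirD {U : Euc d → ℝ} {Ω : Set (Euc d)} (hΩ : IsOpen Ω) (h : WeakHarm U Ω)
    (hU : ContDiffOn ℝ 1 U Ω) (e : Euc d) : WeakHarm (dirD e U) Ω := by
  refine ⟨continuousOn_dirD hΩ hU e, fun φ hφ hc hs => ?_⟩
  rw [integral_dirD_mul hΩ hU hφ.lap hc.lap ((tsupport_lap φ).trans hs), ← lap_dirD hφ,
    h.weak _ (hφ.dirD e) (hc.dirD e) ((tsupport_dirD _ _).trans hs), neg_zero]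

lemma WeakHarm.mono {U : Euc d → ℝ} {Ω Ω' : Set (Euc d)} (h : WeakHarm U Ω) (hs : Ω' ⊆ Ω) :
    WeakHarm U Ω' :=
  ⟨h.cont.mono hs, fun φ h1 h2 h3 => h.weak φ h1 h2 (h3.trans hs)⟩

lemma WeakHarm.const_mul {U : Euc d → ℝ} {Ω : Set (Euc d)} (h : WeakHarm U Ω) (c : ℝ) :
    WeakHarm (fun x => c * U x) Ω := by
  refine ⟨continuousOn_const.mul h.cont, fun φ h1 h2 h3 => ?_⟩
  simp only [mul_assoc]
  rw [integral_const_mul, h.weak φ h1 h2 h3, mul_zero]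

lemma WeakHarm.sub {U V : Euc d → ℝ} {Ω : Set (Euc d)} (hΩ : IsOpen Ω) (h : WeakHarm U Ω)
    (h' : WeakHarm V Ω) : WeakHarm (fun x => U x - V x) Ω := by
  refine ⟨h.cont.sub h'.cont, fun φ h1 h2 h3 => ?_⟩
  simp only [sub_mul]
  rw [integral_sub, h.weak φ h1 h2 h3, h'.weak φ h1 h2 h3, sub_zero]
  · exact integrable_mul_of_tsupport hΩ h.cont h1.lap.continuous h2.lap
      ((tsupport_lap φ).trans h3)
  · exact integrable_mul_of_tsupport hΩ h'.cont h1.lap.continuous h2.lap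
      ((tsupport_lap φ).trans h3)
/-! ### A radial mollifier and the mean value property -/

/-- The derivative of the smooth function `s ↦ exp (-1/s)` (zero for `s ≤ 0`). -/
def gOne (s : ℝ) : ℝ := (s⁻¹) ^ 2 * expNegInvGlue s

lemma hasDerivAt_expNegInvGlue (s : ℝ) : HasDerivAt expNegInvGlue (gOne s) s := by
  have := expNegInvGlue.hasDerivAt_polynomial_eval_inv_mul 1 s
  simpa [gOne] using this

lemma contDiff_gOne : ContDiff ℝ ∞ gOne := by
  have := expNegInvGlue.contDiff_polynomial_eval_inv_mul (n := ⊤) (Polynomial.X ^ 2)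
  unfold gOne
  simpa using this

lemma gOne_nonneg (s : ℝ) : 0 ≤ gOne s := mul_nonneg (sq_nonneg _) (expNegInvGlue.nonneg s)

lemma gOne_pos {s : ℝ} (h : 0 < s) : 0 < gOne s :=
  mul_pos (by positivity) (expNegInvGlue.pos_of_pos h)

lemma gOne_zero {s : ℝ} (h : s ≤ 0) : gOne s = 0 := by
  rw [gOne, expNegInvGlue.zero_of_nonpos h, mul_zero]

lemma deriv_gOne_zero {s : ℝ} (h : s ≤ 0) : deriv gOne s = 0 := by
  have hc : Continuous (deriv gOne) := contDiff_gOne.continuous_deriv (by simp)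
  have h1 : ∀ s < 0, deriv gOne s = 0 := fun s hs => by
    have : gOne =ᶠ[𝓝 s] fun _ => 0 := by
      filter_upwards [Iio_mem_nhds hs] with r hr using gOne_zero (le_of_lt hr)
    rw [this.deriv_eq, deriv_const]
  have h2 : Iic (0 : ℝ) ⊆ {s | deriv gOne s = 0} := by
    rw [← closure_Iio]
    exact closure_minimal h1 (isClosed_eq hc continuous_const)
  exact h2 h

/-- The function `y ↦ G (1 - |y - x|² / t²)`, radial about `x`. -/
def rad (G : ℝ → ℝ) (x : Euc d) (t : ℝ) (y : Euc d) : ℝ := G (1 - ‖y - x‖ ^ 2 / t ^ 2)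

lemma contDiff_rad {G : ℝ → ℝ} (hG : ContDiff ℝ ∞ G) (x : Euc d) (t : ℝ) :
    ContDiff ℝ ∞ (rad G x t) :=
  hG.comp (contDiff_const.sub (((contDiff_id.sub contDiff_const).norm_sq ℝ).div_const _))

lemma continuous_rad {G : ℝ → ℝ} (hG : Continuous G) (x : Euc d) (t : ℝ) :
    Continuous (rad G x t) := by unfold rad; fun_prop

lemma rad_eq_zero {G : ℝ → ℝ} (hG : ∀ s ≤ 0, G s = 0) {x y : Euc d} {t : ℝ} (ht : 0 < t)
    (h : t ≤ ‖y - x‖) : rad G x t y = 0 := by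
  apply hG
  have : 1 ≤ ‖y - x‖ ^ 2 / t ^ 2 := by
    rw [one_le_div (by positivity)]; gcongr
  linarith

lemma tsupport_rad {G : ℝ → ℝ} (hG : ∀ s ≤ 0, G s = 0) (x : Euc d) {t : ℝ} (ht : 0 < t) :
    tsupport (rad G x t) ⊆ closedBall x t := by
  apply closure_minimal _ isClosed_closedBall
  intro y hy
  by_contra h
  rw [mem_closedBall, dist_eq_norm, not_le] at h
  exact hy (rad_eq_zero hG ht h.le)

lemma hasCompactSupport_rad {G : ℝ → ℝ} (hG : ∀ s ≤ 0, G s = 0) (x : Euc d) {t : ℝ}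
    (ht : 0 < t) : HasCompactSupport (rad G x t) :=
  HasCompactSupport.of_support_subset_isCompact (isCompact_closedBall x t)
    ((subset_tsupport _).trans (tsupport_rad hG x ht))

lemma hasFDerivAt_rad {G : ℝ → ℝ} {x y : Euc d} {t G' : ℝ}
    (hG : HasDerivAt G G' (1 - ‖y - x‖ ^ 2 / t ^ 2)) :
    HasFDerivAt (rad G x t) (G' • -((t ^ 2)⁻¹ • ((2 : ℝ) • (innerSL ℝ (y - x))))) y := by
  have h1 : HasFDerivAt (fun y : Euc d => ‖y - x‖ ^ 2) ((2 : ℝ) • (innerSL ℝ (y - x))) y := by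
    have := ((hasFDerivAt_id y).sub_const x).norm_sq
    refine this.congr_fderiv ?_
    ext v
    simp
  have h2 : HasFDerivAt (fun y : Euc d => 1 - ‖y - x‖ ^ 2 / t ^ 2)
      (-((t ^ 2)⁻¹ • ((2 : ℝ) • (innerSL ℝ (y - x))))) y := by
    simpa only [div_eq_inv_mul] using (h1.const_mul ((t ^ 2)⁻¹)).const_sub 1
  exact hG.comp_hasFDerivAt y h2

lemma dirD_rad {G : ℝ → ℝ} {x y : Euc d} {t G' : ℝ} (e : Euc d)
    (hG : HasDerivAt G G' (1 - ‖y - x‖ ^ 2 / t ^ 2)) :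
    dirD e (rad G x t) y = -2 * G' * ⟪y - x, e⟫ / t ^ 2 := by
  rw [dirD, (hasFDerivAt_rad hG).fderiv]
  simp only [smul_apply, neg_apply, innerSL_apply_apply,
    smul_eq_mul]
  ring

/-- The radial primitive `ψ` of the mollifier: `∇ψ (y) = t⁻² gOne(1 - |y-x|²/t²) (y - x)`. -/
def psi (x : Euc d) (t : ℝ) : Euc d → ℝ := rad (fun s => -(1 / 2) * expNegInvGlue s) x t

lemma lap_psi (x : Euc d) {t : ℝ} (ht : 0 < t) (y : Euc d) :
    lap (psi x t) y = d / t ^ 2 * rad gOne x t y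
      - 2 / t ^ 4 * (‖y - x‖ ^ 2 * rad (deriv gOne) x t y) := by
  have h1 : ∀ e : Euc d, dirD e (psi x t) = fun y => rad gOne x t y * (⟪y - x, e⟫ / t ^ 2) := by
    intro e
    ext y
    have hd := (hasDerivAt_expNegInvGlue (1 - ‖y - x‖ ^ 2 / t ^ 2)).const_mul (-(1 / 2))
    rw [psi, dirD_rad e hd, rad]
    ring
  have h2 : ∀ e : Euc d, dirD e (dirD e (psi x t)) y
      = rad gOne x t y * (‖e‖ ^ 2 / t ^ 2)
        - 2 / t ^ 4 * (⟪y - x, e⟫ ^ 2 * rad (deriv gOne) x t y) := by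
    intro e
    rw [h1 e]
    have hg : HasDerivAt gOne (deriv gOne (1 - ‖y - x‖ ^ 2 / t ^ 2)) (1 - ‖y - x‖ ^ 2 / t ^ 2) :=
      (contDiff_gOne.differentiable (by simp) _).hasDerivAt
    have ha := hasFDerivAt_rad hg
    have hb : HasFDerivAt (fun y : Euc d => ⟪y - x, e⟫ / t ^ 2)
        ((t ^ 2)⁻¹ • innerSL ℝ e) y := by
      have : HasFDerivAt (fun y : Euc d => ⟪y - x, e⟫) (innerSL ℝ e) y := by
        have h3 : (fun y : Euc d => ⟪y - x, e⟫) = fun y => innerSL ℝ e (y - x) := by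
          ext y; simp [real_inner_comm]
        rw [h3]
        exact (innerSL ℝ e).hasFDerivAt.comp y ((hasFDerivAt_id y).sub_const x)
      simpa only [div_eq_inv_mul] using this.const_mul ((t ^ 2)⁻¹)
    rw [dirD, (ha.fun_mul hb).fderiv]
    simp only [add_apply, smul_apply,
      neg_apply, innerSL_apply_apply, smul_eq_mul,
      real_inner_self_eq_norm_sq]
    rw [show rad (deriv gOne) x t y = deriv gOne (1 - ‖y - x‖ ^ 2 / t ^ 2) from rfl]
    field_simp
    ring
  simp only [lap, h2]
  rw [Finset.sum_sub_distrib, ← Finset.mul_sum, ← Finset.mul_sum, ← Finset.sum_mul]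
  have h3 : ∑ i : Fin d, ⟪y - x, bvec i⟫ ^ 2 = ‖y - x‖ ^ 2 := by
    rw [EuclideanSpace.norm_sq_eq]
    refine Finset.sum_congr rfl fun i _ => ?_
    simp [bvec, EuclideanSpace.inner_single_right]
  have h4 : ∀ i : Fin d, ‖bvec i‖ = 1 := fun i => by simp [bvec]
  rw [h3]
  simp [h4]
  ring

/-- The (unnormalized) radial mollifier, supported in the unit ball. -/
def eta : Euc d → ℝ := rad gOne 0 1

/-- The integral of the mollifier. -/
def etaMass (d : ℕ) : ℝ := ∫ z : Euc d, eta z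

lemma contDiff_eta : ContDiff ℝ ∞ (eta : Euc d → ℝ) := contDiff_rad contDiff_gOne 0 1

lemma eta_nonneg (z : Euc d) : 0 ≤ eta z := gOne_nonneg _

lemma eta_pos {z : Euc d} (h : ‖z‖ < 1) : 0 < eta z := by
  apply gOne_pos
  have : ‖z‖ ^ 2 < 1 := by nlinarith [norm_nonneg z]
  simpa using this

lemma eta_zero {z : Euc d} (h : 1 ≤ ‖z‖) : eta z = 0 :=
  rad_eq_zero (fun _ => gOne_zero) one_pos (by simpa using h)

lemma hasCompactSupport_eta : HasCompactSupport (eta : Euc d → ℝ) :=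
  hasCompactSupport_rad (fun _ => gOne_zero) 0 one_pos

lemma tsupport_eta : tsupport (eta : Euc d → ℝ) ⊆ closedBall 0 1 :=
  tsupport_rad (fun _ => gOne_zero) 0 one_pos

lemma integrable_eta : Integrable (eta : Euc d → ℝ) :=
  contDiff_eta.continuous.integrable_of_hasCompactSupport hasCompactSupport_eta

lemma etaMass_pos : 0 < etaMass d :=
  contDiff_eta.continuous.integral_pos_of_hasCompactSupport_nonneg_nonzero
    hasCompactSupport_eta eta_nonneg (x := 0) (eta_pos (by simp)).ne'

lemma integral_comp_eq (f : Euc d → ℝ) (g : Euc d → ℝ) (x : Euc d) {t : ℝ} (ht : 0 < t) :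
    ∫ z, f (x + t • z) * g z = (t ^ d)⁻¹ * ∫ y, f y * g (t⁻¹ • (y - x)) := by
  have h1 := Measure.integral_comp_smul (volume : Measure (Euc d))
    (fun w => f (x + w) * g (t⁻¹ • w)) t
  simp only [smul_smul, inv_mul_cancel₀ ht.ne', one_smul] at h1
  rw [h1]
  have h2 := integral_sub_right_eq_self (μ := (volume : Measure (Euc d)))
    (fun w => f (x + w) * g (t⁻¹ • w)) x
  simp only [add_sub_cancel] at h2
  rw [h2, finrank_euclideanSpace_fin, smul_eq_mul, abs_of_pos (by positivity)]

lemma eta_scale (x y : Euc d) {t : ℝ} (ht : 0 < t) :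
    eta (t⁻¹ • (y - x)) = rad gOne x t y := by
  simp only [eta, rad, sub_zero, norm_smul, norm_inv, Real.norm_eq_abs, abs_of_pos ht]
  congr 2
  field_simp

lemma hasDerivAt_radIntegral {U : Euc d → ℝ} {Ω : Set (Euc d)} (hΩ : IsOpen Ω)
    (hU : ContinuousOn U Ω) {x : Euc d} {ε t : ℝ} (hε : closedBall x ε ⊆ Ω) (ht : 0 < t)
    (htε : t < ε) :
    HasDerivAt (fun s => ∫ y, U y * rad gOne x s y)
      (∫ y, U y * (2 * ‖y - x‖ ^ 2 / t ^ 3 * rad (deriv gOne) x t y)) t := by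
  have hg2 : Continuous (deriv gOne) := contDiff_gOne.continuous_deriv (by simp)
  obtain ⟨B, hB⟩ := (isCompact_Icc (a := (0 : ℝ)) (b := 1)).exists_bound_of_continuousOn
    hg2.continuousOn
  have hB0 : 0 ≤ B := (norm_nonneg _).trans (hB 0 (by simp))
  have hcomp : IntegrableOn U (closedBall x ε) :=
    (hU.mono hε).integrableOn_compact (isCompact_closedBall x ε)
  have hs : Ioo (t / 2) ε ∈ 𝓝 t := Ioo_mem_nhds (by linarith) htε
  have hInt : ∀ s ∈ Ioo (t / 2) ε, Integrable fun y => U y * rad gOne x s y := fun s hs =>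
    integrable_mul_of_tsupport hΩ hU (continuous_rad contDiff_gOne.continuous x s)
      (hasCompactSupport_rad (fun _ => gOne_zero) x (by linarith [hs.1]))
      ((tsupport_rad (fun _ => gOne_zero) x (by linarith [hs.1])).trans
        ((closedBall_subset_closedBall hs.2.le).trans hε))
  refine (hasDerivAt_integral_of_dominated_loc_of_deriv_le
    (F' := fun s y => U y * (2 * ‖y - x‖ ^ 2 / s ^ 3 * rad (deriv gOne) x s y))
    (bound := indicator (closedBall x ε) fun y => ‖U y‖ * (2 * ε ^ 2 / (t / 2) ^ 3 * B)) hs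
    ?_ (hInt t ⟨by linarith, htε⟩) ?_ ?_ ?_ ?_).2
  · filter_upwards [hs] with s hs using (hInt s hs).aestronglyMeasurable
  · refine (integrable_mul_of_tsupport hΩ hU (g := fun y => 2 * ‖y - x‖ ^ 2 / t ^ 3 *
      rad (deriv gOne) x t y) ?_ ?_ ?_).aestronglyMeasurable
    · have := continuous_rad hg2 x t
      fun_prop
    · exact (hasCompactSupport_rad (fun _ => deriv_gOne_zero) x ht).mul_left
    · refine tsupport_mul_subset_right.trans ?_
      exact (tsupport_rad (fun _ => deriv_gOne_zero) x ht).trans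
        ((closedBall_subset_closedBall htε.le).trans hε)
  · refine Eventually.of_forall fun y s hs => ?_
    have hs0 : 0 < s := by linarith [hs.1]
    by_cases hy : y ∈ closedBall x ε
    · rw [indicator_of_mem hy]
      rw [mem_closedBall, dist_eq_norm] at hy
      rw [norm_mul]
      refine mul_le_mul_of_nonneg_left ?_ (norm_nonneg _)
      rw [norm_mul, Real.norm_of_nonneg (by positivity)]
      have hb : ‖rad (deriv gOne) x s y‖ ≤ B := by
        by_cases h : 1 - ‖y - x‖ ^ 2 / s ^ 2 ≤ 0
        · rw [rad, deriv_gOne_zero h, norm_zero]; exact hB0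
        · refine hB _ ⟨(not_le.1 h).le, ?_⟩
          have : 0 ≤ ‖y - x‖ ^ 2 / s ^ 2 := by positivity
          linarith
      have h1 := hs.1.le
      gcongr
    · rw [indicator_of_notMem hy]
      rw [mem_closedBall, dist_eq_norm, not_le] at hy
      rw [rad_eq_zero (fun _ => deriv_gOne_zero) hs0 (hs.2.trans hy).le]
      simp
  · rw [integrable_indicator_iff measurableSet_closedBall]
    exact hcomp.norm.mul_const _
  · refine Eventually.of_forall fun y s hs => ?_
    have hs0 : 0 < s := by linarith [hs.1]
    refine HasDerivAt.const_mul _ ?_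
    have hg : HasDerivAt gOne (deriv gOne (1 - ‖y - x‖ ^ 2 / s ^ 2)) (1 - ‖y - x‖ ^ 2 / s ^ 2) :=
      (contDiff_gOne.differentiable (by simp) _).hasDerivAt
    have h1 : HasDerivAt (fun s : ℝ => 1 - ‖y - x‖ ^ 2 / s ^ 2)
        (2 * ‖y - x‖ ^ 2 / s ^ 3) s := by
      have := (((hasDerivAt_pow 2 s).inv (by positivity)).const_mul (‖y - x‖ ^ 2)).const_sub 1
      simp only [div_eq_mul_inv]
      refine this.congr_deriv ?_
      field_simp
      push_cast
      ring
    refine (hg.comp s h1).congr_deriv ?_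
    rw [mul_comm]; rfl

/-- **Mean value property** for weakly harmonic functions. The smoothed averages over balls of
radius `t` do not depend on `t`, because the `t`-derivative of the mollifier is the Laplacian of
a test function. -/
lemma WeakHarm.meanValue {U : Euc d → ℝ} {Ω : Set (Euc d)} (hΩ : IsOpen Ω) (h : WeakHarm U Ω)
    {x : Euc d} {ε : ℝ} (hε0 : 0 < ε) (hε : closedBall x ε ⊆ Ω) :
    ∫ z, U (x + ε • z) * eta z = U x * etaMass d := by
  set m : ℝ → ℝ := fun t => ∫ z, U (x + t • z) * eta z with hm
  have hmem : ∀ t ∈ Icc 0 ε, ∀ z : Euc d, ‖z‖ ≤ 1 → x + t • z ∈ closedBall x ε := by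
    intro t ht z hz
    rw [mem_closedBall, dist_eq_norm, add_sub_cancel_left, norm_smul, Real.norm_of_nonneg ht.1]
    nlinarith [ht.1, ht.2, norm_nonneg z]
  have hcont : ContinuousOn m (Icc 0 ε) := by
    obtain ⟨M, hM⟩ := (isCompact_closedBall x ε).exists_bound_of_continuousOn (h.cont.mono hε)
    refine continuousOn_of_dominated (bound := fun z => M * eta z) ?_ ?_ ?_ ?_
    · intro t ht
      refine (continuous_mul_of_tsupport (Ω := (fun z : Euc d => x + t • z) ⁻¹' Ω)
        (hΩ.preimage (by fun_prop)) (h.cont.comp (by fun_prop) (fun z hz => hz))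
        contDiff_eta.continuous ?_).aestronglyMeasurable
      intro z hz
      have := tsupport_eta hz
      rw [mem_closedBall_zero_iff] at this
      exact hε (hmem t ht z this)
    · intro t ht
      refine Eventually.of_forall fun z => ?_
      rw [norm_mul, Real.norm_of_nonneg (eta_nonneg z)]
      rcases le_total ‖z‖ 1 with hz | hz
      · exact mul_le_mul_of_nonneg_right (hM _ (hmem t ht z hz)) (eta_nonneg z)
      · simp [eta_zero hz]
    · exact integrable_eta.const_mul M
    · refine Eventually.of_forall fun z => ?_
      rcases le_total ‖z‖ 1 with hz | hz
      · refine ContinuousOn.mul ?_ continuousOn_const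
        exact (h.cont.mono hε).comp (by fun_prop) (fun t ht => hmem t ht z hz)
      · simp only [eta_zero hz, mul_zero]
        exact continuousOn_const
  have hderiv : ∀ t ∈ Ioo 0 ε, HasDerivAt m 0 t := by
    intro t ht
    have h1 : ∀ s : ℝ, 0 < s → m s = (s ^ d)⁻¹ * ∫ y, U y * rad gOne x s y := by
      intro s hs
      rw [hm]
      simp only
      rw [integral_comp_eq U eta x hs]
      simp only [eta_scale _ _ hs]
    have h2 : m =ᶠ[𝓝 t] fun s => (s ^ d)⁻¹ * ∫ y, U y * rad gOne x s y := by
      filter_upwards [Ioi_mem_nhds ht.1] with s hs using h1 s hs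
    refine HasDerivAt.congr_of_eventuallyEq ?_ h2
    have h3 := hasDerivAt_radIntegral hΩ h.cont hε ht.1 ht.2
    have ht0 := ht.1
    have h4 := ((hasDerivAt_pow d t).inv (by positivity)).mul h3
    refine h4.congr_deriv ?_
    have hsub : closedBall x t ⊆ Ω := (closedBall_subset_closedBall ht.2.le).trans hε
    have hzero : ∀ s ≤ 0, -(1 / 2) * expNegInvGlue s = 0 := fun s hs => by
      rw [expNegInvGlue.zero_of_nonpos hs, mul_zero]
    have h5 := h.weak (psi x t) (contDiff_rad (contDiff_const.mul expNegInvGlue.contDiff) x t)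
      (hasCompactSupport_rad hzero x ht0) ((tsupport_rad hzero x ht0).trans hsub)
    have hg2 : Continuous (deriv gOne) := contDiff_gOne.continuous_deriv (by simp)
    have i1 : Integrable fun y => U y * rad gOne x t y :=
      integrable_mul_of_tsupport hΩ h.cont (continuous_rad contDiff_gOne.continuous x t)
        (hasCompactSupport_rad (fun _ => gOne_zero) x ht0)
        ((tsupport_rad (fun _ => gOne_zero) x ht0).trans hsub)
    have i2 : Integrable fun y => U y * (‖y - x‖ ^ 2 * rad (deriv gOne) x t y) := by
      refine integrable_mul_of_tsupport hΩ h.cont ?_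
        (hasCompactSupport_rad (fun _ => deriv_gOne_zero) x ht0).mul_left
        (tsupport_mul_subset_right.trans
          ((tsupport_rad (fun _ => deriv_gOne_zero) x ht0).trans hsub))
      have := continuous_rad hg2 x t
      fun_prop
    have h6 : ∫ y, U y * lap (psi x t) y = d / t ^ 2 * (∫ y, U y * rad gOne x t y)
        - 2 / t ^ 4 * ∫ y, U y * (‖y - x‖ ^ 2 * rad (deriv gOne) x t y) := by
      rw [← integral_const_mul, ← integral_const_mul, ← integral_sub (i1.const_mul _)
        (i2.const_mul _)]
      refine integral_congr_ae (Eventually.of_forall fun y => ?_)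
      simp only [lap_psi x ht0]
      ring
    have h7 : ∫ y, U y * (2 * ‖y - x‖ ^ 2 / t ^ 3 * rad (deriv gOne) x t y)
        = 2 / t ^ 3 * ∫ y, U y * (‖y - x‖ ^ 2 * rad (deriv gOne) x t y) := by
      rw [← integral_const_mul]
      refine integral_congr_ae (Eventually.of_forall fun y => ?_)
      simp only
      ring
    rw [h6] at h5
    rw [h7]
    set q := ∫ y, U y * rad gOne x t y
    set p := ∫ y, U y * (‖y - x‖ ^ 2 * rad (deriv gOne) x t y)
    have h8 : 2 / t ^ 3 * p = d / t * q := by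
      have : 2 / t ^ 4 * p = d / t ^ 2 * q := by linarith
      field_simp at this ⊢
      linarith
    rw [h8]
    rcases Nat.eq_zero_or_pos d with hd | hd
    · subst hd; simp
    · obtain ⟨k, rfl⟩ : ∃ k, d = k + 1 := ⟨d - 1, by omega⟩
      simp only [Nat.add_sub_cancel, Pi.inv_apply]
      field_simp
      ring
  obtain ⟨c, _, hc⟩ := exists_hasDerivAt_eq_slope m (fun _ => 0) hε0 hcont hderiv
  have h0 : m 0 = U x * etaMass d := by
    simp only [hm, zero_smul, add_zero, etaMass]
    rw [integral_const_mul]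
  rw [← h0]
  change m ε = m 0
  rw [eq_div_iff (by linarith)] at hc
  linarith
/-! ### Interior regularity and estimates, maximum principle -/

lemma rad_symm (G : ℝ → ℝ) (x y : Euc d) (t : ℝ) : rad G x t y = rad G 0 t (x - y) := by
  simp [rad, norm_sub_rev x y]

lemma WeakHarm.mul_etaMass {U : Euc d → ℝ} {Ω : Set (Euc d)} (hΩ : IsOpen Ω)
    (h : WeakHarm U Ω) {x : Euc d} {ε : ℝ} (hε0 : 0 < ε) (hε : closedBall x ε ⊆ Ω) :
    U x * etaMass d = (ε ^ d)⁻¹ * ∫ y, U y * rad gOne x ε y := by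
  rw [← h.meanValue hΩ hε0 hε, integral_comp_eq U eta x hε0]
  simp only [eta_scale _ _ hε0]

/-- Weyl's lemma: weakly harmonic functions are smooth. -/
lemma WeakHarm.contDiffOn {U : Euc d → ℝ} {Ω : Set (Euc d)} (hΩ : IsOpen Ω)
    (h : WeakHarm U Ω) : ContDiffOn ℝ ∞ U Ω := by
  intro x₀ hx₀
  obtain ⟨r, hr0, hr⟩ := Metric.nhds_basis_closedBall.mem_iff.1 (hΩ.mem_nhds hx₀)
  set ε := r / 2 with hεdef
  have hε0 : 0 < ε := by positivity
  set V : Euc d → ℝ := indicator (closedBall x₀ r) U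
  set k : Euc d → ℝ := rad gOne 0 ε
  have hV : LocallyIntegrable V := by
    refine Integrable.locallyIntegrable ?_
    rw [integrable_indicator_iff measurableSet_closedBall]
    exact (h.cont.mono hr).integrableOn_compact (isCompact_closedBall _ _)
  have hk : ContDiff ℝ ∞ k := contDiff_rad contDiff_gOne 0 ε
  have hkc : HasCompactSupport k := hasCompactSupport_rad (fun _ => gOne_zero) 0 hε0
  have hconv := hkc.contDiff_convolution_right (n := ⊤) (ContinuousLinearMap.mul ℝ ℝ) hV hk
  have heq : U =ᶠ[𝓝 x₀] fun x => (etaMass d)⁻¹ * ((ε ^ d)⁻¹ *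
      (convolution V k (ContinuousLinearMap.mul ℝ ℝ) volume) x) := by
    filter_upwards [ball_mem_nhds x₀ hε0] with x hx
    have hsub : closedBall x ε ⊆ closedBall x₀ r := by
      apply closedBall_subset_closedBall'
      rw [mem_ball] at hx
      linarith
    rw [eq_inv_mul_iff_mul_eq₀ etaMass_pos.ne', mul_comm, h.mul_etaMass hΩ hε0 (hsub.trans hr)]
    congr 1
    rw [convolution_def]
    refine integral_congr_ae (Eventually.of_forall fun y => ?_)
    simp only [ContinuousLinearMap.mul_apply']
    rw [rad_symm]
    by_cases hy : y ∈ closedBall x₀ r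
    · rw [show V y = U y from indicator_of_mem hy _]
    · have : k (x - y) = 0 := by
        rw [show k (x - y) = rad gOne x ε y from (rad_symm _ _ _ _).symm]
        refine rad_eq_zero (fun _ => gOne_zero) hε0 ?_
        by_contra hlt
        exact hy (hsub (by rw [mem_closedBall, dist_eq_norm]; exact (not_le.1 hlt).le))
      rw [this]
      change U y * k (x - y) = _
      rw [this]
      simp
  have : ContDiffAt ℝ ∞ U x₀ := by
    refine ContDiffAt.congr_of_eventuallyEq ?_ heq
    exact (contDiff_const.mul (contDiff_const.mul hconv)).contDiffAt
  exact this.contDiffWithinAt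

lemma WeakHarm.dirD' {U : Euc d → ℝ} {Ω : Set (Euc d)} (hΩ : IsOpen Ω)
    (h : WeakHarm U Ω) (e : Euc d) : WeakHarm (_root_.dirD e U) Ω :=
  h.dirD hΩ ((h.contDiffOn hΩ).of_le (by simp)) e

lemma WeakHarm.contDiffOn_one {U : Euc d → ℝ} {Ω : Set (Euc d)} (hΩ : IsOpen Ω)
    (h : WeakHarm U Ω) : ContDiffOn ℝ 1 U Ω := (h.contDiffOn hΩ).of_le (by simp)

lemma WeakHarm.hasFDerivAt {U : Euc d → ℝ} {Ω : Set (Euc d)} (hΩ : IsOpen Ω)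
    (h : WeakHarm U Ω) {x : Euc d} (hx : x ∈ Ω) : HasFDerivAt U (fderiv ℝ U x) x :=
  (((h.contDiffOn_one hΩ).differentiableOn one_ne_zero).differentiableAt
    (hΩ.mem_nhds hx)).hasFDerivAt

lemma WeakHarm.lap_eq_zero {U : Euc d → ℝ} {Ω : Set (Euc d)} (hΩ : IsOpen Ω)
    (h : WeakHarm U Ω) {x : Euc d} (hx : x ∈ Ω) : lap U x = 0 := by
  obtain ⟨ε, hε0, hε⟩ := Metric.nhds_basis_closedBall.mem_iff.1 (hΩ.mem_nhds hx)
  have hk : ContDiff ℝ ∞ (rad gOne x ε) := contDiff_rad contDiff_gOne x ε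
  have hkc := hasCompactSupport_rad (fun _ => gOne_zero) x hε0
  have hks := (tsupport_rad (fun _ => gOne_zero) x hε0).trans hε
  have key : ∀ i : Fin d, _root_.dirD (bvec i) (_root_.dirD (bvec i) U) x * etaMass d
      = (ε ^ d)⁻¹ * ∫ y, U y * _root_.dirD (bvec i) (_root_.dirD (bvec i) (rad gOne x ε)) y := by
    intro i
    have h1 := h.dirD' hΩ (bvec i)
    rw [(h1.dirD' hΩ (bvec i)).mul_etaMass hΩ hε0 hε,
      integral_dirD_mul hΩ (h1.contDiffOn_one hΩ) hk hkc hks,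
      integral_dirD_mul hΩ (h.contDiffOn_one hΩ) (hk.dirD _) (hkc.dirD _)
        ((tsupport_dirD _ _).trans hks), neg_neg]
  have h2 : lap U x * etaMass d = 0 := by
    rw [lap, Finset.sum_mul, Finset.sum_congr rfl fun i _ => key i, ← Finset.mul_sum,
      ← lap_eq_sum_integral hΩ h.cont hk hkc hks, h.weak _ hk hkc hks, mul_zero]
  exact (mul_eq_zero.1 h2).resolve_right etaMass_pos.ne'

/-- The dimensional constant in the interior gradient estimate. -/
def gradC (d : ℕ) : ℝ := (∫ z : Euc d, ‖fderiv ℝ eta z‖) / etaMass d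

lemma gradC_nonneg : 0 ≤ gradC d :=
  div_nonneg (integral_nonneg fun _ => norm_nonneg _) etaMass_pos.le

lemma WeakHarm.abs_dirD_le {U : Euc d → ℝ} {Ω : Set (Euc d)} (hΩ : IsOpen Ω)
    (h : WeakHarm U Ω) {x : Euc d} {ε M : ℝ} (hε0 : 0 < ε) (hε : closedBall x ε ⊆ Ω)
    (hM : ∀ y ∈ closedBall x ε, |U y| ≤ M) {e : Euc d} (he : ‖e‖ ≤ 1) :
    |_root_.dirD e U x| ≤ gradC d / ε * M := by
  have hk : ContDiff ℝ ∞ (rad gOne x ε) := contDiff_rad contDiff_gOne x ε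
  have hkc := hasCompactSupport_rad (fun _ => gOne_zero) x hε0
  have hks := (tsupport_rad (fun _ => gOne_zero) x hε0).trans hε
  have hM0 : 0 ≤ M := (abs_nonneg _).trans (hM x (by simp [hε0.le]))
  have hkd : ∀ y, _root_.dirD e (rad gOne x ε) y
      = ε⁻¹ * _root_.dirD e eta (ε⁻¹ • (y - x)) := by
    intro y
    have h1 : rad gOne x ε = fun y => eta (ε⁻¹ • (y - x)) := by
      ext y; rw [eta_scale _ _ hε0]
    have h2 : HasFDerivAt (fun y : Euc d => ε⁻¹ • (y - x))
        (ε⁻¹ • ContinuousLinearMap.id ℝ (Euc d)) y :=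
      ((hasFDerivAt_id y).sub_const x).const_smul ε⁻¹
    have h3 : HasFDerivAt eta (fderiv ℝ eta (ε⁻¹ • (y - x))) (ε⁻¹ • (y - x)) :=
      (contDiff_eta.differentiable (by simp) _).hasFDerivAt
    have h4 : HasFDerivAt (fun y => eta (ε⁻¹ • (y - x)))
        ((fderiv ℝ eta (ε⁻¹ • (y - x))).comp (ε⁻¹ • ContinuousLinearMap.id ℝ (Euc d))) y :=
      h3.comp (f := fun y : Euc d => ε⁻¹ • (y - x)) y h2
    rw [h1, _root_.dirD, h4.fderiv]
    simp [_root_.dirD]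
  have h1 : _root_.dirD e U x * etaMass d
      = - (ε⁻¹ * ∫ z, U (x + ε • z) * _root_.dirD e eta z) := by
    rw [(h.dirD' hΩ e).mul_etaMass hΩ hε0 hε,
      integral_dirD_mul hΩ (h.contDiffOn_one hΩ) hk hkc hks, integral_comp_eq U _ x hε0]
    simp only [hkd]
    rw [← mul_assoc, mul_comm ε⁻¹, mul_assoc, ← integral_const_mul, mul_neg]
    congr 3
    ext y
    ring
  have hInt : Integrable fun z : Euc d => M * ‖fderiv ℝ eta z‖ := by
    refine Integrable.const_mul (Continuous.integrable_of_hasCompactSupport ?_ ?_) M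
    · exact ((contDiff_eta (d := d)).continuous_fderiv (by simp)).norm
    · exact (hasCompactSupport_eta.fderiv (𝕜 := ℝ)).norm
  have h2 : ‖∫ z, U (x + ε • z) * _root_.dirD e eta z‖ ≤ ∫ z : Euc d, M * ‖fderiv ℝ eta z‖ := by
    refine norm_integral_le_of_norm_le hInt (Eventually.of_forall fun z => ?_)
    rw [norm_mul]
    by_cases hz : z ∈ closedBall (0 : Euc d) 1
    · gcongr
      · apply hM
        rw [mem_closedBall_zero_iff] at hz
        rw [mem_closedBall, dist_eq_norm, add_sub_cancel_left, norm_smul,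
          Real.norm_of_nonneg hε0.le]
        nlinarith
      · refine ((fderiv ℝ eta z).le_opNorm e).trans ?_
        exact mul_le_of_le_one_right (norm_nonneg _) he
    · rw [image_eq_zero_of_notMem_tsupport (f := _root_.dirD e eta)
        fun h' => hz (tsupport_eta (tsupport_dirD _ _ h'))]
      simp only [norm_zero, mul_zero]
      positivity
  rw [integral_const_mul] at h2
  have h3 : |_root_.dirD e U x| * etaMass d ≤ ε⁻¹ * (M * ∫ z : Euc d, ‖fderiv ℝ eta z‖) := by
    rw [← abs_of_pos (etaMass_pos (d := d)), ← abs_mul, h1, abs_neg, abs_mul,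
      abs_of_pos (inv_pos.2 hε0)]
    exact mul_le_mul_of_nonneg_left h2 (inv_pos.2 hε0).le
  have : |_root_.dirD e U x| ≤ ε⁻¹ * (M * ∫ z : Euc d, ‖fderiv ℝ eta z‖) / etaMass d := by
    rw [le_div_iff₀ etaMass_pos]; exact h3
  refine this.trans (le_of_eq ?_)
  rw [gradC]
  ring

/-- A bound for the mollifier. -/
lemma exists_eta_le : ∃ B : ℝ, 0 ≤ B ∧ ∀ z : Euc d, eta z ≤ B := by
  obtain ⟨B, hB⟩ := hasCompactSupport_eta.exists_bound_of_continuous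
    (contDiff_eta (d := d)).continuous
  exact ⟨B, (norm_nonneg _).trans (hB 0), fun z => (le_abs_self _).trans (hB z)⟩

/-- Interior pointwise bound by the `L²` norm, in the form obtained from `|V| ≤ (1 + V²)/2`. -/
lemma WeakHarm.abs_le_of_sq {V : Euc d → ℝ} {Ω S : Set (Euc d)} (hΩ : IsOpen Ω)
    (h : WeakHarm V Ω) {x : Euc d} {ε B : ℝ} (hε0 : 0 < ε) (hε : closedBall x ε ⊆ Ω)
    (hB : ∀ z : Euc d, eta z ≤ B) (hS : MeasurableSet S) (hxS : ball x ε ⊆ S)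
    (hInt : IntegrableOn (fun y => V y ^ 2) S) :
    |V x| * etaMass d ≤ (etaMass d + (ε ^ d)⁻¹ * (B * ∫ y in S, V y ^ 2)) / 2 := by
  have hk : ContDiff ℝ ∞ (rad gOne x ε) := contDiff_rad contDiff_gOne x ε
  have hkc := hasCompactSupport_rad (fun _ => gOne_zero) x hε0
  have hks := (tsupport_rad (fun _ => gOne_zero) x hε0).trans hε
  have hmass : ∫ y, rad gOne x ε y = ε ^ d * etaMass d := by
    have := integral_comp_eq (fun _ => 1) eta x hε0
    simp only [one_mul, eta_scale _ _ hε0] at this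
    rw [etaMass, this]
    field_simp
  have i0 : Integrable (rad gOne x ε) :=
    hk.continuous.integrable_of_hasCompactSupport hkc
  have i1 := integrable_mul_of_tsupport hΩ h.cont hk.continuous hkc hks
  have i2 : Integrable fun y => V y ^ 2 * rad gOne x ε y :=
    integrable_mul_of_tsupport hΩ (h.cont.pow 2) hk.continuous hkc hks
  have hk0 : ∀ y, 0 ≤ rad gOne x ε y := fun y => gOne_nonneg _
  have hkB : ∀ y, rad gOne x ε y ≤ B := fun y => by rw [← eta_scale _ _ hε0]; exact hB _
  have h1 : |∫ y, V y * rad gOne x ε y| ≤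
      ∫ y, (rad gOne x ε y + V y ^ 2 * rad gOne x ε y) / 2 := by
    have i3 : Integrable fun y => (rad gOne x ε y + V y ^ 2 * rad gOne x ε y) / 2 :=
      (i0.add i2).div_const 2
    rw [← Real.norm_eq_abs]
    refine norm_integral_le_of_norm_le i3
      (Eventually.of_forall fun y => ?_)
    rw [norm_mul, Real.norm_of_nonneg (hk0 y), Real.norm_eq_abs]
    have : |V y| ≤ (1 + V y ^ 2) / 2 := by
      rw [← sq_abs]; nlinarith [sq_nonneg (|V y| - 1)]
    have := mul_le_mul_of_nonneg_right this (hk0 y)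
    linarith
  rw [integral_div, integral_add i0 i2, hmass] at h1
  have h2 : ∫ y, V y ^ 2 * rad gOne x ε y ≤ B * ∫ y in S, V y ^ 2 := by
    rw [← setIntegral_eq_integral_of_forall_compl_eq_zero (s := S), ← integral_const_mul]
    · refine setIntegral_mono_on i2.integrableOn (hInt.const_mul B) hS fun y _ => ?_
      rw [mul_comm B]
      exact mul_le_mul_of_nonneg_left (hkB y) (sq_nonneg _)
    · intro y hy
      rw [rad_eq_zero (fun _ => gOne_zero) hε0, mul_zero]
      by_contra hlt
      exact hy (hxS (by rw [mem_ball, dist_eq_norm]; exact not_le.1 hlt))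
  have h3 := h.mul_etaMass hΩ hε0 hε
  rw [← abs_of_pos (etaMass_pos (d := d)), ← abs_mul, h3, abs_mul,
    abs_of_pos (by positivity : 0 < (ε ^ d)⁻¹), abs_of_pos (etaMass_pos (d := d))]
  calc (ε ^ d)⁻¹ * |∫ y, V y * rad gOne x ε y|
      ≤ (ε ^ d)⁻¹ * ((ε ^ d * etaMass d + B * ∫ y in S, V y ^ 2) / 2) := by
        refine mul_le_mul_of_nonneg_left ?_ (by positivity)
        linarith
    _ = _ := by field_simp

lemma WeakHarm.nonpos_of_sphere {U : Euc d → ℝ} {Ω : Set (Euc d)} (hΩ : IsOpen Ω)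
    (h : WeakHarm U Ω) (i₀ : Fin d) {r : ℝ} (hr0 : 0 < r) (hr : closedBall 0 r ⊆ Ω)
    (hU : ∀ y, ‖y‖ = r → U y = 0) {x : Euc d} (hx : ‖x‖ ≤ r) : U x ≤ 0 := by
  obtain ⟨x₀, hx₀, hmax⟩ := (isCompact_closedBall (0 : Euc d) r).exists_isMaxOn
    ⟨0, by simp [hr0.le]⟩ (h.cont.mono hr)
  rw [mem_closedBall_zero_iff] at hx₀
  have hle : ∀ y : Euc d, ‖y‖ ≤ r → U y ≤ U x₀ := fun y hy =>
    hmax (by simpa using hy)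
  by_contra hpos
  have hM : 0 < U x₀ := lt_of_lt_of_le (not_le.1 hpos) (hle x hx)
  have hlt : ‖x₀‖ < r := lt_of_le_of_ne hx₀ fun h' => by rw [hU x₀ h'] at hM; exact hM.false
  set ε := r - ‖x₀‖ with hεd
  have hε0 : 0 < ε := by linarith
  have hnorm : ∀ z : Euc d, ‖z‖ ≤ 1 → ‖x₀ + ε • z‖ ≤ r := fun z hz => by
    refine (norm_add_le _ _).trans ?_
    rw [norm_smul, Real.norm_of_nonneg hε0.le]
    nlinarith
  have hball : closedBall x₀ ε ⊆ Ω := by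
    refine Subset.trans ?_ hr
    apply closedBall_subset_closedBall'
    simp [hεd]
  have hpre : IsOpen ((fun z : Euc d => x₀ + ε • z) ⁻¹' Ω) := hΩ.preimage (by fun_prop)
  have hcon : ContinuousOn (fun z : Euc d => U (x₀ + ε • z))
      ((fun z : Euc d => x₀ + ε • z) ⁻¹' Ω) := h.cont.comp (by fun_prop) fun z hz => hz
  have hsupp : tsupport (eta : Euc d → ℝ) ⊆ (fun z : Euc d => x₀ + ε • z) ⁻¹' Ω := fun z hz =>
    hr (by
      rw [mem_closedBall_zero_iff]
      exact hnorm z (by simpa using tsupport_eta hz))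
  have hmv := h.meanValue hΩ hε0 hball
  have hcw : Continuous fun z : Euc d => (U x₀ - U (x₀ + ε • z)) * eta z :=
    continuous_mul_of_tsupport hpre (continuousOn_const.sub hcon) contDiff_eta.continuous hsupp
  have hiw : ∫ z : Euc d, (U x₀ - U (x₀ + ε • z)) * eta z = 0 := by
    simp only [sub_mul]
    rw [integral_sub (integrable_eta.const_mul _) (integrable_mul_of_tsupport hpre hcon
      contDiff_eta.continuous hasCompactSupport_eta hsupp), integral_const_mul, hmv, etaMass,
      sub_self]
  have hw0 : ∀ z : Euc d, 0 ≤ (U x₀ - U (x₀ + ε • z)) * eta z := fun z => by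
    rcases le_total ‖z‖ 1 with hz | hz
    · exact mul_nonneg (sub_nonneg.2 (hle _ (hnorm z hz))) (eta_nonneg z)
    · simp [eta_zero hz]
  have hconst : ∀ z : Euc d, ‖z‖ < 1 → U (x₀ + ε • z) = U x₀ := by
    intro z hz
    by_contra hne
    have := hcw.integral_pos_of_hasCompactSupport_nonneg_nonzero (μ := volume)
      hasCompactSupport_eta.mul_left hw0 (x := z)
      (mul_ne_zero (sub_ne_zero.2 (Ne.symm hne)) (eta_pos hz).ne')
    exact this.ne' hiw
  obtain ⟨e, he1, he2⟩ : ∃ e : Euc d, ‖e‖ = 1 ∧ ‖x₀ + ε • e‖ = r := by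
    by_cases h0 : x₀ = 0
    · refine ⟨bvec i₀, by simp [bvec], ?_⟩
      simp [h0, norm_smul, bvec, hεd, abs_of_pos hr0]
    · have hn : 0 < ‖x₀‖ := norm_pos_iff.2 h0
      refine ⟨‖x₀‖⁻¹ • x₀, by simp [norm_smul, hn.ne'], ?_⟩
      have : x₀ + ε • ‖x₀‖⁻¹ • x₀ = (1 + ε * ‖x₀‖⁻¹) • x₀ := by
        rw [add_smul, one_smul, smul_smul]
      rw [this, norm_smul, Real.norm_of_nonneg (by positivity), hεd]
      field_simp
      ring
  have hct : ContinuousOn (fun t : ℝ => U (x₀ + ε • (t • e))) (Icc 0 1) := by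
    refine (h.cont.mono hr).comp (by fun_prop) fun t ht => ?_
    rw [mem_closedBall_zero_iff]
    apply hnorm
    rw [norm_smul, he1, Real.norm_of_nonneg ht.1, mul_one]
    exact ht.2
  have hlim1 : Tendsto (fun t : ℝ => U (x₀ + ε • (t • e))) (𝓝[Ico 0 1] 1)
      (𝓝 (U (x₀ + ε • ((1 : ℝ) • e)))) :=
    (hct 1 (by simp)).mono_left (nhdsWithin_mono _ Ico_subset_Icc_self)
  have hlim2 : Tendsto (fun t : ℝ => U (x₀ + ε • (t • e))) (𝓝[Ico 0 1] 1) (𝓝 (U x₀)) := by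
    refine tendsto_const_nhds.congr' ?_
    filter_upwards [self_mem_nhdsWithin] with t ht
    refine (hconst _ ?_).symm
    rw [norm_smul, he1, Real.norm_of_nonneg ht.1, mul_one]
    exact ht.2
  have hne : (𝓝[Ico (0 : ℝ) 1] 1).NeBot := by
    rw [← mem_closure_iff_nhdsWithin_neBot, closure_Ico (by norm_num)]
    simp
  have := tendsto_nhds_unique hlim1 hlim2
  rw [one_smul, hU _ he2] at this
  exact hM.ne this

lemma WeakHarm.eq_zero_of_sphere {U : Euc d → ℝ} {Ω : Set (Euc d)} (hΩ : IsOpen Ω)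
    (h : WeakHarm U Ω) (i₀ : Fin d) {r : ℝ} (hr0 : 0 < r) (hr : closedBall 0 r ⊆ Ω)
    (hU : ∀ y, ‖y‖ = r → U y = 0) {x : Euc d} (hx : ‖x‖ ≤ r) : U x = 0 := by
  have h1 := h.nonpos_of_sphere hΩ i₀ hr0 hr hU hx
  have h2 := (h.const_mul (-1)).nonpos_of_sphere hΩ i₀ hr0 hr
    (fun y hy => by rw [hU y hy, mul_zero]) hx
  linarith

/-! ### Odd reflection across the flat boundary -/

lemma bvec_apply (i j : Fin d) : (bvec i : Euc d) j = if j = i then 1 else 0 := by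
  simp [bvec]

/-- The reflection `y ↦ (y', -y'')`. -/
def flipR (i₀ : Fin d) : Euc d ≃ₗᵢ[ℝ] Euc d :=
  LinearIsometryEquiv.piLpCongrRight 2 fun i =>
    if i = i₀ then LinearIsometryEquiv.neg ℝ else LinearIsometryEquiv.refl ℝ ℝ

lemma flipR_apply (i₀ : Fin d) (y : Euc d) (i : Fin d) :
    flipR i₀ y i = if i = i₀ then -y i else y i := by
  simp only [flipR, LinearIsometryEquiv.piLpCongrRight_apply]
  split_ifs <;> rfl

@[simp] lemma flipR_apply_self (i₀ : Fin d) (y : Euc d) : flipR i₀ y i₀ = -y i₀ := by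
  simp [flipR_apply]

@[simp] lemma flipR_flipR (i₀ : Fin d) (y : Euc d) : flipR i₀ (flipR i₀ y) = y := by
  ext i
  simp only [flipR_apply]
  split_ifs <;> simp

lemma flipR_bvec (i₀ i : Fin d) :
    flipR i₀ (bvec i) = (if i = i₀ then (-1 : ℝ) else 1) • bvec i := by
  ext j
  simp only [flipR_apply, bvec_apply, PiLp.smul_apply, smul_eq_mul]
  split_ifs <;> simp_all

lemma sub_flipR (i₀ : Fin d) (y : Euc d) : y - flipR i₀ y = (2 * y i₀) • bvec i₀ := by
  ext j
  simp only [flipR_apply, PiLp.sub_apply, PiLp.smul_apply, smul_eq_mul,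
    bvec_apply]
  split_ifs with h
  · rw [h]; ring
  · simp

lemma norm_bvec (i : Fin d) : ‖bvec i‖ = 1 := by simp [bvec]

lemma measurePreserving_flipR (i₀ : Fin d) :
    MeasurePreserving (flipR i₀) volume volume := (flipR i₀).measurePreserving

lemma integral_flipR (i₀ : Fin d) (f : Euc d → ℝ) : ∫ y, f (flipR i₀ y) = ∫ y, f y :=
  (measurePreserving_flipR i₀).integral_comp
    (flipR i₀).toHomeomorph.measurableEmbedding f

/-- The map replacing `y''` by its positive part. -/
def fold (i₀ : Fin d) (y : Euc d) : Euc d := y + max (-y i₀) 0 • bvec i₀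

lemma continuous_coord (i : Fin d) : Continuous fun y : Euc d => y i := by fun_prop

lemma continuous_fold (i₀ : Fin d) : Continuous (fold i₀) := by
  unfold fold
  fun_prop

lemma fold_apply (i₀ : Fin d) (y : Euc d) (i : Fin d) :
    fold i₀ y i = if i = i₀ then max (y i) 0 else y i := by
  simp only [fold, PiLp.add_apply, PiLp.smul_apply, smul_eq_mul,
    bvec_apply]
  split_ifs with h
  · rw [h, mul_one]
    rcases le_total (y i₀) 0 with h | h
    · rw [max_eq_left (by linarith), max_eq_right h]; ring
    · rw [max_eq_right (by linarith), max_eq_left h]; ring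
  · simp

lemma abs_fold_le (i₀ : Fin d) (y : Euc d) (i : Fin d) : |fold i₀ y i| ≤ |y i| := by
  rw [fold_apply]
  split_ifs
  · rw [abs_of_nonneg (le_max_right _ _)]
    exact max_le (le_abs_self _) (abs_nonneg _)
  · exact le_rfl

lemma norm_fold_le (i₀ : Fin d) (y : Euc d) : ‖fold i₀ y‖ ≤ ‖y‖ := by
  rw [EuclideanSpace.norm_eq, EuclideanSpace.norm_eq]
  apply Real.sqrt_le_sqrt
  gcongr with i
  exact abs_fold_le i₀ y i

lemma fold_of_nonneg {i₀ : Fin d} {y : Euc d} (h : 0 ≤ y i₀) : fold i₀ y = y := by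
  simp [fold, h]

/-- The odd extension `u(y', y''₊) - u(y', y''₋)` of a function on the upper half-ball that
vanishes on the flat part of the boundary. -/
def oddExt (i₀ : Fin d) (u : Euc d → ℝ) (y : Euc d) : ℝ :=
  u (fold i₀ y) - u (fold i₀ (flipR i₀ y))

lemma oddExt_flipR (i₀ : Fin d) (u : Euc d → ℝ) (y : Euc d) :
    oddExt i₀ u (flipR i₀ y) = -oddExt i₀ u y := by simp [oddExt]

lemma oddExt_flat (i₀ : Fin d) (u : Euc d → ℝ) {y : Euc d} (hy : y i₀ = 0) :
    oddExt i₀ u y = 0 := by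
  have : flipR i₀ y = y := by
    have := sub_flipR i₀ y
    rw [hy, mul_zero, zero_smul, sub_eq_zero] at this
    exact this.symm
  rw [oddExt, this, sub_self]

lemma oddExt_of_nonneg {i₀ : Fin d} {u : Euc d → ℝ}
    (hu : ∀ y : Euc d, ‖y‖ ≤ 1 → y i₀ = 0 → u y = 0) {y : Euc d} (h1 : ‖y‖ ≤ 1)
    (h : 0 ≤ y i₀) : oddExt i₀ u y = u y := by
  rw [oddExt, fold_of_nonneg h, hu (fold i₀ (flipR i₀ y)), sub_zero]
  · exact (norm_fold_le _ _).trans (by rwa [LinearIsometryEquiv.norm_map])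
  · rw [fold_apply, if_pos rfl, flipR_apply_self]
    exact max_eq_right (by linarith)

lemma mem_closure_halfBall {i₀ : Fin d} {y : Euc d} (h1 : ‖y‖ < 1) (h : 0 ≤ y i₀) :
    y ∈ closure (halfBall d i₀ 1) := by
  have ht : Tendsto (fun t : ℝ => y + t • bvec i₀) (𝓝[>] 0) (𝓝 y) := by
    have : Continuous fun t : ℝ => y + t • bvec i₀ := by fun_prop
    simpa using (this.tendsto 0).mono_left nhdsWithin_le_nhds
  refine mem_closure_of_tendsto ht ?_
  have h2 : ∀ᶠ t in 𝓝[>] (0 : ℝ), y + t • bvec i₀ ∈ ball (0 : Euc d) 1 :=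
    ht.eventually (isOpen_ball.mem_nhds (by simpa using h1))
  filter_upwards [h2, self_mem_nhdsWithin] with t ht ht0
  refine ⟨ht, ?_⟩
  simp only [PiLp.add_apply, PiLp.smul_apply, smul_eq_mul,
    bvec_apply, if_true, mul_one]
  exact add_pos_of_nonneg_of_pos h ht0

lemma continuousOn_oddExt {i₀ : Fin d} {u : Euc d → ℝ}
    (hu : ContinuousOn u (closure (halfBall d i₀ 1))) :
    ContinuousOn (oddExt i₀ u) (ball 0 1) := by
  have key : ∀ y : Euc d, ‖y‖ < 1 → fold i₀ y ∈ closure (halfBall d i₀ 1) := fun y hy => by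
    refine mem_closure_halfBall ((norm_fold_le _ _).trans_lt hy) ?_
    rw [fold_apply, if_pos rfl]
    exact le_max_right _ _
  refine (hu.comp (continuous_fold i₀).continuousOn fun y hy => key y (by simpa using hy)).sub
    (hu.comp ((continuous_fold i₀).comp (flipR i₀).continuous).continuousOn fun y hy =>
      key _ ?_)
  rw [LinearIsometryEquiv.norm_map]
  simpa using hy

lemma isOpen_halfBall (i₀ : Fin d) (r : ℝ) : IsOpen (halfBall d i₀ r) :=
  isOpen_ball.inter (isOpen_lt continuous_const (continuous_coord i₀))

lemma dirD_comp_flipR (i₀ : Fin d) {φ : Euc d → ℝ} (hφ : ContDiff ℝ ∞ φ) (e : Euc d) :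
    dirD e (fun y => φ (flipR i₀ y)) = fun y => dirD (flipR i₀ e) φ (flipR i₀ y) := by
  ext y
  have h1 : HasFDerivAt (fun y => φ (flipR i₀ y))
      ((fderiv ℝ φ (flipR i₀ y)).comp ((flipR i₀ : Euc d ≃L[ℝ] Euc d) : Euc d →L[ℝ] Euc d)) y :=
    ((hφ.differentiable (by simp)) _).hasFDerivAt.comp y
      ((flipR i₀ : Euc d ≃L[ℝ] Euc d) : Euc d →L[ℝ] Euc d).hasFDerivAt
  rw [dirD, h1.fderiv]
  rfl

lemma dirD_smul_dir (c : ℝ) (e : Euc d) (φ : Euc d → ℝ) :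
    dirD (c • e) φ = fun y => c * dirD e φ y := by
  ext y; simp [dirD]

lemma dirD_const_mul {φ : Euc d → ℝ} (hφ : ContDiff ℝ ∞ φ) (c : ℝ) (e : Euc d) :
    dirD e (fun y => c * φ y) = fun y => c * dirD e φ y := by
  ext y
  rw [dirD, fderiv_const_mul (hφ.differentiable (by simp) y)]
  rfl

lemma lap_comp_flipR (i₀ : Fin d) {φ : Euc d → ℝ} (hφ : ContDiff ℝ ∞ φ) :
    lap (fun y => φ (flipR i₀ y)) = fun y => lap φ (flipR i₀ y) := by
  ext y
  simp only [lap]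
  refine Finset.sum_congr rfl fun i _ => ?_
  rw [dirD_comp_flipR i₀ hφ, dirD_comp_flipR i₀ (hφ.dirD _), flipR_bvec, dirD_smul_dir,
    dirD_smul_dir, dirD_const_mul (hφ.dirD _)]
  split_ifs <;> simp

lemma dirD_sub {φ ψ : Euc d → ℝ} (hφ : ContDiff ℝ ∞ φ) (hψ : ContDiff ℝ ∞ ψ) (e : Euc d) :
    dirD e (fun y => φ y - ψ y) = fun y => dirD e φ y - dirD e ψ y := by
  ext y
  rw [dirD, fderiv_fun_sub (hφ.differentiable (by simp) y) (hψ.differentiable (by simp) y)]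
  rfl

lemma lap_sub {φ ψ : Euc d → ℝ} (hφ : ContDiff ℝ ∞ φ) (hψ : ContDiff ℝ ∞ ψ) :
    lap (fun y => φ y - ψ y) = fun y => lap φ y - lap ψ y := by
  ext y
  simp only [lap, ← Finset.sum_sub_distrib]
  refine Finset.sum_congr rfl fun i _ => ?_
  rw [dirD_sub hφ hψ, dirD_sub (hφ.dirD _) (hψ.dirD _)]

lemma dirD_mul_coord {φ : Euc d → ℝ} (hφ : ContDiff ℝ ∞ φ) {g : ℝ → ℝ} (hg : ContDiff ℝ ∞ g)
    (i₀ : Fin d) (e : Euc d) :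
    dirD e (fun y => φ y * g (y i₀))
      = fun y => dirD e φ y * g (y i₀) + φ y * (e i₀ * deriv g (y i₀)) := by
  ext y
  have h1 : HasFDerivAt (fun y : Euc d => y i₀) (EuclideanSpace.proj i₀ : Euc d →L[ℝ] ℝ) y :=
    (EuclideanSpace.proj i₀ : Euc d →L[ℝ] ℝ).hasFDerivAt
  have h2 := ((hg.differentiable (by simp)) (y i₀)).hasDerivAt.comp_hasFDerivAt y h1
  have h3 := ((hφ.differentiable (by simp)) y).hasFDerivAt.mul h2
  have h4 : HasFDerivAt (fun y => φ y * g (y i₀)) _ y := h3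
  rw [dirD, h4.fderiv]
  simp [dirD]
  ring

lemma contDiff_mul_coord {φ : Euc d → ℝ} (hφ : ContDiff ℝ ∞ φ) {g : ℝ → ℝ}
    (hg : ContDiff ℝ ∞ g) (i₀ : Fin d) : ContDiff ℝ ∞ fun y : Euc d => φ y * g (y i₀) :=
  hφ.mul (hg.comp (EuclideanSpace.proj i₀ : Euc d →L[ℝ] ℝ).contDiff)

lemma contDiff_deriv {g : ℝ → ℝ} (hg : ContDiff ℝ ∞ g) : ContDiff ℝ ∞ (deriv g) :=
  (contDiff_infty_iff_deriv.1 hg).2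

lemma dirD_add {φ ψ : Euc d → ℝ} (hφ : ContDiff ℝ ∞ φ) (hψ : ContDiff ℝ ∞ ψ) (e : Euc d) :
    dirD e (fun y => φ y + ψ y) = fun y => dirD e φ y + dirD e ψ y := by
  ext y
  rw [dirD, fderiv_fun_add (hφ.differentiable (by simp) y) (hψ.differentiable (by simp) y)]
  rfl

lemma lap_mul_coord {φ : Euc d → ℝ} (hφ : ContDiff ℝ ∞ φ) {g : ℝ → ℝ} (hg : ContDiff ℝ ∞ g)
    (i₀ : Fin d) (y : Euc d) :
    lap (fun y => φ y * g (y i₀)) y = lap φ y * g (y i₀)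
      + 2 * dirD (bvec i₀) φ y * deriv g (y i₀) + φ y * deriv (deriv g) (y i₀) := by
  have hg' := contDiff_deriv hg
  have key : ∀ i : Fin d, dirD (bvec i) (dirD (bvec i) (fun y => φ y * g (y i₀))) y
      = dirD (bvec i) (dirD (bvec i) φ) y * g (y i₀)
        + (bvec i : Euc d) i₀ * (2 * dirD (bvec i) φ y * deriv g (y i₀)
          + φ y * deriv (deriv g) (y i₀) * (bvec i : Euc d) i₀) := by
    intro i
    have e1 : (fun y : Euc d => φ y * ((bvec i : Euc d) i₀ * deriv g (y i₀)))
        = fun y => (bvec i : Euc d) i₀ * (φ y * deriv g (y i₀)) := by ext; ring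
    rw [dirD_mul_coord hφ hg, dirD_add (contDiff_mul_coord (hφ.dirD _) hg i₀)
      (by rw [e1]; exact contDiff_const.mul (contDiff_mul_coord hφ hg' i₀)), e1,
      dirD_mul_coord (hφ.dirD _) hg, dirD_const_mul (contDiff_mul_coord hφ hg' i₀),
      dirD_mul_coord hφ hg']
    ring
  simp only [lap, key, Finset.sum_add_distrib, Finset.sum_mul, add_assoc]
  congr 1
  rw [Finset.sum_eq_single i₀]
  · simp [bvec_apply]
  · intro i _ hi
    simp [bvec_apply, hi.symm]
  · simp

lemma volume_slab_le (i₀ : Fin d) {ε : ℝ} (hε : 0 ≤ ε) :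
    volume {y : Euc d | ‖y‖ ≤ 1 ∧ 0 ≤ y i₀ ∧ y i₀ ≤ ε} ≤ ENNReal.ofReal (2 ^ d * ε) := by
  have hsub : {y : Euc d | ‖y‖ ≤ 1 ∧ 0 ≤ y i₀ ∧ y i₀ ≤ ε} ⊆
      (WithLp.ofLp : Euc d → (Fin d → ℝ)) ⁻¹'
        (Set.univ.pi fun i => if i = i₀ then Icc 0 ε else Icc (-1) 1) := by
    rintro y ⟨h1, h2, h3⟩
    simp only [mem_preimage, Set.mem_univ_pi]
    intro i
    split_ifs with h
    · rw [h]; exact ⟨h2, h3⟩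
    · have := (PiLp.norm_apply_le y i).trans h1
      rwa [Real.norm_eq_abs, abs_le] at this
  refine (measure_mono hsub).trans ?_
  have hmp := PiLp.volume_preserving_ofLp (Fin d)
  rw [hmp.measure_preimage (MeasurableSet.univ_pi fun i => by
    split_ifs <;> exact measurableSet_Icc).nullMeasurableSet, volume_pi_pi]
  have : ∀ i : Fin d, volume (if i = i₀ then Icc 0 ε else Icc (-1 : ℝ) 1)
      = ENNReal.ofReal (if i = i₀ then ε else 2) := by
    intro i
    split_ifs
    · simp
    · simp; norm_num
  simp only [this]
  rw [← ENNReal.ofReal_prod_of_nonneg (fun i _ => by split_ifs <;> linarith)]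
  apply ENNReal.ofReal_le_ofReal
  rw [← Finset.mul_prod_erase _ _ (Finset.mem_univ i₀), if_pos rfl, mul_comm]
  gcongr
  rw [Finset.prod_congr rfl (g := fun _ => (2 : ℝ))
    fun i hi => if_neg (Finset.ne_of_mem_erase hi), Finset.prod_const]
  exact pow_le_pow_right₀ (by norm_num) (by simp)

/-- The odd extension of a harmonic function that vanishes on the flat part of the boundary is
weakly harmonic in the whole ball. A test function `φ` is replaced by its odd part, which vanishes
linearly on the hyperplane, and then cut off at height `ε`; the error terms are of size
`ε⁻¹ sup |u|` on a slab of volume `O(ε)` on which `u` tends to zero. -/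
lemma weakHarm_oddExt {i₀ : Fin d} {u : Euc d → ℝ}
    (hh : IsHarmonicOn u (halfBall d i₀ 1))
    (hc : ContinuousOn u (closure (halfBall d i₀ 1)))
    (h0 : ∀ y : Euc d, ‖y‖ ≤ 1 → y i₀ = 0 → u y = 0) :
    WeakHarm (oddExt i₀ u) (ball 0 1) := by
  have hcont := continuousOn_oddExt hc
  refine ⟨hcont, fun φ hφ hφc hφs => ?_⟩
  set U := oddExt i₀ u with hU
  set ψ : Euc d → ℝ := fun y => φ y - φ (flipR i₀ y) with hψd
  have hφR : ContDiff ℝ ∞ fun y => φ (flipR i₀ y) := hφ.comp (flipR i₀).contDiff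
  have hψ : ContDiff ℝ ∞ ψ := hφ.sub hφR
  obtain ⟨r, hr1, hr⟩ := exists_lt_subset_ball (isClosed_tsupport φ) hφs
  have hψs : tsupport ψ ⊆ closedBall 0 r := by
    refine closure_minimal (fun y hy => ?_) isClosed_closedBall
    by_contra hyr
    rw [mem_closedBall_zero_iff, not_le] at hyr
    have z : ∀ z : Euc d, r < ‖z‖ → φ z = 0 := fun z hz =>
      image_eq_zero_of_notMem_tsupport fun h' => by
        have := hr h'
        rw [mem_ball_zero_iff] at this
        linarith
    apply hy
    simp only [hψd]
    rw [z y hyr, z (flipR i₀ y) (by rwa [LinearIsometryEquiv.norm_map]), sub_zero]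
  have hψc : HasCompactSupport ψ :=
    HasCompactSupport.of_support_subset_isCompact (isCompact_closedBall 0 r)
      ((subset_tsupport _).trans hψs)
  have hlapψ : lap ψ = fun y => lap φ y - lap φ (flipR i₀ y) := by
    rw [hψd, lap_sub hφ hφR, lap_comp_flipR i₀ hφ]
  -- reduction to the upper half-space
  set P : Set (Euc d) := {y | 0 < y i₀} with hP
  have hPo : IsOpen P := isOpen_lt continuous_const (continuous_coord i₀)
  have hball : closedBall (0 : Euc d) r ⊆ ball 0 1 := closedBall_subset_ball hr1
  have hInt : ∀ ψ' : Euc d → ℝ, ContDiff ℝ ∞ ψ' → HasCompactSupport ψ' →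
      tsupport ψ' ⊆ ball 0 1 → Integrable fun y => U y * lap ψ' y := fun ψ' a b c =>
    integrable_mul_of_tsupport isOpen_ball hcont a.lap.continuous b.lap
      ((tsupport_lap _).trans c)
  have hiφ := hInt φ hφ hφc hφs
  have hiψ := hInt ψ hψ hψc (hψs.trans hball)
  have hred : ∫ y, U y * lap φ y = ∫ y in P, U y * lap ψ y := by
    have e1 : ∫ y in Pᶜ, U y * lap φ y = ∫ y in P, -(U y * lap φ (flipR i₀ y)) := by
      rw [← integral_indicator hPo.measurableSet.compl, ← integral_indicator hPo.measurableSet,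
        ← integral_flipR i₀]
      congr 1
      ext y
      rcases lt_trichotomy (y i₀) 0 with h | h | h
      · rw [indicator_of_notMem, indicator_of_notMem] <;> simp [hP, h, h.le]
      · rw [indicator_of_notMem (s := P) (by simp [hP, h]), indicator_of_mem (by simp [hP, h]),
          hU, oddExt_flat i₀ u (by simp [h]), zero_mul]
      · rw [indicator_of_mem (by simp [hP, h.le]), indicator_of_mem (s := P) h, hU, oddExt_flipR]
        ring
    have hiR : Integrable fun y => U y * lap φ (flipR i₀ y) := by
      have := hiφ.sub hiψ
      refine this.congr (Eventually.of_forall fun y => ?_)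
      simp only [hlapψ, Pi.sub_apply]
      ring
    rw [← integral_add_compl hPo.measurableSet hiφ, e1, integral_neg, ← sub_eq_add_neg,
      ← integral_sub hiφ.integrableOn hiR.integrableOn]
    simp only [hlapψ]
    congr 1
    ext y
    ring
  rw [hred]
  -- `ψ` is an odd combination of values of `φ`, so it vanishes linearly on the hyperplane
  obtain ⟨L, hL⟩ := (hφ.of_le (m := 1) (by simp)).lipschitzWith_of_hasCompactSupport
    hφc one_ne_zero
  have hψL : ∀ y, |ψ y| ≤ L * (2 * |y i₀|) := by
    intro y
    have := hL.dist_le_mul y (flipR i₀ y)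
    rw [dist_eq_norm, dist_eq_norm, sub_flipR, norm_smul, norm_bvec, mul_one, norm_mul] at this
    simpa using this
  obtain ⟨A, hA⟩ := hψc.lap.exists_bound_of_continuous hψ.lap.continuous
  obtain ⟨B, hB⟩ := (hψc.dirD (bvec i₀)).exists_bound_of_continuous (hψ.dirD _).continuous
  set h : ℝ → ℝ := fun s => Real.smoothTransition (s - 1) with hhd
  have hhs : ContDiff ℝ ∞ h := Real.smoothTransition.contDiff.comp (contDiff_id.sub contDiff_const)
  obtain ⟨C₁, hC₁⟩ := (isCompact_Icc (a := (0:ℝ)) (b := 2)).exists_bound_of_continuousOn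
    (contDiff_deriv hhs).continuous.continuousOn
  obtain ⟨C₂, hC₂⟩ := (isCompact_Icc (a := (0:ℝ)) (b := 2)).exists_bound_of_continuousOn
    (contDiff_deriv (contDiff_deriv hhs)).continuous.continuousOn
  have hA0 : 0 ≤ A := (norm_nonneg _).trans (hA 0)
  have hB0 : 0 ≤ B := (norm_nonneg _).trans (hB 0)
  have hC10 : 0 ≤ C₁ := (norm_nonneg _).trans (hC₁ 0 (by simp))
  have hC20 : 0 ≤ C₂ := (norm_nonneg _).trans (hC₂ 0 (by simp))
  set C := A + 2 * B * C₁ + L * 4 * C₂ with hC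
  have hC0 : 0 ≤ C := by positivity
  -- smallness of `U` near the hyperplane
  have hunif : ∀ τ > 0, ∃ δ > 0, ∀ y : Euc d, ‖y‖ ≤ r → |y i₀| < δ → |U y| < τ := by
    intro τ hτ
    obtain ⟨δ, hδ, H⟩ := Metric.uniformContinuousOn_iff.1
      ((isCompact_closedBall (0 : Euc d) r).uniformContinuousOn_of_continuous
        (hcont.mono hball)) τ hτ
    refine ⟨δ, hδ, fun y hy hyδ => ?_⟩
    have hz : (y - y i₀ • bvec i₀) i₀ = 0 := by simp [bvec_apply]
    have hzn : ‖y - y i₀ • bvec i₀‖ ≤ r := by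
      refine le_trans ?_ hy
      rw [EuclideanSpace.norm_eq, EuclideanSpace.norm_eq]
      apply Real.sqrt_le_sqrt
      gcongr with i
      by_cases hi : i = i₀
      · simp [bvec_apply, hi]
      · simp [bvec_apply, hi]
    have := H y (by simpa using hy) (y - y i₀ • bvec i₀) (by simpa using hzn)
      (by simpa [dist_eq_norm, norm_smul, norm_bvec] using hyδ)
    rwa [hU, oddExt_flat i₀ u hz, Real.dist_eq, sub_zero] at this
  -- the estimate for each cut-off height
  have hest : ∀ τ > 0, |∫ y in P, U y * lap ψ y| ≤ τ * C * (2 ^ d * 2) := by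
    intro τ hτ
    obtain ⟨δ, hδ, H⟩ := hunif τ hτ
    obtain ⟨ε, hε0, hε1, hεδ⟩ : ∃ ε : ℝ, 0 < ε ∧ ε ≤ 1 ∧ 2 * ε < δ :=
      ⟨min 1 (δ / 4), by positivity, min_le_left _ _, by
        have := min_le_right 1 (δ / 4); linarith⟩
    set g : ℝ → ℝ := fun t => h (ε⁻¹ * t) with hg
    have hgs : ContDiff ℝ ∞ g := hhs.comp (contDiff_const.mul contDiff_id)
    have hg' : ∀ t, deriv g t = ε⁻¹ * deriv h (ε⁻¹ * t) := fun t => by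
      rw [hg, deriv_comp_mul_left, smul_eq_mul]
    have hg'' : ∀ t, deriv (deriv g) t = ε⁻¹ * (ε⁻¹ * deriv (deriv h) (ε⁻¹ * t)) := fun t => by
      rw [funext hg', deriv_const_mul_field, deriv_comp_mul_left, smul_eq_mul]
    have hg1 : ∀ t, 2 * ε ≤ t → g t = 1 := fun t ht =>
      Real.smoothTransition.one_of_one_le (by
        have : 2 ≤ ε⁻¹ * t := by rw [inv_mul_eq_div, le_div_iff₀ hε0]; exact ht
        linarith)
    have hg0 : ∀ t, t ≤ ε → g t = 0 := fun t ht =>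
      Real.smoothTransition.zero_of_nonpos (by
        have : ε⁻¹ * t ≤ 1 := by rw [inv_mul_eq_div, div_le_one hε0]; exact ht
        linarith)
    have hψg := contDiff_mul_coord hψ hgs i₀
    set ψg : Euc d → ℝ := fun y => ψ y * g (y i₀) with hψgd
    have hψgc : HasCompactSupport ψg := hψc.mul_right
    have hψgs1 : tsupport ψg ⊆ closedBall 0 r :=
      (tsupport_mul_subset_left (f := ψ)).trans hψs
    have hψgs2 : tsupport ψg ⊆ {y | ε ≤ y i₀} := by
      refine closure_minimal (fun y hy => ?_) (isClosed_le continuous_const (continuous_coord i₀))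
      by_contra hlt
      exact hy (by simp only [hψgd]; rw [hg0 _ (not_le.1 hlt).le, mul_zero])
    have hψgs : tsupport ψg ⊆ halfBall d i₀ 1 := fun y hy =>
      ⟨hball (hψgs1 hy), hε0.trans_le (hψgs2 hy)⟩
    have hzero : ∫ y in P, U y * lap ψg y = 0 := by
      rw [setIntegral_eq_integral_of_forall_compl_eq_zero,
        ← (weakHarm_of_harmonicOn (isOpen_halfBall i₀ 1) hh).weak ψg hψg hψgc hψgs]
      · congr 1
        ext y
        by_cases hy : y ∈ tsupport (lap ψg)
        · have := hψgs (tsupport_lap _ hy)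
          rw [hU, oddExt_of_nonneg h0 (mem_ball_zero_iff.1 this.1).le this.2.le]
        · rw [image_eq_zero_of_notMem_tsupport hy, mul_zero, mul_zero]
      · intro y hy
        rw [image_eq_zero_of_notMem_tsupport (f := lap ψg) fun h' => hy
          (hψgs (tsupport_lap _ h')).2, mul_zero]
    have hiψg := hInt ψg hψg hψgc (hψgs1.trans hball)
    set S : Set (Euc d) := {y : Euc d | ‖y‖ ≤ 1 ∧ 0 ≤ y i₀ ∧ y i₀ ≤ 2 * ε} with hS
    have hSc : IsClosed S := (isClosed_le continuous_norm continuous_const).inter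
      ((isClosed_le continuous_const (continuous_coord i₀)).inter
        (isClosed_le (continuous_coord i₀) continuous_const))
    have hSP : MeasurableSet (P ∩ S) := hPo.measurableSet.inter hSc.measurableSet
    have hdiff : ∀ y, lap ψ y - lap ψg y = lap ψ y * (1 - g (y i₀))
        - 2 * dirD (bvec i₀) ψ y * deriv g (y i₀) - ψ y * deriv (deriv g) (y i₀) := fun y => by
      rw [hψgd, lap_mul_coord hψ hgs]; ring
    have hout : ∀ y ∈ P, y ∉ S → U y * (lap ψ y - lap ψg y) = 0 := by
      intro y hy hyS
      by_cases hy1 : ‖y‖ ≤ 1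
      · have h2 : 2 * ε < y i₀ := by
          by_contra h'
          exact hyS ⟨hy1, le_of_lt hy, not_lt.1 h'⟩
        have e1 : g =ᶠ[𝓝 (y i₀)] fun _ => 1 := by
          filter_upwards [lt_mem_nhds h2] with t ht using hg1 t ht.le
        have e2 : deriv g =ᶠ[𝓝 (y i₀)] fun _ => 0 := by
          filter_upwards [e1.eventuallyEq_nhds] with t ht
          rw [ht.deriv_eq, deriv_const]
        rw [hdiff, e1.eq_of_nhds, e2.eq_of_nhds, e2.deriv_eq, deriv_const]
        ring
      · have z : ∀ f : Euc d → ℝ, tsupport f ⊆ closedBall 0 r → lap f y = 0 := fun f hf =>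
          image_eq_zero_of_notMem_tsupport fun h' => hy1 (by
            have := hf (tsupport_lap _ h')
            rw [mem_closedBall_zero_iff] at this
            linarith)
        rw [z ψ hψs, z ψg hψgs1, sub_zero, mul_zero]
    have hbound : ∀ y ∈ P ∩ S, ‖U y * (lap ψ y - lap ψg y)‖ ≤ τ * (C / ε) := by
      rintro y ⟨hyP, hy1, hy2, hy3⟩
      by_cases hyr : ‖y‖ ≤ r
      · have hU1 : |U y| ≤ τ := (H y hyr (by rw [abs_of_nonneg hy2]; linarith)).le
        have hs : ε⁻¹ * y i₀ ∈ Icc (0:ℝ) 2 :=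
          ⟨by positivity, by rw [inv_mul_eq_div, div_le_iff₀ hε0]; exact hy3⟩
        have hb1 := hC₁ _ hs
        have hb2 := hC₂ _ hs
        have hb3 := hA y
        have hb4 := hB y
        have hb5 : |ψ y| ≤ L * (4 * ε) := by
          refine (hψL y).trans ?_
          rw [abs_of_nonneg hy2]
          refine mul_le_mul_of_nonneg_left ?_ L.coe_nonneg
          linarith
        have hb6 : |1 - g (y i₀)| ≤ 1 := by
          rw [abs_le]
          have a1 := Real.smoothTransition.nonneg (ε⁻¹ * y i₀ - 1)
          have a2 := Real.smoothTransition.le_one (ε⁻¹ * y i₀ - 1)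
          simp only [hg, hhd]
          constructor <;> linarith
        rw [Real.norm_eq_abs] at hb1 hb2 hb3 hb4
        rw [norm_mul, Real.norm_eq_abs, Real.norm_eq_abs]
        have hεi : 0 < ε⁻¹ := inv_pos.2 hε0
        have hεi1 : 1 ≤ ε⁻¹ := (one_le_inv₀ hε0).2 hε1
        have : |lap ψ y - lap ψg y| ≤ C / ε := by
          rw [hdiff, hg', hg'']
          calc _ ≤ |lap ψ y * (1 - g (y i₀))|
                + |2 * dirD (bvec i₀) ψ y * (ε⁻¹ * deriv h (ε⁻¹ * y i₀))|
                + |ψ y * (ε⁻¹ * (ε⁻¹ * deriv (deriv h) (ε⁻¹ * y i₀)))| :=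
                (abs_sub _ _).trans (by gcongr; exact abs_sub _ _)
            _ = |lap ψ y| * |1 - g (y i₀)|
                + 2 * |dirD (bvec i₀) ψ y| * (ε⁻¹ * |deriv h (ε⁻¹ * y i₀)|)
                + |ψ y| * (ε⁻¹ * (ε⁻¹ * |deriv (deriv h) (ε⁻¹ * y i₀)|)) := by
                simp only [abs_mul, abs_of_pos hεi, abs_two]
            _ ≤ A * 1 + 2 * B * (ε⁻¹ * C₁) + L * (4 * ε) * (ε⁻¹ * (ε⁻¹ * C₂)) := by
                gcongr
            _ = A + (2 * B * C₁ + L * 4 * C₂) * ε⁻¹ := by field_simp; ring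
            _ ≤ A * ε⁻¹ + (2 * B * C₁ + L * 4 * C₂) * ε⁻¹ := by nlinarith
            _ = C / ε := by rw [hC]; ring
        exact mul_le_mul hU1 this (abs_nonneg _) hτ.le
      · have z : ∀ f : Euc d → ℝ, tsupport f ⊆ closedBall 0 r → lap f y = 0 := fun f hf =>
          image_eq_zero_of_notMem_tsupport fun h' => hyr
            (mem_closedBall_zero_iff.1 (hf (tsupport_lap _ h')))
        rw [z ψ hψs, z ψg hψgs1, sub_zero, mul_zero, norm_zero]
        positivity
    have hmeas : volume (P ∩ S) ≤ ENNReal.ofReal (2 ^ d * (2 * ε)) :=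
      (measure_mono inter_subset_right).trans (volume_slab_le i₀ (by positivity))
    have e1 : ∫ y in P, U y * lap ψ y = ∫ y in P ∩ S, U y * (lap ψ y - lap ψg y) := by
      have e2 : ∫ y in P, U y * lap ψ y = ∫ y in P, U y * (lap ψ y - lap ψg y) := by
        simp only [mul_sub]
        rw [integral_sub hiψ.integrableOn hiψg.integrableOn, hzero, sub_zero]
      rw [e2]
      exact (setIntegral_eq_of_subset_of_forall_sdiff_eq_zero hPo.measurableSet
        inter_subset_left fun y hy => hout y hy.1 fun h' => hy.2 ⟨hy.1, h'⟩)
    rw [e1, ← Real.norm_eq_abs]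
    refine (norm_setIntegral_le_of_norm_le_const (hmeas.trans_lt ENNReal.ofReal_lt_top)
      hbound).trans ?_
    have : volume.real (P ∩ S) ≤ 2 ^ d * (2 * ε) :=
      ENNReal.toReal_le_of_le_ofReal (by positivity) hmeas
    calc τ * (C / ε) * volume.real (P ∩ S) ≤ τ * (C / ε) * (2 ^ d * (2 * ε)) := by gcongr
      _ = τ * C * (2 ^ d * 2) := by field_simp
  have hlim : Tendsto (fun τ : ℝ => τ * C * (2 ^ d * 2)) (𝓝[>] 0) (𝓝 0) := by
    have : Continuous fun τ : ℝ => τ * C * (2 ^ d * 2) := by fun_prop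
    simpa using (this.tendsto 0).mono_left nhdsWithin_le_nhds
  have := ge_of_tendsto hlim (by
    filter_upwards [self_mem_nhdsWithin] with τ hτ using hest τ hτ)
  exact abs_nonpos_iff.1 this

/-! ### Unique continuation -/

lemma WeakHarm.iterate {w : Euc d → ℝ} {Ω : Set (Euc d)} (hΩ : IsOpen Ω) (h : WeakHarm w Ω)
    (e : Euc d) (k : ℕ) : WeakHarm ((_root_.dirD e)^[k] w) Ω := by
  induction k with
  | zero => exact h
  | succ k ih =>
    rw [Function.iterate_succ_apply']
    exact ih.dirD' hΩ e

lemma WeakHarm.abs_iterate_le {w : Euc d → ℝ} {Ω : Set (Euc d)} (hΩ : IsOpen Ω)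
    (h : WeakHarm w Ω) {e : Euc d} (he : ‖e‖ ≤ 1) {a : Euc d} {η M : ℝ} (hη : 0 < η) (k : ℕ) :
    ∀ s : ℝ, 0 ≤ s → closedBall a (s + k * η) ⊆ Ω →
      (∀ y ∈ closedBall a (s + k * η), |w y| ≤ M) →
      ∀ y ∈ closedBall a s, |(_root_.dirD e)^[k] w y| ≤ (gradC d / η) ^ k * M := by
  induction k with
  | zero =>
    intro s _ _ hM y hy
    simpa using hM y (by simpa using hy)
  | succ k ih =>
    intro s hs hsub hM y hy
    have e1 : s + η + k * η = s + (k + 1 : ℕ) * η := by push_cast; ring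
    have ih' := ih (s + η) (by positivity) (by rwa [e1]) (by rwa [e1])
    have hb : closedBall y η ⊆ closedBall a (s + η) := by
      apply closedBall_subset_closedBall'
      rw [mem_closedBall] at hy
      linarith
    have hb2 : closedBall a (s + η) ⊆ Ω := by
      refine Subset.trans (closedBall_subset_closedBall ?_) hsub
      rw [← e1]
      nlinarith [(Nat.cast_nonneg k : (0:ℝ) ≤ k)]
    rw [Function.iterate_succ_apply']
    refine ((h.iterate hΩ e k).abs_dirD_le hΩ hη (hb.trans hb2) (fun z hz => ih' z (hb hz))
      he).trans (le_of_eq ?_)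
    ring

/-- If all derivatives of order `< k` vanish at `0`, the function is bounded by the Lagrange form
of the Taylor remainder. -/
lemma taylor_bound (k : ℕ) : ∀ (f : ℕ → ℝ → ℝ) (T B : ℝ),
    (∀ j, ∀ t ∈ Icc 0 T, HasDerivAt (f j) (f (j + 1) t) t) → (∀ j, f j 0 = 0) →
    (∀ t ∈ Icc 0 T, |f k t| ≤ B) → ∀ t ∈ Icc 0 T, |f 0 t| ≤ B * (t ^ k / k.factorial) := by
  induction k with
  | zero =>
    intro f T B _ _ hB t ht
    simpa using hB t ht
  | succ k ih =>
    intro f T B hd h0 hB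
    have ih' := ih (fun j => f (j + 1)) T B (fun j => hd (j + 1)) (fun j => h0 (j + 1)) hB
    have hder : ∀ x : ℝ, HasDerivAt (fun x : ℝ => B * (x ^ (k + 1) / (k + 1).factorial))
        (B * (x ^ k / k.factorial)) x := fun x => by
      have := ((hasDerivAt_pow (k + 1) x).div_const ((k + 1).factorial : ℝ)).const_mul B
      refine this.congr_deriv ?_
      rw [Nat.factorial_succ]
      push_cast
      field_simp
    intro t ht
    have := image_norm_le_of_norm_deriv_right_le_deriv_boundary (f := f 0) (f' := f 1)
      (a := 0) (b := T) (B := fun x => B * (x ^ (k + 1) / (k + 1).factorial))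
      (B' := fun x => B * (x ^ k / k.factorial))
      (fun x hx => (hd 0 x hx).continuousAt.continuousWithinAt)
      (fun x hx => (hd 0 x (Ico_subset_Icc_self hx)).hasDerivWithinAt)
      (by simp [h0]) hder (fun x hx => ih' x (Ico_subset_Icc_self hx)) ht
    exact this

/-- The ratio between the radius on which a weakly harmonic function is defined and the length on
which its Taylor series is shown to converge. -/
def thetaC (d : ℕ) : ℝ := 1 / (6 * (gradC d + 1))

lemma thetaC_pos : 0 < thetaC d := by
  have := gradC_nonneg (d := d)
  unfold thetaC; positivity

lemma thetaC_le : thetaC d ≤ 1 / 2 := by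
  have := gradC_nonneg (d := d)
  unfold thetaC
  apply one_div_le_one_div_of_le <;> linarith

lemma WeakHarm.hasDerivAt_line {w : Euc d → ℝ} {Ω : Set (Euc d)} (hΩ : IsOpen Ω)
    (h : WeakHarm w Ω) (a e : Euc d) {t : ℝ} (ht : a + t • e ∈ Ω) :
    HasDerivAt (fun t : ℝ => w (a + t • e)) (_root_.dirD e w (a + t • e)) t := by
  have h1 : HasDerivAt (fun t : ℝ => a + t • e) e t := by
    simpa using ((hasDerivAt_id t).smul_const e).const_add a
  exact (h.hasFDerivAt hΩ ht).comp_hasDerivAt t h1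

/-- A weakly harmonic function whose derivatives along `e` all vanish at `a` vanishes on a segment
issued from `a`. -/
lemma WeakHarm.eq_zero_segment {w : Euc d → ℝ} {Ω : Set (Euc d)} (hΩ : IsOpen Ω)
    (h : WeakHarm w Ω) {e : Euc d} (he : ‖e‖ ≤ 1) {a : Euc d} {δ : ℝ} (hδ : 0 < δ)
    (ha : closedBall a δ ⊆ Ω) (h0 : ∀ k, (_root_.dirD e)^[k] w a = 0) {t : ℝ} (ht0 : 0 ≤ t)
    (ht : t ≤ thetaC d * δ) : w (a + t • e) = 0 := by
  obtain ⟨M, hM⟩ := (isCompact_closedBall a δ).exists_bound_of_continuousOn (h.cont.mono ha)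
  have hM0 : 0 ≤ M := (norm_nonneg _).trans (hM a (by simp [hδ.le]))
  have hg := gradC_nonneg (d := d)
  have hθ := thetaC_pos (d := d)
  have hin : ∀ s ∈ Icc 0 t, a + s • e ∈ closedBall a (δ / 2) := by
    intro s hs
    rw [mem_closedBall, dist_eq_norm, add_sub_cancel_left, norm_smul, Real.norm_of_nonneg hs.1]
    have := thetaC_le (d := d)
    nlinarith [hs.2, hs.1, norm_nonneg e]
  have hin' : ∀ s ∈ Icc 0 t, a + s • e ∈ Ω := fun s hs =>
    ha (closedBall_subset_closedBall (by linarith) (hin s hs))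
  have key : ∀ k : ℕ, |w (a + t • e)| ≤ M * (2 * gradC d * Real.exp 1 * thetaC d) ^ (k + 1) := by
    intro k
    have hη : 0 < δ / (2 * (k + 1 : ℕ)) := by positivity
    have e1 : δ / 2 + (k + 1 : ℕ) * (δ / (2 * (k + 1 : ℕ))) = δ := by
      have : ((k + 1 : ℕ) : ℝ) ≠ 0 := by positivity
      field_simp; ring
    have hb := h.abs_iterate_le hΩ he (a := a) (M := M) hη (k + 1) (δ / 2) (by positivity)
      (by rwa [e1]) (by rw [e1]; exact hM)
    have := taylor_bound (k + 1) (fun j s => (_root_.dirD e)^[j] w (a + s • e)) t _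
      (fun j s hs => by
        rw [Function.iterate_succ_apply']
        exact (h.iterate hΩ e j).hasDerivAt_line hΩ a e (hin' s hs))
      (fun j => by simpa using h0 j) (fun s hs => hb _ (hin s hs)) t ⟨ht0, le_rfl⟩
    refine this.trans ?_
    have e2 : ((k + 1 : ℕ) : ℝ) ^ (k + 1) / (k + 1).factorial ≤ Real.exp 1 ^ (k + 1) := by
      refine (Real.pow_div_factorial_le_exp _ (by positivity) (k + 1)).trans (le_of_eq ?_)
      rw [← Real.exp_nat_mul, mul_one]
    calc (gradC d / (δ / (2 * (k + 1 : ℕ)))) ^ (k + 1) * M * (t ^ (k + 1) / (k + 1).factorial)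
        = M * (2 * gradC d / δ * t) ^ (k + 1)
          * (((k + 1 : ℕ) : ℝ) ^ (k + 1) / (k + 1).factorial) := by
          rw [show gradC d / (δ / (2 * (k + 1 : ℕ))) = 2 * gradC d / δ * (k + 1 : ℕ) by
            field_simp, mul_pow, mul_pow]
          ring
      _ ≤ M * (2 * gradC d / δ * (thetaC d * δ)) ^ (k + 1) * Real.exp 1 ^ (k + 1) := by gcongr
      _ = _ := by
          rw [mul_assoc, ← mul_pow]
          congr 2
          field_simp
  have hq : 2 * gradC d * Real.exp 1 * thetaC d < 1 := by
    have := Real.exp_one_lt_d9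
    rw [thetaC, mul_one_div, div_lt_one (by positivity)]
    nlinarith
  have hlim := (tendsto_pow_atTop_nhds_zero_of_lt_one
    (mul_nonneg (by positivity) thetaC_pos.le) hq).comp (tendsto_add_atTop_nat 1)
  have := ge_of_tendsto' (hlim.const_mul M) key
  rw [mul_zero] at this
  exact abs_nonpos_iff.1 this

lemma iterate_dirD_congr {w w' : Euc d → ℝ} {x : Euc d} (h : w =ᶠ[𝓝 x] w') (e : Euc d) (k : ℕ) :
    (dirD e)^[k] w =ᶠ[𝓝 x] (dirD e)^[k] w' := by
  induction k with
  | zero => exact h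
  | succ k ih =>
    simp only [Function.iterate_succ_apply']
    filter_upwards [ih.fderiv (𝕜 := ℝ)] with y hy
    rw [dirD, dirD, hy]

lemma iterate_dirD_zero (e : Euc d) (k : ℕ) : (dirD e)^[k] (fun _ => (0 : ℝ)) = fun _ => 0 := by
  induction k with
  | zero => rfl
  | succ k ih =>
    rw [Function.iterate_succ_apply', ih]
    ext x
    simp [dirD]

lemma WeakHarm.eqOn_zero_of_nhds {w : Euc d → ℝ} {R : ℝ} (h : WeakHarm w (ball 0 R))
    {x₀ : Euc d} (hx₀ : x₀ ∈ ball (0 : Euc d) R) (h0 : w =ᶠ[𝓝 x₀] fun _ => 0) :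
    ∀ x ∈ ball (0 : Euc d) R, w x = 0 := by
  set u : Set (Euc d) := {x | w =ᶠ[𝓝 x] fun _ => 0} with hu
  have huo : IsOpen u := isOpen_setOfPred_eventually_nhds
  suffices hs : ball (0 : Euc d) R ⊆ u from fun x hx => (hs hx : w =ᶠ[𝓝 x] _).eq_of_nhds
  refine (convex_ball (0 : Euc d) R).isPreconnected.subset_of_closure_inter_subset huo
    ⟨x₀, hx₀, h0⟩ ?_
  rintro x ⟨hxc, hxR⟩
  obtain ⟨δ, hδ, hsub⟩ := Metric.nhds_basis_closedBall.mem_iff.1 (isOpen_ball.mem_nhds hxR)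
  have hθ := thetaC_pos (d := d)
  have hθ' := thetaC_le (d := d)
  obtain ⟨z, hz, hxz⟩ := Metric.mem_closure_iff.1 hxc (thetaC d * (δ / 2)) (by positivity)
  have hzsub : closedBall z (δ / 2) ⊆ ball 0 R := by
    refine Subset.trans (closedBall_subset_closedBall' ?_) hsub
    rw [dist_comm]
    nlinarith
  have hmem : ball z (thetaC d * (δ / 2)) ∈ 𝓝 x := isOpen_ball.mem_nhds hxz
  filter_upwards [hmem] with y hy
  by_cases hyz : y = z
  · rw [hyz]; exact (hz : w =ᶠ[𝓝 z] _).eq_of_nhds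
  have hn : 0 < ‖y - z‖ := norm_pos_iff.2 (sub_ne_zero.2 hyz)
  have e1 : z + ‖y - z‖ • (‖y - z‖⁻¹ • (y - z)) = y := by
    rw [smul_smul, mul_inv_cancel₀ hn.ne', one_smul, add_sub_cancel]
  rw [← e1]
  refine h.eq_zero_segment isOpen_ball ?_ (half_pos hδ) hzsub (fun k => ?_) hn.le ?_
  · rw [norm_smul, norm_inv, norm_norm, inv_mul_cancel₀ hn.ne']
  · rw [(iterate_dirD_congr hz _ k).eq_of_nhds, iterate_dirD_zero]
  · rw [mem_ball, dist_eq_norm] at hy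
    exact hy.le

/-- Tangential derivatives vanish where the function vanishes on the hyperplane. -/
lemma WeakHarm.dirD_flat {w : Euc d → ℝ} {R r : ℝ} (h : WeakHarm w (ball 0 R)) (hr : r ≤ R)
    {i₀ i : Fin d} (hi : i ≠ i₀) (h0 : ∀ x ∈ ball (0 : Euc d) r, x i₀ = 0 → w x = 0)
    {x : Euc d} (hx : x ∈ ball (0 : Euc d) r) (hx0 : x i₀ = 0) :
    _root_.dirD (bvec i) w x = 0 := by
  have h1 := h.hasDerivAt_line isOpen_ball x (bvec i) (t := 0)
    (by simpa using (mem_ball_zero_iff.1 hx).trans_le hr)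
  have hc : Tendsto (fun t : ℝ => x + t • bvec i) (𝓝 0) (𝓝 x) := by
    have : Continuous fun t : ℝ => x + t • bvec i := by fun_prop
    simpa using this.tendsto 0
  have h2 : (fun t : ℝ => w (x + t • bvec i)) =ᶠ[𝓝 0] fun _ => 0 := by
    filter_upwards [hc.eventually (isOpen_ball.mem_nhds hx)] with t ht
    exact h0 _ ht (by simp [hx0, bvec_apply, hi.symm])
  have h3 := (h1.congr_of_eventuallyEq h2.symm).unique (hasDerivAt_const (0:ℝ) (0:ℝ))
  simpa using h3

/-- Uniqueness in the Cauchy problem: a weakly harmonic function with zero Cauchy data on a piece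
of the hyperplane vanishes identically. By the equation all normal derivatives vanish there. -/
lemma WeakHarm.eq_zero_of_cauchy {w : Euc d → ℝ} {R r : ℝ} (h : WeakHarm w (ball 0 R))
    (hr0 : 0 < r) (hr : r ≤ R) (i₀ : Fin d)
    (h0 : ∀ x ∈ ball (0 : Euc d) r, x i₀ = 0 → w x = 0)
    (h1 : ∀ x ∈ ball (0 : Euc d) r, x i₀ = 0 → _root_.dirD (bvec i₀) w x = 0) :
    ∀ x ∈ ball (0 : Euc d) R, w x = 0 := by
  have hall : ∀ k : ℕ, ∀ x ∈ ball (0 : Euc d) r, x i₀ = 0 →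
      (_root_.dirD (bvec i₀))^[k] w x = 0 ∧ (_root_.dirD (bvec i₀))^[k + 1] w x = 0 := by
    intro k
    induction k with
    | zero => exact fun x hx hx0 => ⟨h0 x hx hx0, h1 x hx hx0⟩
    | succ k ih =>
      intro x hx hx0
      refine ⟨(ih x hx hx0).2, ?_⟩
      have hk := h.iterate isOpen_ball (bvec i₀) k
      have hlap := hk.lap_eq_zero isOpen_ball (ball_subset_ball hr hx)
      rw [lap, Finset.sum_eq_single i₀] at hlap
      · simpa only [Function.iterate_succ_apply'] using hlap
      · intro i _ hi
        exact (hk.dirD' isOpen_ball (bvec i)).dirD_flat hr hi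
          (fun y hy hy0 => hk.dirD_flat hr hi (fun z hz hz0 => (ih z hz hz0).1) hy hy0) hx hx0
      · simp
  have hθ := thetaC_pos (d := d)
  have hθ' := thetaC_le (d := d)
  set s := thetaC d * r / 8 with hs
  have hs0 : 0 < s := by positivity
  have hsr : 2 * s ≤ r / 8 := by rw [hs]; nlinarith
  refine h.eqOn_zero_of_nhds (x₀ := s • bvec i₀) ?_ ?_
  · rw [mem_ball_zero_iff, norm_smul, norm_bvec, mul_one, Real.norm_of_nonneg hs0.le]
    linarith
  filter_upwards [isOpen_ball.mem_nhds (mem_ball_self (x := s • bvec i₀) hs0)] with y hy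
  rw [mem_ball, dist_eq_norm] at hy
  have hc := (PiLp.norm_apply_le (y - s • bvec i₀) i₀).trans_lt hy
  simp only [PiLp.sub_apply, PiLp.smul_apply, bvec_apply, if_true, smul_eq_mul, mul_one,
    Real.norm_eq_abs, abs_lt] at hc
  have hyn : ‖y‖ < 2 * s := by
    have := norm_add_le (y - s • bvec i₀) (s • bvec i₀)
    rw [sub_add_cancel, norm_smul, norm_bvec, mul_one, Real.norm_of_nonneg hs0.le] at this
    linarith
  set a := y - y i₀ • bvec i₀ with ha
  have ha0 : a i₀ = 0 := by simp [ha, bvec_apply]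
  have han : ‖a‖ < r / 2 := by
    have := norm_sub_le y (y i₀ • bvec i₀)
    rw [norm_smul, norm_bvec, mul_one, Real.norm_eq_abs, abs_of_pos (by linarith)] at this
    linarith
  have e1 : y = a + y i₀ • bvec i₀ := by simp [ha]
  rw [e1]
  refine h.eq_zero_segment isOpen_ball (norm_bvec i₀).le (half_pos hr0) ?_
    (fun k => (hall k a ?_ ha0).1) (by linarith) ?_
  · refine Subset.trans (closedBall_subset_ball' ?_) (ball_subset_ball hr)
    rw [dist_zero_right]
    linarith
  · rw [mem_ball_zero_iff]; linarith
  · have : thetaC d * (r / 2) = 4 * s := by rw [hs]; ring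
    linarith

/-! ### A trace estimate on the sphere with respect to the Hausdorff measure -/

section trace

variable {n : ℕ}

/-- Insertion of the `i`-th coordinate. -/
def ins (i : Fin (n + 1)) (t : ℝ) (y : Fin n → ℝ) : Euc (n + 1) :=
  WithLp.toLp 2 (i.insertNth t y : Fin (n + 1) → ℝ)

/-- The projection forgetting the `i`-th coordinate. -/
def prj (i : Fin (n + 1)) (x : Euc (n + 1)) : Fin n → ℝ := fun j => x (i.succAbove j)

lemma ins_apply_same (i : Fin (n + 1)) (t : ℝ) (y : Fin n → ℝ) : ins i t y i = t := by
  simp [ins]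

lemma ins_apply_succAbove (i : Fin (n + 1)) (t : ℝ) (y : Fin n → ℝ) (j : Fin n) :
    ins i t y (i.succAbove j) = y j := by
  simp [ins]

lemma prj_ins (i : Fin (n + 1)) (t : ℝ) (y : Fin n → ℝ) : prj i (ins i t y) = y := by
  ext j; exact ins_apply_succAbove i t y j

lemma ins_prj (i : Fin (n + 1)) (x : Euc (n + 1)) : ins i (x i) (prj i x) = x := by
  ext j
  rcases Fin.eq_self_or_eq_succAbove i j with rfl | ⟨j, rfl⟩
  · exact ins_apply_same _ _ _
  · exact ins_apply_succAbove _ _ _ _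

lemma ins_sub (i : Fin (n + 1)) (t s : ℝ) (y : Fin n → ℝ) :
    ins i (t - s) y = ins i t y + (-s) • bvec i := by
  ext j
  rcases Fin.eq_self_or_eq_succAbove i j with rfl | ⟨j, rfl⟩
  · simp [ins_apply_same, bvec_apply, sub_eq_add_neg]
  · simp [ins_apply_succAbove, bvec_apply]

lemma norm_sq_eq (i : Fin (n + 1)) (x : Euc (n + 1)) :
    ‖x‖ ^ 2 = x i ^ 2 + ∑ j, prj i x j ^ 2 := by
  rw [EuclideanSpace.norm_sq_eq, Fin.sum_univ_succAbove _ i]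
  simp [prj]

lemma continuous_ins (i : Fin (n + 1)) : Continuous fun p : ℝ × (Fin n → ℝ) => ins i p.1 p.2 := by
  unfold ins
  refine (PiLp.continuous_toLp 2 _).comp ?_
  refine continuous_pi fun j => ?_
  rcases Fin.eq_self_or_eq_succAbove i j with rfl | ⟨j, rfl⟩
  · simpa using continuous_fst
  · simp only [Fin.insertNth_apply_succAbove]
    fun_prop

/-- The part of the sphere of radius `1/2` lying above (`σ = 1`) or below (`σ = -1`) the `i`-th
coordinate hyperplane by at least `κ`. -/
def piece (i : Fin (n + 1)) (σ κ : ℝ) : Set (Euc (n + 1)) := {x | ‖x‖ = 1 / 2 ∧ κ ≤ σ * x i}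

/-- The graph parametrization of `piece i σ κ`. -/
def graphG (i : Fin (n + 1)) (σ : ℝ) (y : Fin n → ℝ) : Euc (n + 1) :=
  ins i (σ * √(1 / 4 - ∑ j, y j ^ 2)) y

lemma continuous_graphG (i : Fin (n + 1)) (σ : ℝ) : Continuous (graphG i σ) := by
  unfold graphG
  exact (continuous_ins i).comp (Continuous.prodMk (by fun_prop) continuous_id)

lemma continuous_prj (i : Fin (n + 1)) : Continuous (prj i) := by
  unfold prj; fun_prop

lemma isClosed_piece (i : Fin (n + 1)) (σ κ : ℝ) : IsClosed (piece i σ κ) :=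
  (isClosed_eq continuous_norm continuous_const).inter
    (isClosed_le continuous_const (continuous_const.mul (continuous_coord i)))

lemma isCompact_piece (i : Fin (n + 1)) (σ κ : ℝ) : IsCompact (piece i σ κ) :=
  (isCompact_closedBall (0 : Euc (n + 1)) (1 / 2)).of_isClosed_subset (isClosed_piece i σ κ)
    fun x hx => by rw [mem_closedBall_zero_iff]; exact hx.1.le

lemma graphG_prj {i : Fin (n + 1)} {σ κ : ℝ} (hσ : σ = 1 ∨ σ = -1) (hκ : 0 < κ)
    {x : Euc (n + 1)} (hx : x ∈ piece i σ κ) : graphG i σ (prj i x) = x := by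
  have h1 := norm_sq_eq i x
  rw [hx.1] at h1
  have h2 : 1 / 4 - ∑ j, prj i x j ^ 2 = x i ^ 2 := by linarith
  have h3 : σ * |x i| = x i := by
    have h4 := hκ.trans_le hx.2
    rcases hσ with rfl | rfl
    · rw [abs_of_pos (by linarith), one_mul]
    · rw [abs_of_neg (by linarith)]; ring
  rw [graphG, h2, Real.sqrt_sq_eq_abs, h3, ins_prj]

lemma dist_le_prj {i : Fin (n + 1)} {σ κ : ℝ} (hσ : σ = 1 ∨ σ = -1) (hκ : 0 < κ)
    {x z : Euc (n + 1)} (hx : x ∈ piece i σ κ) (hz : z ∈ piece i σ κ) :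
    dist x z ≤ (n / (2 * κ) + n) * dist (prj i x) (prj i z) := by
  set D := dist (prj i x) (prj i z) with hD
  have hD0 : 0 ≤ D := dist_nonneg
  have hj : ∀ j, |prj i x j - prj i z j| ≤ D := fun j => by
    rw [← Real.dist_eq]; exact dist_le_pi_dist _ _ j
  have hb : ∀ w : Euc (n + 1), w ∈ piece i σ κ → ∀ j, |prj i w j| ≤ 1 / 2 := fun w hw j => by
    rw [← hw.1, ← Real.norm_eq_abs]; exact PiLp.norm_apply_le w _
  have h1 := norm_sq_eq i x
  have h2 := norm_sq_eq i z
  rw [hx.1] at h1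
  rw [hz.1] at h2
  have h3 : |x i - z i| * |x i + z i| ≤ n * D := by
    rw [← abs_mul]
    have : (x i - z i) * (x i + z i)
        = ∑ j, (prj i z j - prj i x j) * (prj i z j + prj i x j) := by
      have : ∑ j, (prj i z j - prj i x j) * (prj i z j + prj i x j)
          = ∑ j, prj i z j ^ 2 - ∑ j, prj i x j ^ 2 := by
        rw [← Finset.sum_sub_distrib]
        exact Finset.sum_congr rfl fun j _ => by ring
      rw [this]; linarith
    rw [this]
    refine (Finset.abs_sum_le_sum_abs _ _).trans ?_
    refine (Finset.sum_le_card_nsmul _ _ D fun j _ => ?_).trans (by simp)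
    rw [abs_mul, abs_sub_comm]
    have h5 : |prj i z j + prj i x j| ≤ 1 :=
      (abs_add_le _ _).trans (by linarith [hb x hx j, hb z hz j])
    calc _ ≤ D * 1 := mul_le_mul (hj j) h5 (abs_nonneg _) hD0
      _ = D := mul_one D
  have h4 : 2 * κ ≤ |x i + z i| := by
    have := hx.2
    have := hz.2
    rcases hσ with rfl | rfl
    · exact (by linarith : 2 * κ ≤ x i + z i).trans (le_abs_self _)
    · exact (by linarith : 2 * κ ≤ -(x i + z i)).trans (neg_le_abs _)
  have h5 : |x i - z i| ≤ n * D / (2 * κ) := by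
    rw [le_div_iff₀ (by positivity)]
    exact (mul_le_mul_of_nonneg_left h4 (abs_nonneg _)).trans h3
  have h6 : dist x z ≤ ∑ j, |x j - z j| := by
    rw [EuclideanSpace.dist_eq]
    refine (Real.sqrt_le_sqrt (Finset.sum_sq_le_sq_sum_of_nonneg fun j _ => dist_nonneg)).trans ?_
    rw [Real.sqrt_sq (Finset.sum_nonneg fun j _ => dist_nonneg)]
    simp [Real.dist_eq]
  refine h6.trans ?_
  rw [Fin.sum_univ_succAbove _ i]
  have h7 : ∑ j, |x (i.succAbove j) - z (i.succAbove j)| ≤ n * D :=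
    (Finset.sum_le_card_nsmul _ _ D fun j _ => hj j).trans (by simp)
  calc _ ≤ n * D / (2 * κ) + n * D := add_le_add h5 h7
    _ = _ := by ring

/-- The Lipschitz constant of the graph parametrization. -/
def lipK (n : ℕ) (κ : ℝ) : ℝ≥0 := Real.toNNReal (n / (2 * κ) + n)

lemma hausdorff_piece_le {i : Fin (n + 1)} {σ κ : ℝ} (hσ : σ = 1 ∨ σ = -1) (hκ : 0 < κ) :
    (μH[(n : ℝ)]).restrict (piece i σ κ) ≤
      ((lipK n κ : ℝ≥0∞) ^ (n : ℝ)) •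
        (volume.restrict (prj i '' piece i σ κ)).map (graphG i σ) := by
  have hlip : LipschitzOnWith (lipK n κ) (graphG i σ) (prj i '' piece i σ κ) := by
    refine LipschitzOnWith.of_dist_le_mul ?_
    rintro _ ⟨x, hx, rfl⟩ _ ⟨z, hz, rfl⟩
    rw [graphG_prj hσ hκ hx, graphG_prj hσ hκ hz, lipK, Real.coe_toNNReal _ (by positivity)]
    exact dist_le_prj hσ hκ hx hz
  refine Measure.le_iff.2 fun T hT => ?_
  rw [Measure.restrict_apply hT, Measure.smul_apply,
    Measure.map_apply (continuous_graphG i σ).measurable hT, smul_eq_mul,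
    Measure.restrict_apply ((continuous_graphG i σ).measurable hT)]
  have h1 : T ∩ piece i σ κ ⊆ graphG i σ '' (graphG i σ ⁻¹' T ∩ prj i '' piece i σ κ) := by
    rintro x ⟨hxT, hx⟩
    have := graphG_prj hσ hκ hx
    exact ⟨prj i x, ⟨by rwa [mem_preimage, this], x, hx, rfl⟩, this⟩
  refine (measure_mono h1).trans ?_
  refine ((hlip.mono inter_subset_right).hausdorffMeasure_image_le (Nat.cast_nonneg n)).trans ?_
  have := hausdorffMeasure_pi_real (ι := Fin n)
  rw [Fintype.card_fin] at this
  rw [this]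

lemma lintegral_piece_le {i : Fin (n + 1)} {σ κ : ℝ} (hσ : σ = 1 ∨ σ = -1) (hκ : 0 < κ)
    (f : Euc (n + 1) → ℝ≥0∞) :
    ∫⁻ x in piece i σ κ, f x ∂μH[(n : ℝ)] ≤ (lipK n κ : ℝ≥0∞) ^ (n : ℝ) *
      ∫⁻ y in prj i '' piece i σ κ, f (graphG i σ y) := by
  refine (lintegral_mono' (hausdorff_piece_le hσ hκ) le_rfl).trans ?_
  rw [lintegral_smul_measure, smul_eq_mul]
  gcongr
  exact lintegral_map_le _ _

lemma sq_integral_le {h : ℝ → ℝ} {s : ℝ} (hs : 0 < s) (hc : ContinuousOn h (Icc 0 s)) :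
    (∫ t in (0:ℝ)..s, h t) ^ 2 ≤ s * ∫ t in (0:ℝ)..s, h t ^ 2 := by
  set I := ∫ t in (0:ℝ)..s, h t with hI
  have hu : uIcc 0 s = Icc 0 s := uIcc_of_le hs.le
  have i1 : IntervalIntegrable h volume 0 s := by
    apply ContinuousOn.intervalIntegrable; rwa [hu]
  have i2 : IntervalIntegrable (fun t => h t ^ 2) volume 0 s := by
    apply ContinuousOn.intervalIntegrable; rw [hu]; exact hc.pow 2
  have h0 : 0 ≤ ∫ t in (0:ℝ)..s, (h t - I / s) ^ 2 :=
    intervalIntegral.integral_nonneg hs.le fun t _ => sq_nonneg _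
  have e1 : ∫ t in (0:ℝ)..s, (h t - I / s) ^ 2
      = (∫ t in (0:ℝ)..s, h t ^ 2) - 2 * (I / s) * I + s * (I / s) ^ 2 := by
    have : ∀ t, (h t - I / s) ^ 2 = h t ^ 2 - 2 * (I / s) * h t + (I / s) ^ 2 := fun t => by ring
    simp only [this]
    rw [intervalIntegral.integral_add (i2.sub (i1.const_mul _)) (by simp),
      intervalIntegral.integral_sub i2 (i1.const_mul _), intervalIntegral.integral_const_mul,
      intervalIntegral.integral_const, ← hI, sub_zero, smul_eq_mul]
  rw [e1] at h0
  have : (∫ t in (0:ℝ)..s, h t ^ 2) - 2 * (I / s) * I + s * (I / s) ^ 2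
    = (∫ t in (0:ℝ)..s, h t ^ 2) - I ^ 2 / s := by field_simp; ring
  rw [this, sub_nonneg, div_le_iff₀ hs] at h0
  linarith

/-- Fubini and translation invariance along the `i`-th coordinate. -/
lemma lintegral_graph_shift (i : Fin (n + 1)) {σ : ℝ} (hσ : σ = 1 ∨ σ = -1)
    {F : Euc (n + 1) → ℝ≥0∞} (hF : Measurable F) (a : (Fin n → ℝ) → ℝ) :
    ∫⁻ y : Fin n → ℝ, ∫⁻ t : ℝ, F (ins i (σ * a y - σ * t) y) = ∫⁻ x, F x := by
  have h1 : ∀ y : Fin n → ℝ, ∫⁻ t : ℝ, F (ins i (σ * a y - σ * t) y)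
      = ∫⁻ t : ℝ, F (ins i t y) := by
    intro y
    rcases hσ with rfl | rfl
    · simp only [one_mul]
      exact lintegral_sub_left_eq_self (fun t => F (ins i t y)) (a y)
    · have : ∀ t, (-1 : ℝ) * a y - -1 * t = t - a y := fun t => by ring
      simp only [this]
      exact lintegral_sub_right_eq_self (fun t => F (ins i t y)) (a y)
  simp only [h1]
  have hm : Measurable fun p : ℝ × (Fin n → ℝ) => F (ins i p.1 p.2) :=
    hF.comp (continuous_ins i).measurable
  rw [← lintegral_prod_symm' _ hm]
  have h2 := (volume_preserving_piFinSuccAbove (fun _ : Fin (n + 1) => ℝ) i).symm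
  have h3 := PiLp.volume_preserving_toLp (Fin (n + 1))
  rw [← h3.lintegral_comp hF]
  exact h2.lintegral_comp (f := fun a => F (WithLp.toLp 2 a)) (hF.comp h3.measurable)

end trace

section trace2

variable {n : ℕ}

/-- The squared gradient, cut off outside the ball of radius `1/2`. -/
def gradSq (U : Euc d → ℝ) : Euc d → ℝ≥0∞ :=
  (ball 0 (1 / 2)).indicator fun x => ENNReal.ofReal (‖fderiv ℝ U x‖ ^ 2)

lemma WeakHarm.continuousOn_fderiv {U : Euc d → ℝ} {Ω : Set (Euc d)} (hΩ : IsOpen Ω)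
    (hU : WeakHarm U Ω) : ContinuousOn (fun x => fderiv ℝ U x) Ω :=
  (hU.contDiffOn_one hΩ).continuousOn_fderiv_of_isOpen hΩ le_rfl

lemma measurable_gradSq {U : Euc d → ℝ} (hU : WeakHarm U (ball 0 1)) :
    Measurable (gradSq U) := by
  have hc : ContinuousOn (fun x => ENNReal.ofReal (‖fderiv ℝ U x‖ ^ 2)) (ball 0 (1 / 2)) :=
    ENNReal.continuous_ofReal.comp_continuousOn
      (((hU.continuousOn_fderiv isOpen_ball).mono
        (ball_subset_ball (by norm_num))).norm.pow 2)
  classical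
  have := hc.measurable_piecewise (g := 0) continuousOn_const
    (isOpen_ball (x := (0 : Euc d)) (ε := 1 / 2)).measurableSet
  rwa [piecewise_eq_indicator] at this

lemma norm_sq_piece {i : Fin (n + 1)} {σ κ : ℝ} (hσ : σ = 1 ∨ σ = -1)
    {x : Euc (n + 1)} (hx : x ∈ piece i σ κ) {t : ℝ} (ht : 0 ≤ t) (htκ : t ≤ κ) :
    ‖x + t • (-σ • bvec i)‖ ^ 2 ≤ 1 / 4 - t * κ := by
  have hb : ‖(bvec i : Euc (n + 1))‖ = 1 := norm_bvec i
  have hi : inner ℝ x (bvec i) = x i := by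
    rw [bvec, EuclideanSpace.inner_single_right]; simp
  rw [norm_add_sq_real, inner_smul_right, inner_smul_right, hi, hx.1, norm_smul, norm_smul, hb]
  have h2 := hx.2
  have hs : ‖-σ‖ = 1 := by rcases hσ with rfl | rfl <;> simp
  rw [hs, Real.norm_eq_abs, mul_one, mul_one, sq_abs]
  nlinarith [mul_le_mul_of_nonneg_left h2 ht]

lemma trace_point {i : Fin (n + 1)} {σ κ s m : ℝ} (hσ : σ = 1 ∨ σ = -1) (hκ : 0 < κ)
    (hs : 0 < s) (hsκ : s ≤ κ) {U : Euc (n + 1) → ℝ} (hU : WeakHarm U (ball 0 1))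
    (hm : ∀ y, ‖y‖ ^ 2 ≤ 1 / 4 - s * κ → |U y| ≤ m) {y : Fin n → ℝ}
    (hy : y ∈ prj i '' piece i σ κ) :
    ENNReal.ofReal (U (graphG i σ y) ^ 2) ≤ ENNReal.ofReal (2 * m ^ 2) +
      ENNReal.ofReal (2 * s) *
        ∫⁻ t, gradSq U (ins i (σ * √(1 / 4 - ∑ j, y j ^ 2) - σ * t) y) := by
  obtain ⟨x, hx, rfl⟩ := hy
  have hG := graphG_prj hσ hκ hx
  have hpt : ∀ t, ins i (σ * √(1 / 4 - ∑ j, prj i x j ^ 2) - σ * t) (prj i x)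
      = x + t • (-σ • bvec i) := fun t => by
    rw [ins_sub]
    change graphG i σ (prj i x) + _ = _
    rw [hG, smul_smul]
    congr 2; ring
  simp only [hpt]
  rw [hG]
  set e : Euc (n + 1) := -σ • bvec i with he
  have hen : ‖e‖ = 1 := by
    rw [he, norm_smul, norm_bvec]
    rcases hσ with rfl | rfl <;> simp
  have hmem : ∀ t, 0 ≤ t → t ≤ s → x + t • e ∈ ball (0 : Euc (n + 1)) 1 := fun t h0 h1 => by
    have := norm_sq_piece hσ hx h0 (h1.trans hsκ)
    rw [mem_ball_zero_iff]
    nlinarith [norm_nonneg (x + t • e), mul_nonneg h0 hκ.le]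
  have hmem' : ∀ t, 0 < t → t ≤ s → x + t • e ∈ ball (0 : Euc (n + 1)) (1 / 2) :=
    fun t h0 h1 => by
      have := norm_sq_piece hσ hx h0.le (h1.trans hsκ)
      rw [mem_ball_zero_iff]
      nlinarith [norm_nonneg (x + t • e), mul_pos h0 hκ]
  have hd : ∀ t ∈ Icc 0 s, HasDerivAt (fun t => U (x + t • e)) (dirD e U (x + t • e)) t :=
    fun t ht => hU.hasDerivAt_line isOpen_ball x e (hmem t ht.1 ht.2)
  have hc : ContinuousOn (fun t : ℝ => dirD e U (x + t • e)) (Icc 0 s) := by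
    refine ContinuousOn.comp (t := ball 0 1) (g := dirD e U)
      (continuousOn_dirD isOpen_ball (hU.contDiffOn_one isOpen_ball) e) (by fun_prop)
      fun t ht => hmem t ht.1 ht.2
  have hu : uIcc 0 s = Icc 0 s := uIcc_of_le hs.le
  have hftc : ∫ t in (0:ℝ)..s, dirD e U (x + t • e) = U (x + s • e) - U x := by
    rw [intervalIntegral.integral_eq_sub_of_hasDerivAt (f := fun t : ℝ => U (x + t • e))]
    · simp
    · rwa [hu]
    · apply ContinuousOn.intervalIntegrable; rwa [hu]
  have hsq := sq_integral_le hs hc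
  rw [hftc] at hsq
  have hend : |U (x + s • e)| ≤ m := hm _ (norm_sq_piece hσ hx hs.le hsκ)
  have hend2 : U (x + s • e) ^ 2 ≤ m ^ 2 := by
    rw [← sq_abs]; exact pow_le_pow_left₀ (abs_nonneg _) hend 2
  have hmain : U x ^ 2 ≤ 2 * m ^ 2 + 2 * s * ∫ t in (0:ℝ)..s, dirD e U (x + t • e) ^ 2 := by
    nlinarith [sq_nonneg (U (x + s • e) + (U (x + s • e) - U x))]
  have hInt0 : 0 ≤ ∫ t in (0:ℝ)..s, dirD e U (x + t • e) ^ 2 :=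
    intervalIntegral.integral_nonneg hs.le fun t _ => sq_nonneg _
  refine (ENNReal.ofReal_le_ofReal hmain).trans ?_
  rw [ENNReal.ofReal_add (by positivity) (by positivity), ENNReal.ofReal_mul (p := 2 * s) (by positivity)]
  gcongr
  have hion : IntegrableOn (fun t : ℝ => dirD e U (x + t • e) ^ 2) (Ioc 0 s) :=
    ((hc.pow 2).integrableOn_Icc).mono_set Ioc_subset_Icc_self
  rw [intervalIntegral.integral_of_le hs.le, ofReal_integral_eq_lintegral_ofReal
    hion
    (Eventually.of_forall fun t => sq_nonneg _)]
  refine (setLIntegral_mono' measurableSet_Ioc fun t ht => ?_).trans (setLIntegral_le_lintegral (Ioc 0 s) _)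
  rw [gradSq, indicator_of_mem (hmem' t ht.1 ht.2)]
  apply ENNReal.ofReal_le_ofReal
  rw [← sq_abs]
  refine pow_le_pow_left₀ (abs_nonneg _) ?_ 2
  have := (fderiv ℝ U (x + t • e)).le_opNorm e
  rwa [hen, mul_one] at this

lemma volume_prj_piece_lt_top (i : Fin (n + 1)) (σ κ : ℝ) :
    volume (prj i '' piece i σ κ) < ⊤ :=
  ((isCompact_piece i σ κ).image (continuous_prj i)).measure_lt_top

/-- The constant in the trace estimate on one graph piece. -/
def pieceC (n : ℕ) (i : Fin (n + 1)) (σ κ : ℝ) : ℝ≥0∞ :=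
  (lipK n κ : ℝ≥0∞) ^ (n : ℝ) * (2 * volume (prj i '' piece i σ κ) + 2)

lemma pieceC_lt_top (i : Fin (n + 1)) (σ κ : ℝ) : pieceC n i σ κ < ⊤ := by
  refine ENNReal.mul_lt_top (ENNReal.rpow_lt_top_of_nonneg (Nat.cast_nonneg n) ENNReal.coe_ne_top)
    (ENNReal.add_lt_top.2 ⟨ENNReal.mul_lt_top (by simp) (volume_prj_piece_lt_top i σ κ), by simp⟩)

lemma trace_piece {i : Fin (n + 1)} {σ κ s m : ℝ} (hσ : σ = 1 ∨ σ = -1) (hκ : 0 < κ)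
    (hs : 0 < s) (hsκ : s ≤ κ) {U : Euc (n + 1) → ℝ} (hU : WeakHarm U (ball 0 1))
    (hm : ∀ y, ‖y‖ ^ 2 ≤ 1 / 4 - s * κ → |U y| ≤ m) :
    ∫⁻ x in piece i σ κ, ENNReal.ofReal (U x ^ 2) ∂μH[(n : ℝ)] ≤ pieceC n i σ κ *
      (ENNReal.ofReal (m ^ 2) + ENNReal.ofReal s * ∫⁻ x, gradSq U x) := by
  refine (lintegral_piece_le hσ hκ _).trans ?_
  rw [pieceC, mul_assoc]
  refine mul_le_mul_right ?_ _
  have hmeas : MeasurableSet (prj i '' piece i σ κ) :=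
    ((isCompact_piece i σ κ).image (continuous_prj i)).measurableSet
  refine (setLIntegral_mono' hmeas fun y hy => trace_point hσ hκ hs hsκ hU hm hy).trans ?_
  rw [lintegral_add_left measurable_const, lintegral_const_mul' _ _ ENNReal.ofReal_ne_top,
    setLIntegral_const]
  have h1 := (setLIntegral_le_lintegral (μ := volume) (prj i '' piece i σ κ) fun y =>
    ∫⁻ t, gradSq U (ins i (σ * √(1 / 4 - ∑ j, y j ^ 2) - σ * t) y)).trans_eq
    (lintegral_graph_shift i hσ (measurable_gradSq hU) fun y => √(1 / 4 - ∑ j, y j ^ 2))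
  rw [ENNReal.ofReal_mul (by norm_num), ENNReal.ofReal_mul (by norm_num), ENNReal.ofReal_ofNat]
  set A := ENNReal.ofReal (m ^ 2)
  set B := ENNReal.ofReal s
  set V := volume (prj i '' piece i σ κ)
  set L := ∫⁻ x, gradSq U x
  calc 2 * A * V + 2 * B * _ ≤ 2 * A * V + 2 * B * L := by gcongr
    _ ≤ (2 * V + 2) * A + (2 * V + 2) * (B * L) := by
      refine add_le_add ?_ ?_
      · rw [mul_right_comm]; gcongr; exact le_self_add
      · rw [mul_assoc]; gcongr; exact le_add_self
    _ = _ := by rw [mul_add]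

lemma sphere_subset_pieces (n : ℕ) : sphere (0 : Euc (n + 1)) (1 / 2) ⊆
    ⋃ p : Fin (n + 1) × Bool, piece p.1 (if p.2 then 1 else -1) (1 / (2 * (n + 1))) := by
  intro x hx
  rw [mem_sphere_zero_iff_norm] at hx
  by_contra hcon
  simp only [mem_iUnion, Prod.exists, not_exists] at hcon
  have hlt : ∀ i, |x i| < 1 / (2 * (n + 1)) := fun i => by
    have h1 := hcon i true
    have h2 := hcon i false
    simp only [piece, mem_ofPred_eq, hx, true_and, if_true, Bool.false_eq_true, if_false, not_le] at h1 h2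
    rw [abs_lt]; constructor <;> linarith
  have h1 : ‖x‖ ^ 2 ≤ (n + 1) * (1 / (2 * (n + 1))) ^ 2 := by
    rw [EuclideanSpace.norm_sq_eq]
    refine (Finset.sum_le_card_nsmul _ _ ((1 / (2 * ((n : ℝ) + 1))) ^ 2) fun j _ => ?_).trans (by simp)
    exact pow_le_pow_left₀ (norm_nonneg _) (hlt j).le 2
  have h3 : ((n : ℝ) + 1) * (1 / (2 * (n + 1))) ^ 2 = 1 / (4 * (n + 1)) := by field_simp; norm_num
  rw [h3, hx] at h1
  rcases Nat.eq_zero_or_pos n with h0 | h0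
  · subst h0
    have h4 := hlt 0
    have h5 : ‖x‖ ^ 2 = x 0 ^ 2 := by rw [EuclideanSpace.norm_sq_eq]; simp
    rw [hx, ← sq_abs (x 0)] at h5
    norm_num at h4
    nlinarith [abs_nonneg (x 0)]
  · have h4 : (1 : ℝ) ≤ n := by exact_mod_cast h0
    rw [le_div_iff₀ (by positivity)] at h1
    nlinarith

lemma lintegral_sphere_le (f : Euc (n + 1) → ℝ≥0∞) :
    ∫⁻ x in sphere (0 : Euc (n + 1)) (1 / 2), f x ∂μH[(n : ℝ)] ≤
      ∑ p : Fin (n + 1) × Bool,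
        ∫⁻ x in piece p.1 (if p.2 then 1 else -1) (1 / (2 * (n + 1))), f x ∂μH[(n : ℝ)] := by
  refine (lintegral_mono_set (sphere_subset_pieces n)).trans ?_
  refine (lintegral_iUnion_le _ _).trans_eq ?_
  rw [tsum_fintype]

/-- The constant in the trace estimate. -/
def traceC (n : ℕ) : ℝ≥0∞ :=
  ∑ p : Fin (n + 1) × Bool, pieceC n p.1 (if p.2 then 1 else -1) (1 / (2 * (n + 1)))

lemma traceC_lt_top (n : ℕ) : traceC n < ⊤ :=
  ENNReal.sum_lt_top.2 fun _ _ => pieceC_lt_top _ _ _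

lemma sign_cases (b : Bool) : (if b then (1 : ℝ) else -1) = 1 ∨ (if b then (1 : ℝ) else -1) = -1 := by
  cases b <;> simp

/-- Trace estimate: the mass of `U²` on the sphere of radius `1/2` is controlled by the maximum of
`U` on a slightly smaller ball and a small multiple of the Dirichlet energy. -/
lemma trace_estimate {s m : ℝ} (hs : 0 < s) (hs1 : s ≤ 1 / (2 * (n + 1)))
    {U : Euc (n + 1) → ℝ} (hU : WeakHarm U (ball 0 1))
    (hm : ∀ y, ‖y‖ ^ 2 ≤ 1 / 4 - s * (1 / (2 * (n + 1))) → |U y| ≤ m) :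
    ∫⁻ x in sphere (0 : Euc (n + 1)) (1 / 2), ENNReal.ofReal (U x ^ 2) ∂μH[(n : ℝ)] ≤
      traceC n * (ENNReal.ofReal (m ^ 2) + ENNReal.ofReal s * ∫⁻ x, gradSq U x) := by
  refine (lintegral_sphere_le _).trans ?_
  rw [traceC, Finset.sum_mul]
  exact Finset.sum_le_sum fun p _ => trace_piece (sign_cases p.2) (by positivity) hs hs1 hU hm

lemma hausdorff_sphere_lt_top (n : ℕ) : μH[(n : ℝ)] (sphere (0 : Euc (n + 1)) (1 / 2)) < ⊤ := by
  rw [← setLIntegral_one]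
  refine (lintegral_sphere_le _).trans_lt (ENNReal.sum_lt_top.2 fun p _ => ?_)
  refine (lintegral_piece_le (sign_cases p.2) (by positivity) _).trans_lt ?_
  rw [setLIntegral_one]
  exact ENNReal.mul_lt_top (ENNReal.rpow_lt_top_of_nonneg (Nat.cast_nonneg n) ENNReal.coe_ne_top)
    (volume_prj_piece_lt_top _ _ _)

end trace2

/-! ### Energy and sphere mass of the odd extension -/

section energy

variable {n : ℕ}

lemma volume_flat (i₀ : Fin d) : volume {y : Euc d | y i₀ = 0} = 0 := by
  have h := Measure.addHaar_submodule (volume : Measure (Euc d))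
    (LinearMap.ker (EuclideanSpace.proj (𝕜 := ℝ) i₀ : Euc d →L[ℝ] ℝ).toLinearMap) (by
      intro h
      have : (bvec i₀ : Euc d) ∈ (⊤ : Submodule ℝ (Euc d)) := trivial
      rw [← h] at this
      simp [bvec] at this)
  convert h using 2
  ext y
  simp

lemma norm_fderiv_oddExt_flipR (i₀ : Fin d) (u : Euc d → ℝ) (y : Euc d) :
    ‖fderiv ℝ (oddExt i₀ u) (flipR i₀ y)‖ = ‖fderiv ℝ (oddExt i₀ u) y‖ := by
  have h1 : (oddExt i₀ u) ∘ (flipR i₀).toContinuousLinearEquiv = -(oddExt i₀ u) := by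
    funext z
    exact oddExt_flipR i₀ u z
  have h2 := (flipR i₀).toContinuousLinearEquiv.comp_right_fderiv (f := oddExt i₀ u) (x := y)
  rw [h1, fderiv_neg] at h2
  have h3 := ContinuousLinearMap.opNorm_comp_linearIsometryEquiv
    (fderiv ℝ (oddExt i₀ u) (flipR i₀ y)) (flipR i₀)
  rw [← h3, ← norm_neg (fderiv ℝ (oddExt i₀ u) y), h2]
  rfl

lemma norm_gradient_eq (i₀ : Fin d) {u : Euc d → ℝ} (h0 : ∀ y : Euc d, ‖y‖ ≤ 1 → y i₀ = 0 → u y = 0)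
    {y : Euc d} (hy : y ∈ halfBall d i₀ 1) : ‖gradient u y‖ = ‖fderiv ℝ (oddExt i₀ u) y‖ := by
  have h1 : oddExt i₀ u =ᶠ[𝓝 y] u := by
    filter_upwards [(isOpen_halfBall i₀ 1).mem_nhds hy] with z hz
    exact oddExt_of_nonneg h0 (mem_ball_zero_iff.1 hz.1).le hz.2.le
  rw [h1.fderiv_eq, gradient, LinearIsometryEquiv.norm_map]

lemma lintegral_gradSq_le (i₀ : Fin d) {u : Euc d → ℝ}
    (h0 : ∀ y : Euc d, ‖y‖ ≤ 1 → y i₀ = 0 → u y = 0) (hU : WeakHarm (oddExt i₀ u) (ball 0 1)) :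
    ∫⁻ x, gradSq (oddExt i₀ u) x ≤
      2 * ENNReal.ofReal (∫ y in ball (0 : Euc d) (1 / 2) ∩ halfBall d i₀ 1, ‖gradient u y‖ ^ 2) := by
  set U := oddExt i₀ u with hUdef
  set P : Set (Euc d) := {y | 0 < y i₀} with hP
  have hPo : IsOpen P := isOpen_lt continuous_const (continuous_coord i₀)
  have hflip : ∀ y, gradSq U (flipR i₀ y) = gradSq U y := fun y => by
    unfold gradSq
    by_cases hy : y ∈ ball (0 : Euc d) (1 / 2)
    · have hy' : flipR i₀ y ∈ ball (0 : Euc d) (1 / 2) := by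
        rw [mem_ball_zero_iff, LinearIsometryEquiv.norm_map]; exact mem_ball_zero_iff.1 hy
      rw [indicator_of_mem hy, indicator_of_mem hy', hUdef, norm_fderiv_oddExt_flipR]
    · have hy' : flipR i₀ y ∉ ball (0 : Euc d) (1 / 2) := by
        rw [mem_ball_zero_iff, LinearIsometryEquiv.norm_map]; exact fun h => hy (mem_ball_zero_iff.2 h)
      rw [indicator_of_notMem hy, indicator_of_notMem hy']
  have hmeas := measurable_gradSq hU
  have hae : ∀ᵐ y : Euc d, gradSq U y ≤ P.indicator (gradSq U) y
      + P.indicator (gradSq U) (flipR i₀ y) := by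
    have : ∀ᵐ y : Euc d, y i₀ ≠ 0 := by
      rw [ae_iff]; simpa using volume_flat i₀
    filter_upwards [this] with y hy
    rcases lt_or_gt_of_ne hy with h | h
    · have : flipR i₀ y ∈ P := by
        rw [hP, mem_ofPred_eq, flipR_apply_self]; linarith
      rw [indicator_of_mem this, hflip]
      exact le_add_self
    · rw [indicator_of_mem (show y ∈ P from h)]
      exact le_self_add
  refine (lintegral_mono_ae hae).trans ?_
  have hmi : Measurable (P.indicator (gradSq U)) := hmeas.indicator hPo.measurableSet
  rw [lintegral_add_left hmi, (measurePreserving_flipR i₀).lintegral_comp hmi, ← two_mul]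
  gcongr
  have hset : MeasurableSet (ball (0 : Euc d) (1 / 2) ∩ halfBall d i₀ 1) :=
    (isOpen_ball.inter (isOpen_halfBall i₀ 1)).measurableSet
  have hInt : IntegrableOn (fun y => ‖fderiv ℝ U y‖ ^ 2) (ball (0 : Euc d) (1 / 2) ∩ halfBall d i₀ 1) := by
    have hc : ContinuousOn (fun y => ‖fderiv ℝ U y‖ ^ 2) (closedBall (0 : Euc d) (1 / 2)) :=
      ((hU.continuousOn_fderiv isOpen_ball).mono (closedBall_subset_ball (by norm_num))).norm.pow 2
    exact (hc.integrableOn_compact (isCompact_closedBall _ _)).mono_set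
      (inter_subset_left.trans ball_subset_closedBall)
  have hcongr : ∫ y in ball (0 : Euc d) (1 / 2) ∩ halfBall d i₀ 1, ‖gradient u y‖ ^ 2
      = ∫ y in ball (0 : Euc d) (1 / 2) ∩ halfBall d i₀ 1, ‖fderiv ℝ U y‖ ^ 2 :=
    setIntegral_congr_fun hset fun y hy => by
      simp only [norm_gradient_eq i₀ h0 hy.2, hUdef]
  rw [hcongr, ofReal_integral_eq_lintegral_ofReal hInt (Eventually.of_forall fun _ => sq_nonneg _),
    ← lintegral_indicator hset]
  refine lintegral_mono fun y => ?_
  by_cases hy : y ∈ P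
  · rw [indicator_of_mem hy, gradSq]
    by_cases hb : y ∈ ball (0 : Euc d) (1 / 2)
    · rw [indicator_of_mem hb, indicator_of_mem
        (show y ∈ ball (0 : Euc d) (1 / 2) ∩ halfBall d i₀ 1 from
          ⟨hb, ball_subset_ball (by norm_num) hb, hy⟩)]
    · rw [indicator_of_notMem hb]; exact zero_le
  · rw [indicator_of_notMem hy]; exact zero_le

lemma lipschitz_prj (i : Fin (n + 1)) : LipschitzWith 1 (prj i) := by
  refine LipschitzWith.of_dist_le_mul fun x z => ?_
  rw [NNReal.coe_one, one_mul, dist_pi_le_iff dist_nonneg]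
  intro j
  rw [Real.dist_eq, dist_eq_norm, ← Real.norm_eq_abs]
  exact PiLp.norm_apply_le (x - z) (i.succAbove j)

lemma graphG_mem {i : Fin (n + 1)} {y : Fin n → ℝ} (hy : ∑ j, y j ^ 2 < 1 / 4) :
    ‖graphG i 1 y‖ = 1 / 2 ∧ 0 < graphG i 1 y i := by
  have h1 : 0 < 1 / 4 - ∑ j, y j ^ 2 := by linarith
  have h2 : graphG i 1 y i = √(1 / 4 - ∑ j, y j ^ 2) := by
    rw [graphG, ins_apply_same, one_mul]
  refine ⟨?_, by rw [h2]; exact Real.sqrt_pos.2 h1⟩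
  have h3 := norm_sq_eq i (graphG i 1 y)
  rw [h2, Real.sq_sqrt h1.le, graphG, prj_ins] at h3
  have h4 : ‖graphG i 1 y‖ ^ 2 = (1 / 2) ^ 2 := by rw [graphG, h3]; ring
  exact (pow_left_inj₀ (norm_nonneg _) (by norm_num) two_ne_zero).1 h4

/-- If `u` vanishes almost everywhere on the upper half-sphere of radius `1/2`, then its odd extension
vanishes in the closed ball of radius `1/2`. -/
lemma eq_zero_of_hausdorff {i₀ : Fin (n + 1)} {u : Euc (n + 1) → ℝ}
    (h0 : ∀ y : Euc (n + 1), ‖y‖ ≤ 1 → y i₀ = 0 → u y = 0)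
    (hU : WeakHarm (oddExt i₀ u) (ball 0 1))
    (hH : μH[(n : ℝ)] {x : Euc (n + 1) | ‖x‖ = 1 / 2 ∧ 0 < x i₀ ∧ u x ≠ 0} = 0)
    {x : Euc (n + 1)} (hx : ‖x‖ ≤ 1 / 2) : oddExt i₀ u x = 0 := by
  set U := oddExt i₀ u with hUdef
  set W : Set (Fin n → ℝ) := {y | ∑ j, y j ^ 2 < 1 / 4} with hW
  have hWo : IsOpen W := isOpen_lt (by fun_prop) continuous_const
  have hcont : ContinuousOn (fun y => U (graphG i₀ 1 y)) W :=
    hU.cont.comp (continuous_graphG i₀ 1).continuousOn fun y hy => by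
      rw [mem_ball_zero_iff, (graphG_mem hy).1]; norm_num
  have hopen : IsOpen (W ∩ (fun y => U (graphG i₀ 1 y)) ⁻¹' {0}ᶜ) :=
    hcont.isOpen_inter_preimage hWo isOpen_compl_singleton
  have hnull : volume (W ∩ (fun y => U (graphG i₀ 1 y)) ⁻¹' {0}ᶜ) = 0 := by
    have h1 := (lipschitz_prj i₀).hausdorffMeasure_image_le (Nat.cast_nonneg (α := ℝ) n)
      {x : Euc (n + 1) | ‖x‖ = 1 / 2 ∧ 0 < x i₀ ∧ u x ≠ 0}
    have h2 := hausdorffMeasure_pi_real (ι := Fin n)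
    rw [Fintype.card_fin] at h2
    rw [hH, mul_zero, h2] at h1
    refine measure_mono_null (fun y hy => ?_) (le_antisymm h1 zero_le)
    have h3 := graphG_mem (i := i₀) hy.1
    refine ⟨graphG i₀ 1 y, ⟨h3.1, h3.2, ?_⟩, by rw [graphG, prj_ins]⟩
    rw [← oddExt_of_nonneg h0 (by rw [h3.1]; norm_num) h3.2.le]
    exact hy.2
  have hempty := hopen.measure_eq_zero_iff volume |>.1 hnull
  have hpos : ∀ y : Euc (n + 1), ‖y‖ = 1 / 2 → 0 < y i₀ → U y = 0 := by
    intro y hy hy0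
    have h1 : graphG i₀ 1 (prj i₀ y) = y :=
      graphG_prj (κ := y i₀) (Or.inl rfl) hy0 ⟨hy, by rw [one_mul]⟩
    by_contra hne
    have h2 : prj i₀ y ∈ W ∩ (fun y => U (graphG i₀ 1 y)) ⁻¹' {0}ᶜ := by
      refine ⟨?_, ?_⟩
      · have := norm_sq_eq i₀ y
        rw [hy] at this
        rw [hW, mem_ofPred_eq]
        nlinarith [sq_pos_of_pos hy0]
      · rw [mem_preimage, h1]; exact hne
    rw [hempty] at h2
    exact h2
  refine hU.eq_zero_of_sphere isOpen_ball i₀ (r := 1 / 2) (by norm_num)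
    (closedBall_subset_ball (by norm_num)) (fun y hy => ?_) hx
  rcases lt_trichotomy (y i₀) 0 with h | h | h
  · have h1 := hpos (flipR i₀ y) (by rw [LinearIsometryEquiv.norm_map, hy])
      (by rw [flipR_apply_self]; linarith)
    rw [hUdef, oddExt_flipR] at h1
    linarith
  · exact oddExt_flat i₀ u h
  · exact hpos y hy h

/-- The frequency bound, in terms of the odd extension: the Dirichlet energy in the ball of radius
`1/2` is controlled by the mass on the sphere. -/
lemma energy_le {i₀ : Fin (n + 1)} {u : Euc (n + 1) → ℝ} {N : ℝ} (hN : 0 < N)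
    (h0 : ∀ y : Euc (n + 1), ‖y‖ ≤ 1 → y i₀ = 0 → u y = 0)
    (hU : WeakHarm (oddExt i₀ u) (ball 0 1))
    (hne : ∃ x, ‖x‖ ≤ 1 / 2 ∧ oddExt i₀ u x ≠ 0)
    (hfreq : freqNhalf (n + 1) i₀ u (1 / 2) ≤ N) :
    ∫⁻ x, gradSq (oddExt i₀ u) x ≤ ENNReal.ofReal (4 * N) *
      ∫⁻ x in sphere (0 : Euc (n + 1)) (1 / 2),
        ENNReal.ofReal (oddExt i₀ u x ^ 2) ∂μH[(n : ℝ)] := by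
  set S : Set (Euc (n + 1)) := sphere (0 : Euc (n + 1)) (1 / 2) ∩ halfBall (n + 1) i₀ 1 with hS
  have hSm : MeasurableSet S := isClosed_sphere.measurableSet.inter (isOpen_halfBall i₀ 1).measurableSet
  have hSeq : ∀ x ∈ S, u x = oddExt i₀ u x := fun x hx =>
    (oddExt_of_nonneg h0 (mem_ball_zero_iff.1 hx.2.1).le hx.2.2.le).symm
  have hcs : ContinuousOn (fun x => oddExt i₀ u x ^ 2) (sphere (0 : Euc (n + 1)) (1 / 2)) :=
    (hU.cont.mono (sphere_subset_closedBall.trans (closedBall_subset_ball (by norm_num)))).pow 2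
  have hInt' : IntegrableOn (fun x => oddExt i₀ u x ^ 2) (sphere (0 : Euc (n + 1)) (1 / 2))
      μH[(n : ℝ)] := by
    obtain ⟨B, hB⟩ := (isCompact_sphere (0 : Euc (n + 1)) (1 / 2)).exists_bound_of_continuousOn hcs
    refine IntegrableOn.of_bound (hausdorff_sphere_lt_top n)
      (hcs.aestronglyMeasurable isClosed_sphere.measurableSet) B ?_
    exact (ae_restrict_iff' isClosed_sphere.measurableSet).2 (Eventually.of_forall hB)
  have hInt : IntegrableOn (fun x => oddExt i₀ u x ^ 2) S μH[(n : ℝ)] := hInt'.mono_set inter_subset_left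
  set Hs := ∫ y in S, u y ^ 2 ∂μH[(n : ℝ)] with hHs
  have hHs' : Hs = ∫ y in S, oddExt i₀ u y ^ 2 ∂μH[(n : ℝ)] :=
    setIntegral_congr_fun hSm fun x hx => by simp only [hSeq x hx]
  have hHle : ENNReal.ofReal Hs ≤ ∫⁻ x in sphere (0 : Euc (n + 1)) (1 / 2),
      ENNReal.ofReal (oddExt i₀ u x ^ 2) ∂μH[(n : ℝ)] := by
    rw [hHs', ofReal_integral_eq_lintegral_ofReal hInt (Eventually.of_forall fun _ => sq_nonneg _)]
    exact lintegral_mono_set inter_subset_left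
  have hHpos : 0 < Hs := by
    refine lt_of_le_of_ne (integral_nonneg fun _ => sq_nonneg _) fun h => ?_
    rw [hHs', eq_comm, integral_eq_zero_iff_of_nonneg (fun _ => sq_nonneg _) hInt] at h
    obtain ⟨x, hx, hxne⟩ := hne
    refine hxne (eq_zero_of_hausdorff h0 hU ?_ hx)
    have h1 := (ae_restrict_iff' hSm).1 h
    rw [ae_iff] at h1
    refine measure_mono_null (fun z hz => ?_) h1
    have hzS : z ∈ S := ⟨mem_sphere_zero_iff_norm.2 hz.1, mem_ball_zero_iff.2 (by rw [hz.1]; norm_num), hz.2.1⟩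
    rw [mem_ofPred_eq]
    intro h2
    have h3 : oddExt i₀ u z ^ 2 = 0 := h2 hzS
    rw [← hSeq z hzS] at h3
    exact hz.2.2 (by simpa using h3)
  set E := ∫ y in ball (0 : Euc (n + 1)) (1 / 2) ∩ halfBall (n + 1) i₀ 1, ‖gradient u y‖ ^ 2 with hE
  have hEle : E ≤ 2 * N * Hs := by
    have hcast : ((n + 1 : ℕ) : ℝ) - 1 = n := by push_cast; ring
    have hp : (0 : ℝ) < (1 / 2 : ℝ) ^ ((1 : ℝ) - ((n + 1 : ℕ) : ℝ)) := by positivity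
    unfold freqNhalf freqIhalf freqHhalf at hfreq
    rw [hcast, ← hS, ← hHs, ← hE, div_le_iff₀ (mul_pos hp hHpos)] at hfreq
    set p := (1 / 2 : ℝ) ^ ((1 : ℝ) - ((n + 1 : ℕ) : ℝ))
    have h3 : p * E ≤ p * (2 * N * Hs) := by linarith
    exact le_of_mul_le_mul_left h3 hp
  calc _ ≤ 2 * ENNReal.ofReal E := lintegral_gradSq_le i₀ h0 hU
    _ ≤ 2 * ENNReal.ofReal (2 * N * Hs) := by gcongr
    _ = ENNReal.ofReal (4 * N) * ENNReal.ofReal Hs := by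
      rw [← ENNReal.ofReal_ofNat 2, ← ENNReal.ofReal_mul (by norm_num),
        ← ENNReal.ofReal_mul (by positivity)]
      congr 1; ring
    _ ≤ _ := by gcongr

end energy

/-! ### Compactness -/

section compactness

/-- Interior gradient bound by the Dirichlet energy. -/
lemma exists_grad_bound (d : ℕ) {r : ℝ} (hr : r < 1 / 2) : ∃ C : ℝ, 0 ≤ C ∧
    ∀ V : Euc d → ℝ, WeakHarm V (ball 0 1) → ∫⁻ x, gradSq V x ≤ 1 →
      ∀ x : Euc d, ‖x‖ ≤ r → ‖fderiv ℝ V x‖ ≤ C := by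
  obtain ⟨B, hB0, hB⟩ := exists_eta_le (d := d)
  set ε := (1 / 2 - r) / 2 with hε
  have hε0 : 0 < ε := by rw [hε]; linarith
  have hm := etaMass_pos (d := d)
  refine ⟨((etaMass d + (ε ^ d)⁻¹ * B) / 2) / etaMass d, by positivity, fun V hV hE x hx => ?_⟩
  refine ContinuousLinearMap.opNorm_le_of_unit_norm (by positivity) fun e he => ?_
  have hsub : closedBall x ε ⊆ ball 0 (1 / 2) := fun z hz => by
    rw [mem_closedBall, dist_eq_norm] at hz
    rw [mem_ball_zero_iff]
    calc ‖z‖ = ‖(z - x) + x‖ := by rw [sub_add_cancel]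
      _ ≤ ‖z - x‖ + ‖x‖ := norm_add_le _ _
      _ < 1 / 2 := by rw [hε] at hz; linarith
  have hW := hV.dirD' isOpen_ball e
  have hc : ContinuousOn (fun y => ‖fderiv ℝ V y‖ ^ 2) (closedBall (0 : Euc d) (1 / 2)) :=
    ((hV.continuousOn_fderiv isOpen_ball).mono (closedBall_subset_ball (by norm_num))).norm.pow 2
  have hi1 : IntegrableOn (fun y => ‖fderiv ℝ V y‖ ^ 2) (ball (0 : Euc d) (1 / 2)) :=
    (hc.integrableOn_compact (isCompact_closedBall _ _)).mono_set ball_subset_closedBall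
  have hc2 : ContinuousOn (fun y => dirD e V y ^ 2) (closedBall (0 : Euc d) (1 / 2)) :=
    (hW.cont.mono (closedBall_subset_ball (by norm_num))).pow 2
  have hi2 : IntegrableOn (fun y => dirD e V y ^ 2) (ball (0 : Euc d) (1 / 2)) :=
    (hc2.integrableOn_compact (isCompact_closedBall _ _)).mono_set ball_subset_closedBall
  have hle : ∫ y in ball (0 : Euc d) (1 / 2), dirD e V y ^ 2 ≤ 1 := by
    have h1 : ∫ y in ball (0 : Euc d) (1 / 2), dirD e V y ^ 2
        ≤ ∫ y in ball (0 : Euc d) (1 / 2), ‖fderiv ℝ V y‖ ^ 2 := by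
      refine setIntegral_mono hi2 hi1 fun y => ?_
      rw [← sq_abs]
      refine pow_le_pow_left₀ (abs_nonneg _) ?_ 2
      have := (fderiv ℝ V y).le_opNorm e
      rwa [he, mul_one] at this
    refine h1.trans ?_
    rw [gradSq, lintegral_indicator isOpen_ball.measurableSet,
      ← ofReal_integral_eq_lintegral_ofReal hi1 (Eventually.of_forall fun _ => sq_nonneg _),
      ← ENNReal.ofReal_one] at hE
    exact (ENNReal.ofReal_le_ofReal_iff zero_le_one).1 hE
  have h2 := hW.abs_le_of_sq isOpen_ball hε0
    (hsub.trans (ball_subset_ball (by norm_num))) hB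
    (isOpen_ball (x := (0 : Euc d)) (ε := 1 / 2)).measurableSet (ball_subset_closedBall.trans hsub) hi2
  rw [le_div_iff₀ hm]
  refine h2.trans ?_
  gcongr
  exact mul_le_of_le_one_right hB0 hle

lemma lipschitz_of_grad_bound {V : Euc d → ℝ} (hV : WeakHarm V (ball 0 1)) {r C : ℝ} (hr : r < 1)
    (hC : ∀ x : Euc d, ‖x‖ ≤ r → ‖fderiv ℝ V x‖ ≤ C) {x z : Euc d} (hx : ‖x‖ ≤ r) (hz : ‖z‖ ≤ r) :
    |V x - V z| ≤ C * ‖x - z‖ := by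
  refine (convex_closedBall (0 : Euc d) r).norm_image_sub_le_of_norm_hasFDerivWithin_le
    (f := V) (f' := fderiv ℝ V) (fun y hy => ?_) (fun y hy => hC y (mem_closedBall_zero_iff.1 hy))
    (mem_closedBall_zero_iff.2 hz) (mem_closedBall_zero_iff.2 hx)
  exact (hV.hasFDerivAt isOpen_ball (closedBall_subset_ball hr hy)).hasFDerivWithinAt

/-- Arzelà–Ascoli on a closed ball, for uniformly bounded and uniformly Lipschitz sequences. -/
lemma exists_subseq_unif {r C : ℝ} (f : ℕ → Euc d → ℝ)
    (hb : ∀ k x, ‖x‖ ≤ r → |f k x| ≤ C)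
    (hl : ∀ k x z, ‖x‖ ≤ r → ‖z‖ ≤ r → |f k x - f k z| ≤ C * ‖x - z‖) :
    ∃ (v : Euc d → ℝ) (φ : ℕ → ℕ), StrictMono φ ∧
      ∀ ε > 0, ∀ᶠ k in atTop, ∀ x, ‖x‖ ≤ r → |f (φ k) x - v x| ≤ ε := by
  classical
  set K : Set (Euc d) := closedBall 0 r with hK
  have hcK : CompactSpace K := isCompact_iff_compactSpace.1 (isCompact_closedBall 0 r)
  have hmem : ∀ x : K, ‖(x : Euc d)‖ ≤ r := fun x => mem_closedBall_zero_iff.1 x.2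
  have hdist : ∀ k (x z : K), dist (f k x) (f k z) ≤ C * dist x z := fun k x z => by
    rw [Real.dist_eq, Subtype.dist_eq, dist_eq_norm]
    exact hl k x z (hmem x) (hmem z)
  have hcont : ∀ k, Continuous fun x : K => f k x := fun k => by
    refine (LipschitzWith.of_dist_le_mul (K := Real.toNNReal C) fun x z => ?_).continuous
    exact (hdist k x z).trans
      (mul_le_mul_of_nonneg_right (Real.le_coe_toNNReal C) dist_nonneg)
  let F : ℕ → BoundedContinuousFunction K ℝ := fun k =>
    BoundedContinuousFunction.mkOfCompact ⟨fun x : K => f k x, hcont k⟩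
  have hF : ∀ k (x : K), F k x = f k x := fun k x => rfl
  have hcomp : IsCompact (closure (range F)) := by
    refine BoundedContinuousFunction.arzela_ascoli (Icc (-C) C) isCompact_Icc _ ?_ ?_
    · rintro _ x ⟨k, rfl⟩
      rw [hF]
      exact abs_le.1 (hb k x (hmem x))
    · refine Metric.equicontinuous_of_continuity_modulus (fun t => C * t) ?_ _ ?_
      · have : Continuous fun t : ℝ => C * t := by fun_prop
        simpa using this.tendsto 0
      · rintro x z ⟨_, k, rfl⟩
        exact hdist k x z
  obtain ⟨g, -, φ, hφ, hlim⟩ := hcomp.tendsto_subseq fun k => subset_closure (mem_range_self k)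
  refine ⟨fun x => if h : x ∈ K then g ⟨x, h⟩ else 0, φ, hφ, fun ε hε => ?_⟩
  filter_upwards [(Metric.tendsto_nhds.1 hlim) ε hε] with k hk x hx
  have hxK : x ∈ K := mem_closedBall_zero_iff.2 hx
  rw [dif_pos hxK]
  have := (BoundedContinuousFunction.dist_coe_le_dist (f := F (φ k)) (g := g) ⟨x, hxK⟩).trans hk.le
  rwa [hF, Real.dist_eq] at this

lemma weakHarm_of_unif {r : ℝ} {f : ℕ → Euc d → ℝ} {v : Euc d → ℝ}
    (hf : ∀ k, WeakHarm (f k) (ball 0 r))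
    (hlim : ∀ ε > 0, ∀ᶠ k in atTop, ∀ x, ‖x‖ ≤ r → |f k x - v x| ≤ ε) :
    WeakHarm v (ball 0 r) := by
  have hcont : ContinuousOn v (ball 0 r) := by
    refine TendstoUniformlyOn.continuousOn (F := f) (p := atTop) ?_
      (Eventually.of_forall fun k => (hf k).cont).frequently
    rw [Metric.tendstoUniformlyOn_iff]
    intro ε hε
    filter_upwards [hlim (ε / 2) (by linarith)] with k hk x hx
    rw [dist_comm, Real.dist_eq]
    linarith [hk x (mem_ball_zero_iff.1 hx).le]
  refine ⟨hcont, fun φ hφ hc hs => ?_⟩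
  have hlapc := hφ.lap.continuous
  have hls := (tsupport_lap φ).trans hs
  have hInt := integrable_mul_of_tsupport isOpen_ball hcont hlapc hc.lap hls
  have habs : Integrable (fun x => |lap φ x|) := (hlapc.integrable_of_hasCompactSupport hc.lap).abs
  set I := ∫ x, |lap φ x| with hI
  have hI0 : 0 ≤ I := integral_nonneg fun _ => abs_nonneg _
  have key : ∀ ε > 0, |∫ x, v x * lap φ x| ≤ ε * I := by
    intro ε hε
    obtain ⟨k, hk⟩ := (hlim ε hε).exists
    have hIntk := integrable_mul_of_tsupport isOpen_ball (hf k).cont hlapc hc.lap hls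
    have h1 : ∫ x, v x * lap φ x = ∫ x, (v x * lap φ x - f k x * lap φ x) := by
      rw [integral_sub hInt hIntk, (hf k).weak φ hφ hc hs, sub_zero]
    rw [h1, ← integral_const_mul, ← Real.norm_eq_abs]
    refine norm_integral_le_of_norm_le (habs.const_mul ε) (Eventually.of_forall fun x => ?_)
    by_cases hx : x ∈ tsupport (lap φ)
    · rw [← sub_mul, norm_mul, Real.norm_eq_abs, Real.norm_eq_abs, abs_sub_comm]
      gcongr
      exact hk x (mem_ball_zero_iff.1 (hls hx)).le
    · rw [image_eq_zero_of_notMem_tsupport hx]; simp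
  have h2 : |∫ x, v x * lap φ x| ≤ 0 := by
    refine le_of_forall_pos_le_add fun ε hε => ?_
    have := key (ε / (I + 1)) (by positivity)
    refine this.trans ?_
    rw [zero_add, div_mul_eq_mul_div, div_le_iff₀ (by positivity)]
    nlinarith
  exact abs_eq_zero.1 (le_antisymm h2 (abs_nonneg _))

/-- If the vertical derivative of `V` is at least `δ` in absolute value on a ball centred on the
flat part, where `V` vanishes, then `V` grows at least linearly off the flat part. -/
lemma linear_growth {V : Euc d → ℝ} (i₀ : Fin d) {x' : Euc d} (hx' : x' i₀ = 0) {ρ δ : ℝ}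
    {Ω : Set (Euc d)} (hΩ : IsOpen Ω) (hV : WeakHarm V Ω) (hsub : ball x' ρ ⊆ Ω)
    (h0 : ∀ y : Euc d, y i₀ = 0 → V y = 0)
    (hD : ∀ z ∈ ball x' ρ, δ ≤ |dirD (bvec i₀) V z|) {y : Euc d} (hy : y ∈ ball x' ρ)
    (hy0 : 0 < y i₀) : δ * y i₀ ≤ |V y| := by
  set a : Euc d := y - y i₀ • bvec i₀ with ha
  have ha0 : a i₀ = 0 := by simp [ha, bvec_apply]
  have hay : a + y i₀ • bvec i₀ = y := by rw [ha, sub_add_cancel]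
  have haball : a ∈ ball x' ρ := by
    rw [mem_ball, dist_eq_norm] at hy ⊢
    refine lt_of_le_of_lt ?_ hy
    rw [← sq_le_sq₀ (norm_nonneg _) (norm_nonneg _), EuclideanSpace.norm_sq_eq,
      EuclideanSpace.norm_sq_eq]
    refine Finset.sum_le_sum fun j _ => ?_
    by_cases hj : j = i₀
    · subst hj
      simp [ha0, hx']
      positivity
    · simp [ha, bvec_apply, hj]
  have hseg : ∀ t ∈ Icc 0 (y i₀), a + t • bvec i₀ ∈ ball x' ρ := fun t ht => by
    have h1 := (convex_ball x' ρ) haball hy (a := 1 - t / y i₀) (b := t / y i₀)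
      (by rw [sub_nonneg, div_le_one hy0]; exact ht.2) (div_nonneg ht.1 hy0.le) (by ring)
    convert h1 using 1
    have h2 : y = a + y i₀ • bvec i₀ := hay.symm
    nth_rewrite 3 [h2]
    rw [smul_add, smul_smul, div_mul_cancel₀ _ hy0.ne', ← add_assoc, ← add_smul]
    simp
  have hd : ∀ t ∈ Icc 0 (y i₀), HasDerivAt (fun t : ℝ => V (a + t • bvec i₀))
      (dirD (bvec i₀) V (a + t • bvec i₀)) t := fun t ht =>
    hV.hasDerivAt_line hΩ a (bvec i₀) (hsub (hseg t ht))
  obtain ⟨t, ht, hmv⟩ := exists_hasDerivAt_eq_slope (fun t : ℝ => V (a + t • bvec i₀))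
    (fun t => dirD (bvec i₀) V (a + t • bvec i₀)) hy0
    (fun t ht => (hd t ht).continuousAt.continuousWithinAt)
    (fun t ht => hd t (Ioo_subset_Icc_self ht))
  simp only [hay, zero_smul, add_zero, h0 a ha0, sub_zero] at hmv
  have h1 := hD _ (hseg t (Ioo_subset_Icc_self ht))
  rw [hmv, abs_div, abs_of_pos hy0, le_div_iff₀ hy0] at h1
  exact h1

lemma closedBall_subset_of_norm {x : Euc d} {ε r : ℝ} (h : ‖x‖ + ε < r) :
    closedBall x ε ⊆ ball (0 : Euc d) r := fun z hz => by
  rw [mem_closedBall, dist_eq_norm] at hz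
  rw [mem_ball_zero_iff]
  calc ‖z‖ = ‖(z - x) + x‖ := by rw [sub_add_cancel]
    _ ≤ ‖z - x‖ + ‖x‖ := norm_add_le _ _
    _ < r := by linarith

end compactness

section growth

/-- Linear growth near some boundary point, with uniform constants, for harmonic functions of
energy at most one which vanish on the hyperplane and are not uniformly small. -/
lemma compact_growth (i₀ : Fin d) {r₀ r₁ m₀ : ℝ} (hr₀ : 0 < r₀) (hr₀' : r₀ < 1 / 16)
    (hr₁ : 1 / 4 ≤ r₁) (hr₁' : r₁ < 1 / 2) (hm₀ : 0 < m₀) :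
    ∃ ρ c : ℝ, 0 < ρ ∧ 0 < c ∧ ∀ V : Euc d → ℝ, WeakHarm V (ball 0 1) →
      (∀ y : Euc d, y i₀ = 0 → V y = 0) → ∫⁻ x, gradSq V x ≤ 1 →
      (∃ y : Euc d, ‖y‖ ≤ r₁ ∧ m₀ < |V y|) →
      ∃ x' : Euc d, x' i₀ = 0 ∧ ‖x'‖ < r₀ ∧ ∀ y ∈ ball x' ρ, 0 < y i₀ → c * y i₀ ≤ |V y| := by
  by_contra hcon
  push Not at hcon
  have hpos : ∀ k : ℕ, (0 : ℝ) < 1 / (k + 1) := fun k => by positivity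
  choose V hV hflat hE hbig hbad using fun k : ℕ => hcon _ _ (hpos k) (hpos k)
  obtain ⟨r₂, h12, hr₂⟩ := exists_between hr₁'
  have hr₂0 : 0 < r₂ := by linarith
  obtain ⟨C, hC0, hC⟩ := exists_grad_bound d hr₂
  have hgrad : ∀ k x, ‖x‖ ≤ r₂ → ‖fderiv ℝ (V k) x‖ ≤ C := fun k => hC _ (hV k) (hE k)
  have hlip : ∀ k x z, ‖x‖ ≤ r₂ → ‖z‖ ≤ r₂ → |V k x - V k z| ≤ C * ‖x - z‖ :=
    fun k x z hx hz => lipschitz_of_grad_bound (hV k) (by linarith) (hgrad k) hx hz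
  have hbd : ∀ k x, ‖x‖ ≤ r₂ → |V k x| ≤ C := fun k x hx => by
    have h1 := hlip k x 0 hx (by simpa using hr₂0.le)
    rw [hflat k 0 rfl, sub_zero, sub_zero] at h1
    exact h1.trans (mul_le_of_le_one_right hC0 (by linarith))
  obtain ⟨v, φ, hφ, hlim⟩ := exists_subseq_unif V hbd hlip
  have hV2 : ∀ k, WeakHarm (V k) (ball 0 r₂) := fun k => (hV k).mono (ball_subset_ball (by linarith))
  have hv : WeakHarm v (ball 0 r₂) := weakHarm_of_unif (fun k => hV2 (φ k)) hlim
  have hv0 : ∀ x ∈ ball (0 : Euc d) r₀, x i₀ = 0 → v x = 0 := fun x hx hx0 => by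
    have h1 : |v x| ≤ 0 := le_of_forall_pos_le_add fun ε hε => by
      obtain ⟨k, hk⟩ := (hlim ε hε).exists
      have h2 := hk x (by linarith [mem_ball_zero_iff.1 hx])
      rw [hflat _ x hx0, zero_sub, abs_neg] at h2
      linarith
    exact abs_eq_zero.1 (le_antisymm h1 (abs_nonneg _))
  -- the limit is nonzero, so its normal derivative does not vanish identically near the origin
  obtain ⟨x', hx'r, hx'0, hne⟩ : ∃ x' ∈ ball (0 : Euc d) r₀, x' i₀ = 0 ∧ dirD (bvec i₀) v x' ≠ 0 := by
    by_contra hno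
    push Not at hno
    have hz := hv.eq_zero_of_cauchy hr₀ (by linarith) i₀ hv0 hno
    obtain ⟨k, hk⟩ := (hlim m₀ hm₀).exists
    obtain ⟨y, hy, hym⟩ := hbig (φ k)
    have h1 := hk y (by linarith)
    rw [hz y (mem_ball_zero_iff.2 (by linarith)), sub_zero] at h1
    linarith
  rw [mem_ball_zero_iff] at hx'r
  set δ := |dirD (bvec i₀) v x'| with hδ
  have hδ0 : 0 < δ := abs_pos.2 hne
  have hcb : closedBall x' (1 / 16) ⊆ ball (0 : Euc d) r₂ :=
    closedBall_subset_of_norm (by linarith)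
  have hG := gradC_nonneg (d := d)
  -- convergence of the normal derivative at `x'`
  have hconv : ∀ᶠ k in atTop, δ / 2 ≤ |dirD (bvec i₀) (V (φ k)) x'| := by
    filter_upwards [hlim (δ / (32 * (gradC d + 1))) (by positivity)] with k hk
    have h1 := (WeakHarm.sub isOpen_ball (hV2 (φ k)) hv).abs_dirD_le isOpen_ball
      (by norm_num : (0 : ℝ) < 1 / 16) hcb
      (fun y hy => hk y (mem_ball_zero_iff.1 (hcb hy)).le) (norm_bvec i₀).le
    have hx'b : x' ∈ ball (0 : Euc d) r₂ := hcb (mem_closedBall_self (by norm_num))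
    have h2 : dirD (bvec i₀) (fun x => V (φ k) x - v x) x'
        = dirD (bvec i₀) (V (φ k)) x' - dirD (bvec i₀) v x' := by
      rw [dirD, fderiv_fun_sub ((hV2 (φ k)).hasFDerivAt isOpen_ball hx'b).differentiableAt
        (hv.hasFDerivAt isOpen_ball hx'b).differentiableAt]
      rfl
    rw [h2] at h1
    have h3 : gradC d / (1 / 16) * (δ / (32 * (gradC d + 1))) ≤ δ / 2 := by
      rw [div_mul_div_comm, div_le_div_iff₀ (by positivity) (by norm_num)]
      nlinarith
    have h4 := abs_sub_abs_le_abs_sub (dirD (bvec i₀) v x') (dirD (bvec i₀) (V (φ k)) x')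
    rw [abs_sub_comm] at h4
    linarith
  -- equicontinuity of the normal derivatives near `x'`
  set L := gradC d / (1 / 32) * C with hL
  have hL0 : 0 ≤ L := by positivity
  have hLip : ∀ k, ∀ z ∈ ball x' (1 / 32),
      |dirD (bvec i₀) (V k) z - dirD (bvec i₀) (V k) x'| ≤ L * ‖z - x'‖ := by
    intro k z hz
    have hW := (hV2 k).dirD' isOpen_ball (bvec i₀)
    have hin : ∀ y ∈ ball x' (1 / 32), closedBall y (1 / 32) ⊆ ball (0 : Euc d) r₂ := fun y hy => by
      refine closedBall_subset_of_norm ?_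
      rw [mem_ball, dist_eq_norm] at hy
      have : ‖y‖ ≤ ‖y - x'‖ + ‖x'‖ := by simpa using norm_add_le (y - x') x'
      linarith
    refine (convex_ball x' (1 / 32)).norm_image_sub_le_of_norm_hasFDerivWithin_le
      (f := dirD (bvec i₀) (V k)) (f' := fderiv ℝ (dirD (bvec i₀) (V k))) (fun y hy => ?_)
      (fun y hy => ?_) (mem_ball_self (by norm_num)) hz
    · exact (hW.hasFDerivAt isOpen_ball
        (hin y hy (mem_closedBall_self (by norm_num)))).hasFDerivWithinAt
    · refine ContinuousLinearMap.opNorm_le_of_unit_norm hL0 fun e he => ?_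
      refine hW.abs_dirD_le isOpen_ball (by norm_num : (0 : ℝ) < 1 / 32) (hin y hy)
        (fun w hw => ?_) he.le
      have h1 := (fderiv ℝ (V k) w).le_opNorm (bvec i₀)
      rw [norm_bvec, mul_one] at h1
      exact h1.trans (hgrad k w (mem_ball_zero_iff.1 (hin y hy hw)).le)
  set ρ := min (1 / 32) (δ / (4 * (L + 1))) with hρ
  have hρ0 : 0 < ρ := lt_min (by norm_num) (by positivity)
  have hgrow : ∀ᶠ k in atTop, ∀ y ∈ ball x' ρ, 0 < y i₀ → δ / 4 * y i₀ ≤ |V (φ k) y| := by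
    filter_upwards [hconv] with k hk y hy hy0
    have hρsub : ball x' ρ ⊆ ball x' (1 / 32) := ball_subset_ball (min_le_left _ _)
    refine linear_growth i₀ hx'0 isOpen_ball (hV2 (φ k))
      ((hρsub.trans (ball_subset_ball (by norm_num))).trans (ball_subset_closedBall.trans hcb))
      (hflat (φ k)) (fun z hz => ?_) hy hy0
    have h1 := hLip (φ k) z (hρsub hz)
    have h2 : L * ‖z - x'‖ ≤ δ / 4 := by
      have h3 : ‖z - x'‖ ≤ δ / (4 * (L + 1)) := by
        rw [mem_ball, dist_eq_norm] at hz
        exact hz.le.trans (min_le_right _ _)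
      refine (mul_le_mul_of_nonneg_left h3 hL0).trans ?_
      rw [mul_div_assoc', div_le_div_iff₀ (by positivity) (by norm_num)]
      nlinarith
    have h4 := abs_sub_abs_le_abs_sub (dirD (bvec i₀) (V (φ k)) x') (dirD (bvec i₀) (V (φ k)) z)
    rw [abs_sub_comm] at h4
    linarith
  have hsmall : ∀ᶠ k : ℕ in atTop, (1 : ℝ) / (φ k + 1) < min ρ (δ / 4) :=
    (tendsto_one_div_add_atTop_nhds_zero_nat.comp hφ.tendsto_atTop).eventually
      (gt_mem_nhds (lt_min hρ0 (by linarith)))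
  obtain ⟨k, hk1, hk2⟩ := (hgrow.and hsmall).exists
  obtain ⟨y, hy, hy0, hyb⟩ := hbad (φ k) x' hx'0 hx'r
  have h1 := hk1 y (ball_subset_ball (hk2.le.trans (min_le_left _ _)) hy) hy0
  have h2 := mul_le_mul_of_nonneg_right (hk2.le.trans (min_le_right _ _)) hy0.le
  linarith

end growth

section lower

variable {n : ℕ}

lemma gradSq_const_mul {U : Euc d → ℝ} (hU : WeakHarm U (ball 0 1)) (a : ℝ) (x : Euc d) :
    gradSq (fun x => a * U x) x = ENNReal.ofReal (a ^ 2) * gradSq U x := by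
  unfold gradSq
  by_cases hx : x ∈ ball (0 : Euc d) (1 / 2)
  · rw [indicator_of_mem hx, indicator_of_mem hx, ← ENNReal.ofReal_mul (sq_nonneg a),
      fderiv_const_mul (hU.hasFDerivAt isOpen_ball
        (ball_subset_ball (by norm_num) hx)).differentiableAt, norm_smul, mul_pow,
      Real.norm_eq_abs, sq_abs]
  · rw [indicator_of_notMem hx, indicator_of_notMem hx, mul_zero]

lemma lintegral_gradSq_const_mul {U : Euc d → ℝ} (hU : WeakHarm U (ball 0 1)) (a : ℝ) :
    ∫⁻ x, gradSq (fun x => a * U x) x = ENNReal.ofReal (a ^ 2) * ∫⁻ x, gradSq U x := by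
  simp only [gradSq_const_mul hU]
  exact lintegral_const_mul' _ _ ENNReal.ofReal_ne_top

/-- A function of unit energy whose energy is controlled by its mass on the sphere is not
uniformly small on a ball of radius less than `1/2`: otherwise, by the trace estimate, its mass on
the sphere would be too small. -/
lemma exists_lower (n : ℕ) {N : ℝ} (hN : 0 < N) : ∃ r₁ m₀ : ℝ, 1 / 4 ≤ r₁ ∧ r₁ < 1 / 2 ∧ 0 < m₀ ∧
    ∀ V : Euc (n + 1) → ℝ, WeakHarm V (ball 0 1) → ∫⁻ x, gradSq V x = 1 →
      ∫⁻ x, gradSq V x ≤ ENNReal.ofReal (4 * N) *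
        ∫⁻ x in sphere (0 : Euc (n + 1)) (1 / 2), ENNReal.ofReal (V x ^ 2) ∂μH[(n : ℝ)] →
      ∃ y : Euc (n + 1), ‖y‖ ≤ r₁ ∧ m₀ < |V y| := by
  set T := (traceC n).toReal with hT
  have hT0 : 0 ≤ T := ENNReal.toReal_nonneg
  have hTe : traceC n = ENNReal.ofReal T := (ENNReal.ofReal_toReal (traceC_lt_top n).ne).symm
  set κ : ℝ := 1 / (2 * (n + 1)) with hκ
  have hκ0 : 0 < κ := by positivity
  have hκ1 : κ ≤ 1 / 2 := by
    rw [hκ]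
    exact one_div_le_one_div_of_le (by norm_num) (by linarith [(Nat.cast_nonneg n : (0 : ℝ) ≤ n)])
  set s := min (κ / 2) (1 / (16 * N * (T + 1))) with hs
  have hs0 : 0 < s := lt_min (by positivity) (by positivity)
  have hsκ : s ≤ κ / 2 := min_le_left _ _
  set m₀ := √(1 / (16 * N * (T + 1))) with hm
  have hm2 : m₀ ^ 2 = 1 / (16 * N * (T + 1)) := Real.sq_sqrt (by positivity)
  have hsκ2 : s * κ ≤ 1 / 8 := by nlinarith
  have hr2 : √(1 / 4 - s * κ) ^ 2 = 1 / 4 - s * κ := Real.sq_sqrt (by linarith)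
  refine ⟨√(1 / 4 - s * κ), m₀, ?_, ?_, Real.sqrt_pos.2 (by positivity), fun V hV hE1 hE => ?_⟩
  · exact Real.le_sqrt_of_sq_le (by linarith)
  · rw [Real.sqrt_lt' (by norm_num)]
    nlinarith [mul_pos hs0 hκ0]
  · by_contra hno
    push Not at hno
    have htr := trace_estimate (n := n) hs0 (by linarith) hV (m := m₀) (fun y hy =>
      hno y (Real.le_sqrt_of_sq_le hy))
    have h1 := hE.trans (mul_le_mul_right htr _)
    rw [hE1, mul_one, hTe, ← ENNReal.ofReal_add (sq_nonneg _) hs0.le,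
      ← ENNReal.ofReal_mul hT0, ← ENNReal.ofReal_mul (by positivity), ENNReal.one_le_ofReal, hm2] at h1
    have h2 : s ≤ 1 / (16 * N * (T + 1)) := min_le_right _ _
    have h3 : 4 * N * (T * (1 / (16 * N * (T + 1)) + s))
        ≤ 4 * N * (T * (1 / (16 * N * (T + 1)) + 1 / (16 * N * (T + 1)))) := by gcongr
    have h4 : 4 * N * (T * (1 / (16 * N * (T + 1)) + 1 / (16 * N * (T + 1)))) = T / (2 * (T + 1)) := by
      field_simp; ring
    have h5 : T / (2 * (T + 1)) < 1 := by
      rw [div_lt_one (by positivity)]; linarith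
    linarith

end lower

/-- **Lemma 5.2 (Toy lemma).** Let `u` be harmonic in the upper half-ball `B₊`, continuous up
to the boundary, vanishing on the flat part, normalized by `sup_{(1/4)B₊}|u| = 1`. For any
`N > 0` and `0 < r₀ < 1/16` there are `ρ, c₀ > 0` such that if `N(0,1/2) ≤ N`, then there is a
boundary point `(x',0)` with `|x'| < r₀` such that `|u(y)| ≥ c₀ y''` on `B((x',0),ρ) ∩ B₊`;
in particular `u` does not vanish there. -/
theorem toy_lemma (d : ℕ) (i₀ : Fin d) (N r₀ : ℝ) (hN : 0 < N)
    (hr₀ : 0 < r₀) (hr₀' : r₀ < 1 / 16) :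
    ∃ ρ c₀ : ℝ, 0 < ρ ∧ 0 < c₀ ∧
    ∀ u : Euc d → ℝ,
      IsHarmonicOn u (halfBall d i₀ 1) →
      ContinuousOn u (closure (halfBall d i₀ 1)) →
      (∀ y : Euc d, ‖y‖ ≤ 1 → y i₀ = 0 → u y = 0) →
      sSup ((fun y => |u y|) '' halfBall d i₀ (1 / 4)) = 1 →
      freqNhalf d i₀ u (1 / 2) ≤ N →
      ∃ x' : Euc d, x' i₀ = 0 ∧ ‖x'‖ < r₀ ∧
        ∀ y ∈ ball x' ρ ∩ halfBall d i₀ 1, c₀ * y i₀ ≤ |u y| := by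
  -- there is no `Fin 0`, so the dimension is positive
  obtain _ | n := d
  · exact i₀.elim0
  obtain ⟨r₁, m₀, hr₁, hr₁', hm₀, hlow⟩ := exists_lower n hN
  obtain ⟨ρ, c, hρ, hc, hgrow⟩ := compact_growth i₀ hr₀ hr₀' hr₁ hr₁' hm₀
  obtain ⟨C, hC0, hC⟩ := exists_grad_bound (n + 1) (r := 1 / 4) (by norm_num)
  refine ⟨ρ, c / (C + 1), hρ, by positivity, fun u hh hcont h0 hsup hfreq => ?_⟩
  have hU : WeakHarm (oddExt i₀ u) (ball 0 1) := weakHarm_oddExt hh hcont h0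
  have hUu : ∀ y ∈ halfBall (n + 1) i₀ 1, oddExt i₀ u y = u y := fun y hy =>
    oddExt_of_nonneg h0 (mem_ball_zero_iff.1 hy.1).le hy.2.le
  have hone : ∀ m : ℝ, 0 ≤ m → (∀ y : Euc (n + 1), ‖y‖ ≤ 1 / 4 → |oddExt i₀ u y| ≤ m) → 1 ≤ m := by
    intro m hm hle
    rw [← hsup]
    refine Real.sSup_le ?_ hm
    rintro _ ⟨y, hy, rfl⟩
    have h1 := hle y (mem_ball_zero_iff.1 hy.1).le
    rwa [hUu y ⟨ball_subset_ball (by norm_num) hy.1, hy.2⟩] at h1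
  set U := oddExt i₀ u with hUdef
  have hflat : ∀ y : Euc (n + 1), y i₀ = 0 → U y = 0 := fun y hy => oddExt_flat i₀ u hy
  have hne : ∃ x, ‖x‖ ≤ 1 / 2 ∧ U x ≠ 0 := by
    by_contra hno
    push Not at hno
    have := hone 0 le_rfl fun y hy => by rw [hno y (by linarith), abs_zero]
    linarith
  have hE := energy_le hN h0 hU hne hfreq
  set A := ∫⁻ x, gradSq U x with hA
  have hAtop : A ≠ ⊤ := ((lintegral_gradSq_le i₀ h0 hU).trans_lt
    (ENNReal.mul_lt_top (by simp) ENNReal.ofReal_lt_top)).ne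
  -- the normalization `sup |u| = 1` bounds the energy from below
  have hscale : ∀ a : ℝ, 0 < a → ENNReal.ofReal (a ^ 2) * A ≤ 1 → a ≤ C := by
    intro a ha hle
    rw [hA, ← lintegral_gradSq_const_mul hU] at hle
    have hW := hU.const_mul a
    have h1 := hone (C / a) (by positivity) fun y hy => by
      have h2 := lipschitz_of_grad_bound hW (by norm_num) (hC _ hW hle) hy
        (z := 0) (by simp)
      rw [hflat 0 rfl, mul_zero, sub_zero, sub_zero, abs_mul, abs_of_pos ha] at h2
      rw [le_div_iff₀ ha]
      nlinarith
    rwa [le_div_iff₀ ha, one_mul] at h1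
  have hA0 : A ≠ 0 := fun h => by
    have := hscale (C + 1) (by positivity) (by rw [h, mul_zero]; exact zero_le_one)
    linarith
  have hAr : 0 < A.toReal := ENNReal.toReal_pos hA0 hAtop
  set a := 1 / √A.toReal with ha
  have ha0 : 0 < a := by positivity
  have haA : ENNReal.ofReal (a ^ 2) * A = 1 := by
    nth_rewrite 1 [← ENNReal.ofReal_toReal hAtop]
    rw [← ENNReal.ofReal_mul (sq_nonneg a), ha, div_pow, Real.sq_sqrt hAr.le, one_pow,
      one_div_mul_cancel hAr.ne', ENNReal.ofReal_one]
  have hV := hU.const_mul a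
  have hVE : ∫⁻ x, gradSq (fun x => a * U x) x = 1 := by
    rw [lintegral_gradSq_const_mul hU, ← hA, haA]
  have hVH : ∫⁻ x, gradSq (fun x => a * U x) x ≤ ENNReal.ofReal (4 * N) *
      ∫⁻ x in sphere (0 : Euc (n + 1)) (1 / 2), ENNReal.ofReal ((a * U x) ^ 2) ∂μH[(n : ℝ)] := by
    simp only [mul_pow, ENNReal.ofReal_mul (sq_nonneg a)]
    rw [lintegral_gradSq_const_mul hU, lintegral_const_mul' _ _ ENNReal.ofReal_ne_top,
      mul_left_comm]
    gcongr
  obtain ⟨x', hx'0, hx'r, hx'⟩ := hgrow _ hV (fun y hy => by rw [hflat y hy, mul_zero]) hVE.le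
    (hlow _ hV hVE hVH)
  refine ⟨x', hx'0, hx'r, fun y hy => ?_⟩
  have h1 := hx' y hy.1 hy.2.2
  have h2 := hscale a ha0 haA.le
  rw [abs_mul, abs_of_pos ha0, hUu y hy.2] at h1
  rw [div_mul_eq_mul_div, div_le_iff₀ (by positivity)]
  nlinarith [abs_nonneg (u y)]
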